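/- arXiv:2111.01782 — 4 statements merged into one kernel-verified Lean document; each statement's English description precedes it below -/
import Mathlib

section
/- Let A ∈ ℤ^{m×3}, b ∈ ℤ^m with P(A,b) ∩ ℤ³ = {0} and P(A,b) full-dimensional, and let α ∈ ℤ³ be nonzero. Define Δ(A,α) := max over pairs of rows aᵢ, aⱼ of A of |det(α, aᵢ, aⱼ)|. Then for every x ∈ P(A,b), αᵀx < √2 · Δ(A,α). -/
open Matrix

open MeasureTheory

namespace Prox

abbrev V3 := Fin 3 → ℝ

def T0 : Set V3 := {z | |z 0| < 1 ∧ 0 < z 1 ∧ z 1 < z 2 ∧ z 2 < 1}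

lemma diag_null : volume {z : V3 | z 1 = z 2} = 0 := by
  have h := Measure.addHaar_submodule (volume : Measure V3)
    (LinearMap.ker (LinearMap.proj (R := ℝ) (φ := fun _ : Fin 3 => ℝ) 1 -
      LinearMap.proj (R := ℝ) (φ := fun _ : Fin 3 => ℝ) 2)) (by
      intro h
      have : (![0, 1, 0] : V3) ∈ (⊤ : Submodule ℝ V3) := trivial
      rw [← h] at this
      simp at this)
  convert h using 2
  ext z
  simp [sub_eq_zero]

def swapM : Matrix (Fin 3) (Fin 3) ℝ := !![1, 0, 0; 0, 0, 1; 0, 1, 0]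

lemma vol_T0 : 1 ≤ volume T0 := by
  have hsw : volume ((Matrix.toLin' swapM) '' T0) = volume T0 := by
    rw [Measure.addHaar_image_linearMap, LinearMap.det_toLin']
    simp [swapM, Matrix.det_fin_three]
  have hbox : volume (Set.univ.pi fun i : Fin 3 => Set.Ioo ((![-1, 0, 0] : V3) i) ((![1, 1, 1] : V3) i)) = 2 := by
    rw [Real.volume_pi_Ioo]
    simp [Fin.prod_univ_three]
    norm_num
  have hsub : (Set.univ.pi fun i : Fin 3 => Set.Ioo ((![-1, 0, 0] : V3) i) ((![1, 1, 1] : V3) i)) ⊆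
      (T0 ∪ (Matrix.toLin' swapM) '' T0) ∪ {z : V3 | z 1 = z 2} := by
    intro z hz
    have h0 := hz 0 trivial
    have h1 := hz 1 trivial
    have h2 := hz 2 trivial
    simp at h0 h1 h2
    rcases lt_trichotomy (z 1) (z 2) with h | h | h
    · left; left
      exact ⟨abs_lt.2 h0, h1.1, h, h2.2⟩
    · right; exact h
    · left; right
      refine ⟨![z 0, z 2, z 1], ⟨abs_lt.2 h0, h2.1, h, h1.2⟩, ?_⟩
      ext i
      fin_cases i <;> simp [swapM, Matrix.mulVec, dotProduct, Fin.sum_univ_three]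
  have h := measure_mono (μ := volume) hsub
  rw [hbox] at h
  have h2 : (2 : ENNReal) ≤ volume T0 + volume T0 := by
    calc (2 : ENNReal) ≤ _ := h
      _ ≤ volume (T0 ∪ (Matrix.toLin' swapM) '' T0) + volume {z : V3 | z 1 = z 2} := measure_union_le _ _
      _ ≤ (volume T0 + volume ((Matrix.toLin' swapM) '' T0)) + 0 := by
        rw [diag_null]; gcongr; exact measure_union_le _ _
      _ = _ := by rw [hsw, add_zero]
  rw [← two_mul] at h2
  by_contra hc
  push Not at hc
  have : 2 * volume T0 < 2 * 1 := by
    apply (ENNReal.mul_lt_mul_iff_right (by norm_num) (by norm_num)).2 hc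
  rw [mul_one] at this
  exact absurd h2 (not_le.2 this)

/-- planar determinant -/
def dt (v w : ℝ × ℝ) : ℝ := v.1 * w.2 - v.2 * w.1

variable {ι : Type*} [Finite ι] (u : ι → ℝ × ℝ)

/-- cylinder over the open polygon -/
def S : Set V3 := {z | |z 0| < 1 ∧ ∀ k, |dt (u k) (z 1, z 2)| < 1}

def G (v : ℝ × ℝ) : Set V3 := {z | z ∈ S u ∧ 0 < z 2 ∧ 0 < dt v (z 1, z 2)}

lemma open_S : IsOpen (S u) := by
  unfold S dt
  rw [Set.ofPred_and]
  apply IsOpen.inter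
  · exact isOpen_lt (by fun_prop) (by fun_prop)
  · rw [Set.ofPred_forall]
    apply isOpen_iInter_of_finite
    intro k
    exact isOpen_lt (by fun_prop) (by fun_prop)

lemma open_G (v : ℝ × ℝ) : IsOpen (G u v) := by
  unfold G
  unfold dt
  have h1 : IsOpen {z : V3 | 0 < z 2} := isOpen_lt (by fun_prop) (by fun_prop)
  have h2 : IsOpen {z : V3 | 0 < v.1 * z 2 - v.2 * z 1} := isOpen_lt (by fun_prop) (by fun_prop)
  exact (open_S u).inter (h1.inter h2)

def prM (v w : ℝ × ℝ) : Matrix (Fin 3) (Fin 3) ℝ :=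
  !![1, 0, 0; 0, v.1 - w.1, w.1; 0, v.2 - w.2, w.2]

lemma step {v w : ℝ × ℝ} (hv : ∀ k, |dt (u k) v| ≤ 1) (hw : ∀ k, |dt (u k) w| ≤ 1)
    (hv3 : 0 < v.2 ∨ (0 < v.1 ∧ v.2 = 0)) (hvw : 0 ≤ dt v w)
    (hne : 0 < w.2 ∨ (w.1 = -1 ∧ w.2 = 0)) (x : ℝ) (hx : ENNReal.ofReal x ≤ volume (G u w))
    (hx0 : 0 ≤ x) :
    ENNReal.ofReal (dt v w + x) ≤ volume (G u v) := by
  have hv2 : 0 ≤ v.2 := by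
    rcases hv3 with h | ⟨_, h⟩
    · exact h.le
    · exact h.ge
  have hsub : G u w ⊆ G u v := by
    rintro z ⟨h1, h2, h3⟩
    refine ⟨h1, h2, ?_⟩
    simp only [dt] at *
    rcases hne with h | ⟨h, h'⟩
    · have : 0 < (v.1 * z 2 - v.2 * z 1) * w.2 + 0 := by
        have h5 : 0 ≤ (w.1 * z 2 - w.2 * z 1) * v.2 := mul_nonneg h3.le hv2
        have h6 : 0 ≤ (v.1 * w.2 - v.2 * w.1) * z 2 := mul_nonneg hvw h2.le
        have e : (v.1 * z 2 - v.2 * z 1) * w.2 = (w.1 * z 2 - w.2 * z 1) * v.2 + (v.1 * w.2 - v.2 * w.1) * z 2 := by ring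
        rcases hv2.eq_or_lt with h0 | h0
        · rcases hvw.eq_or_lt with h7 | h7
          · rcases hv3 with h8 | ⟨h8, h9⟩
            · linarith
            · have := mul_pos h8 h
              rw [h9] at h7
              linarith
          · have := mul_pos h7 h2
            linarith
        · have := mul_pos h3 h0
          linarith
      exact pos_of_mul_pos_left (by linarith) h.le
    · rw [h, h'] at h3
      linarith
  rcases hvw.eq_or_lt with h0 | h0
  · rw [← h0, zero_add]
    exact hx.trans (measure_mono hsub)
  have hpr : (Matrix.toLin' (prM v w)) '' T0 ⊆ G u v \ G u w := by
    rintro _ ⟨z, ⟨h1, h2, h3, h4⟩, rfl⟩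
    have e0 : (Matrix.toLin' (prM v w)) z 0 = z 0 := by
      simp [prM, Matrix.mulVec, dotProduct, Fin.sum_univ_three]
    have e1 : (Matrix.toLin' (prM v w)) z 1 = z 1 * v.1 + (z 2 - z 1) * w.1 := by
      simp [prM, Matrix.mulVec, dotProduct, Fin.sum_univ_three]; ring
    have e2 : (Matrix.toLin' (prM v w)) z 2 = z 1 * v.2 + (z 2 - z 1) * w.2 := by
      simp [prM, Matrix.mulVec, dotProduct, Fin.sum_univ_three]; ring
    refine ⟨⟨⟨by rwa [e0], ?_⟩, ?_, ?_⟩, ?_⟩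
    · intro k
      rw [e1, e2]
      have := abs_le.1 (hv k)
      have := abs_le.1 (hw k)
      have e : dt (u k) (z 1 * v.1 + (z 2 - z 1) * w.1, z 1 * v.2 + (z 2 - z 1) * w.2)
        = z 1 * dt (u k) v + (z 2 - z 1) * dt (u k) w := by simp only [dt]; ring
      rw [e, abs_lt]
      constructor <;> nlinarith
    · rw [e2]
      rcases hv2.eq_or_lt with h5 | h5
      · have : 0 < w.2 := by
          rcases hne with h | ⟨h, h'⟩
          · exact h
          · simp [dt, ← h5, h'] at h0
        nlinarith
      · have hw0 : 0 ≤ w.2 := by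
          rcases hne with h | ⟨_, h⟩
          · exact h.le
          · exact h.ge
        nlinarith [mul_pos h2 h5, mul_nonneg (sub_nonneg.2 h3.le) hw0]
    · rw [e1, e2]
      have e : dt v (z 1 * v.1 + (z 2 - z 1) * w.1, z 1 * v.2 + (z 2 - z 1) * w.2)
        = (z 2 - z 1) * dt v w := by simp only [dt]; ring
      rw [e]
      exact mul_pos (by linarith) h0
    · rintro ⟨_, _, h⟩
      rw [e1, e2] at h
      have e : dt w (z 1 * v.1 + (z 2 - z 1) * w.1, z 1 * v.2 + (z 2 - z 1) * w.2)
        = - (z 1 * dt v w) := by simp only [dt]; ring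
      rw [e] at h
      nlinarith
  have hvol : ENNReal.ofReal (dt v w) ≤ volume (G u v \ G u w) := by
    refine le_trans ?_ (measure_mono hpr)
    rw [Measure.addHaar_image_linearMap, LinearMap.det_toLin']
    have : (prM v w).det = dt v w := by
      simp [prM, Matrix.det_fin_three, dt]; ring
    rw [this, abs_of_pos h0]
    calc ENNReal.ofReal (dt v w) = ENNReal.ofReal (dt v w) * 1 := (mul_one _).symm
      _ ≤ _ := by gcongr; exact vol_T0
  rw [ENNReal.ofReal_add hvw hx0, ← measure_sdiff_add_inter (G u v) (open_G u w).measurableSet,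
    Set.inter_eq_right.2 hsub]
  exact add_le_add hvol hx

lemma S_ge (x : ℝ) (hx0 : 0 ≤ x) (hx : ENNReal.ofReal x ≤ volume (G u (1, 0))) :
    ENNReal.ofReal (2 * x) ≤ volume (S u) := by
  have hneg : volume (-(G u (1,0))) = volume (G u (1,0)) := Measure.measure_neg _ _
  have hd : Disjoint (-(G u (1,0))) (G u (1,0)) := by
    rw [Set.disjoint_left]
    rintro z ⟨_, h, _⟩ ⟨_, h', _⟩
    simp at h
    linarith
  have hsub : -(G u (1,0)) ∪ (G u (1,0)) ⊆ S u := by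
    rintro z (⟨⟨h1, h2⟩, _⟩ | ⟨h, _⟩)
    · refine ⟨by simpa using h1, fun k => ?_⟩
      have := h2 k
      rw [← abs_neg]
      convert this using 2
      simp [dt]; ring
    · exact h
  refine le_trans ?_ (measure_mono hsub)
  rw [measure_union hd (open_G u _).measurableSet, hneg, two_mul, ENNReal.ofReal_add hx0 hx0]
  exact add_le_add hx hx

lemma base : ENNReal.ofReal 0 ≤ volume (G u (-1, 0)) := by simp

set_option maxHeartbeats 1000000 in
/-- The planar bound: the polygon has area more than `2 √2`. -/
lemma planar (i j : ι) (hi : u i = (1, 0)) (hj : u j = (0, 1))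
    (hU : ∀ k l, |dt (u k) (u l)| ≤ 1) :
    ∃ x > 2 * Real.sqrt 2, ENNReal.ofReal (2 * x) ≤ volume (S u) := by
  have hp : ∀ k, |(u k).1| ≤ 1 := fun k => by
    have := hU k j
    rw [hj] at this
    simpa [dt] using this
  have hr : ∀ k, |(u k).2| ≤ 1 := fun k => by
    have := hU k i
    rw [hi] at this
    simpa [dt] using this
  have hneg : ∀ v : ℝ × ℝ, (∀ k, |dt (u k) v| ≤ 1) → ∀ k, |dt (u k) (-v.1, -v.2)| ≤ 1 := by
    intro v h k
    rw [← abs_neg]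
    convert h k using 2
    simp only [dt]; ring
  have We : ∀ k, |dt (u k) (1, 0)| ≤ 1 := fun k => hi ▸ hU k i
  have Wf : ∀ k, |dt (u k) (0, 1)| ≤ 1 := fun k => hj ▸ hU k j
  have Wme : ∀ k, |dt (u k) (-1, 0)| ≤ 1 := by simpa using hneg _ We
  have W1 : ∀ l, 0 ≤ (u l).1 * (u l).2 → ∀ k, |dt (u k) (|(u l).1|, |(u l).2|)| ≤ 1 := by
    intro l hl
    have h1 : ∀ k, |dt (u k) ((u l).1, (u l).2)| ≤ 1 := fun k => hU k l
    have h2 := hneg _ h1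
    rcases mul_nonneg_iff.1 hl with h | h
    · rwa [abs_of_nonneg h.1, abs_of_nonneg h.2]
    · rwa [abs_of_nonpos h.1, abs_of_nonpos h.2]
  have W2 : ∀ l, (u l).1 * (u l).2 ≤ 0 → ∀ k, |dt (u k) (-|(u l).1|, |(u l).2|)| ≤ 1 := by
    intro l hl
    have h1 : ∀ k, |dt (u k) ((u l).1, (u l).2)| ≤ 1 := fun k => hU k l
    have h2 := hneg _ h1
    rcases mul_nonpos_iff.1 hl with h | h
    · rw [abs_of_nonneg h.1, abs_of_nonpos h.2]
      exact h2
    · rw [abs_of_nonpos h.1, abs_of_nonneg h.2, neg_neg]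
      exact h1
  -- membership criteria for points in the two quadrants
  have M1 : ∀ X Y : ℝ, 0 ≤ X → X ≤ 1 → 0 ≤ Y → Y ≤ 1 →
      (∀ k, (u k).1 * (u k).2 ≤ 0 → X * |(u k).2| + Y * |(u k).1| ≤ 1) →
      ∀ k, |dt (u k) (X, Y)| ≤ 1 := by
    intro X Y hX hX1 hY hY1 h k
    have hpk := hp k
    have hrk := hr k
    rcases le_total 0 ((u k).1 * (u k).2) with h0 | h0
    · rcases mul_nonneg_iff.1 h0 with h1 | h1
      · rw [abs_of_nonneg h1.1] at hpk
        rw [abs_of_nonneg h1.2] at hrk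
        simp only [dt, abs_le]
        constructor <;> nlinarith [mul_nonneg h1.1 hY, mul_nonneg h1.2 hX]
      · rw [abs_of_nonpos h1.1] at hpk
        rw [abs_of_nonpos h1.2] at hrk
        simp only [dt, abs_le]
        constructor <;> nlinarith [mul_nonneg (neg_nonneg.2 h1.1) hY, mul_nonneg (neg_nonneg.2 h1.2) hX]
    · refine le_trans ?_ (h k h0)
      simp only [dt]
      refine (abs_sub _ _).trans ?_
      rw [abs_mul, abs_mul, abs_of_nonneg hX, abs_of_nonneg hY]
      linarith
  have M2 : ∀ Y : ℝ, 0 ≤ Y → Y ≤ 1 →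
      (∀ k, 0 ≤ (u k).1 * (u k).2 → Y * |(u k).2| + Y * |(u k).1| ≤ 1) →
      ∀ k, |dt (u k) (-Y, Y)| ≤ 1 := by
    intro Y hY hY1 h k
    have hpk := hp k
    have hrk := hr k
    rcases le_total ((u k).1 * (u k).2) 0 with h0 | h0
    · rcases mul_nonpos_iff.1 h0 with h1 | h1
      · rw [abs_of_nonneg h1.1] at hpk
        rw [abs_of_nonpos h1.2] at hrk
        simp only [dt, abs_le]
        constructor <;> nlinarith [mul_nonneg h1.1 hY, mul_nonneg (neg_nonneg.2 h1.2) hY]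
      · rw [abs_of_nonpos h1.1] at hpk
        rw [abs_of_nonneg h1.2] at hrk
        simp only [dt, abs_le]
        constructor <;> nlinarith [mul_nonneg (neg_nonneg.2 h1.1) hY, mul_nonneg h1.2 hY]
    · refine le_trans ?_ (h k h0)
      simp only [dt]
      refine (abs_sub _ _).trans ?_
      rw [abs_mul, abs_mul, abs_neg, abs_of_nonneg hY]
      linarith
  -- the maximiser
  obtain ⟨l, hl, hmax⟩ : ∃ l, 0 ≤ (u l).1 * (u l).2 ∧
      ∀ k, 0 ≤ (u k).1 * (u k).2 → |(u k).1| + |(u k).2| ≤ |(u l).1| + |(u l).2| := by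
    obtain ⟨l, hl, h⟩ := Set.exists_max_image {k | 0 ≤ (u k).1 * (u k).2}
      (fun k => |(u k).1| + |(u k).2|) (Set.toFinite _) ⟨i, by simp [hi]⟩
    exact ⟨l, hl, h⟩
  have hs1 := hp l
  have ht1 := hr l
  have hs0 := abs_nonneg (u l).1
  have ht0 := abs_nonneg (u l).2
  have Wp := W1 l hl
  have hpu : ∀ k, (u k).1 * (u k).2 ≤ 0 → |(u l).1| * |(u k).2| + |(u l).2| * |(u k).1| ≤ 1 := by
    intro k hk
    have h1 := abs_le.1 (W1 l hl k)
    simp only [dt] at h1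
    rcases mul_nonpos_iff.1 hk with h | h
    · rw [abs_of_nonneg h.1, abs_of_nonpos h.2]
      linarith
    · rw [abs_of_nonpos h.1, abs_of_nonneg h.2]
      linarith
  generalize |(u l).1| = s at *
  generalize |(u l).2| = t at *
  have hσ1 : 1 ≤ s + t := by
    have := hmax i (by simp [hi])
    simpa [hi] using this
  obtain ⟨y, hy⟩ : ∃ y : ℝ, y = 1 / (s + t) := ⟨_, rfl⟩
  have hyσ : y * (s + t) = 1 := by rw [hy]; field_simp
  have hy0 : 0 < y := by rw [hy]; positivity
  have hy1 : y ≤ 1 := by nlinarith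
  have Wq : ∀ k, |dt (u k) (-y, y)| ≤ 1 := by
    refine M2 y hy0.le hy1 fun k hk => ?_
    have := hmax k hk
    nlinarith
  have h2 : Real.sqrt 2 ^ 2 = 2 := Real.sq_sqrt (by norm_num)
  have h20 : 0 ≤ Real.sqrt 2 := Real.sqrt_nonneg 2
  have h2a : Real.sqrt 2 < 1.42 := by nlinarith
  have h2b : 1.41 < Real.sqrt 2 := by nlinarith
  -- last fan pieces
  have Fq : ENNReal.ofReal (y + 0) ≤ volume (G u (-y, y)) := by
    have := step u Wq Wme (Or.inl hy0) (by simp [dt, hy0.le]) (Or.inr ⟨rfl, rfl⟩) 0 (base u) le_rfl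
    simpa [dt] using this
  have Ff : ENNReal.ofReal (y + (y + 0)) ≤ volume (G u (0, 1)) := by
    have := step u Wf Wq (Or.inl one_pos) (by simp [dt, hy0.le]) (Or.inl hy0) _ Fq (by linarith)
    simpa [dt] using this
  -- generic closing through f
  have fin1 : ∀ x, 0 ≤ x → ENNReal.ofReal x ≤ volume (G u (0, 1)) → 2 * Real.sqrt 2 < s + t + x → 0 < t →
      ∃ x > 2 * Real.sqrt 2, ENNReal.ofReal (2 * x) ≤ volume (S u) := by
    intro x hx0 hx hlt ht
    have Fp := step u Wp Wf (Or.inl ht) (by simp [dt, hs0]) (Or.inl one_pos) _ hx hx0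
    have Fe := step u We Wp (Or.inr ⟨one_pos, rfl⟩) (by simp [dt, ht0]) (Or.inl ht) _ Fp
      (by simp [dt]; linarith)
    refine ⟨_, ?_, S_ge u _ ?_ Fe⟩
    · simp [dt]; linarith
    · simp [dt]; linarith
  by_cases hσ : s + t = 1
  · have hy' : y = 1 := by rw [hσ] at hyσ; linarith
    have Fe := step u We Wf (Or.inr ⟨one_pos, rfl⟩) (by simp [dt]) (Or.inl one_pos) _ Ff (by linarith)
    refine ⟨_, ?_, S_ge u _ ?_ Fe⟩
    · simp [dt, hy']; linarith
    · simp [dt, hy']; norm_num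
  have hσ1' : 1 < s + t := lt_of_le_of_ne hσ1 (Ne.symm hσ)
  have ht : 0 < t := by linarith
  by_cases hσ2 : s + t = Real.sqrt 2
  swap
  · refine fin1 _ (by linarith) Ff ?_ ht
    have h3 : 0 < (s + t - Real.sqrt 2) ^ 2 := by
      have : s + t - Real.sqrt 2 ≠ 0 := sub_ne_zero.2 hσ2
      positivity
    have h4 : 0 < y * (s + t - Real.sqrt 2) ^ 2 := mul_pos hy0 h3
    have h5 : y * (s + t - Real.sqrt 2) ^ 2 = s + t + 2 * y - 2 * Real.sqrt 2 := by
      have : y * (s + t - Real.sqrt 2) ^ 2 = (y * (s + t)) * (s + t) - 2 * (y * (s + t)) * Real.sqrt 2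
        + y * Real.sqrt 2 ^ 2 := by ring
      rw [this, hyσ, h2]; ring
    linarith
  have hy2 : y = Real.sqrt 2 / 2 := by
    rw [hσ2] at hyσ
    nlinarith
  obtain ⟨σ, hσd⟩ : ∃ σ, σ = s + t := ⟨_, rfl⟩
  by_cases hc1 : ∃ k, (u k).1 * (u k).2 ≤ 0 ∧ 1 < |(u k).2| + (σ - 1) * |(u k).1|
  · obtain ⟨k, hk, hk1⟩ := hc1
    have Wu := W2 k hk
    have hc := hp k
    have hd := hr k
    have hc0 := abs_nonneg (u k).1
    have hd0 := abs_nonneg (u k).2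
    have hpu := hpu k hk
    generalize |(u k).1| = c at *
    generalize |(u k).2| = d at *
    have hcd : c ≤ d := by
      by_contra hcd
      push Not at hcd
      nlinarith [mul_nonneg (sub_nonneg.2 hs1) (sub_nonneg.2 hcd.le)]
    have hdpos : 0 < d := by nlinarith
    have Fu := step u Wu Wq (Or.inl hdpos) (by simp [dt]; nlinarith) (Or.inl hy0) _ Fq (by linarith)
    have Ff' := step u Wf Wu (Or.inl one_pos) (by simp [dt, hc0]) (Or.inl hdpos) _ Fu
      (by simp [dt]; nlinarith)
    refine fin1 _ ?_ Ff' ?_ ht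
    · simp [dt]; nlinarith
    · simp [dt]
      rw [hσd] at hk1
      have : y * (d + (s + t - 1) * c) = y * d - y * c + (y * (s + t)) * c := by ring
      rw [hyσ] at this
      nlinarith
  by_cases hc2 : ∃ k, (u k).1 * (u k).2 ≤ 0 ∧ 1 < |(u k).1| + (σ - 1) * |(u k).2|
  · obtain ⟨k, hk, hk1⟩ := hc2
    have Wu := W2 k hk
    have hc := hp k
    have hd := hr k
    have hc0 := abs_nonneg (u k).1
    have hd0 := abs_nonneg (u k).2
    have hpu := hpu k hk
    generalize |(u k).1| = c at *
    generalize |(u k).2| = d at *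
    have hcd : d ≤ c := by
      by_contra hcd
      push Not at hcd
      nlinarith [mul_nonneg (sub_nonneg.2 ht1) (sub_nonneg.2 hcd.le)]
    have hdpos : 0 < d := by
      rcases hd0.eq_or_lt with h | h
      · rw [← h] at hk1
        linarith
      · exact h
    have Fu := step u Wu Wme (Or.inl hdpos) (by simp [dt, hd0]) (Or.inr ⟨rfl, rfl⟩) _ (base u) le_rfl
    have Fq' := step u Wq Wu (Or.inl hy0) (by simp [dt]; nlinarith) (Or.inl hdpos) _ Fu
      (by simp [dt, hd0])
    have Ff' := step u Wf Wq (Or.inl one_pos) (by simp [dt, hy0.le]) (Or.inl hy0) _ Fq'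
      (by simp [dt]; nlinarith)
    refine fin1 _ ?_ Ff' ?_ ht
    · simp [dt]; nlinarith
    · simp [dt]
      rw [hσd] at hk1
      have : y * (c + (s + t - 1) * d) = y * c - y * d + (y * (s + t)) * d := by ring
      rw [hyσ] at this
      nlinarith
  push Not at hc1 hc2
  have hσs : σ = Real.sqrt 2 := hσd.trans hσ2
  have Wa := M1 1 (σ - 1) zero_le_one le_rfl (by linarith) (by linarith)
    (fun k hk => by have := hc1 k hk; linarith)
  have Wb := M1 (σ - 1) 1 (by linarith) (by linarith) zero_le_one le_rfl
    (fun k hk => by have := hc2 k hk; linarith)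
  have hσp : 0 < σ - 1 := by linarith
  have Fb := step u Wb Wf (Or.inl one_pos) (by simp [dt]; linarith) (Or.inl one_pos) _ Ff (by linarith)
  have Fa := step u Wa Wb (Or.inl hσp) (by simp [dt]; nlinarith) (Or.inl one_pos) _ Fb
    (by simp [dt]; linarith)
  have Fe := step u We Wa (Or.inr ⟨one_pos, rfl⟩) (by simp [dt]; linarith) (Or.inl hσp) _ Fa
    (by simp [dt]; nlinarith)
  refine ⟨_, ?_, S_ge u _ ?_ Fe⟩
  · simp [dt, hy2, hσs]; nlinarith
  · simp [dt, hy2, hσs]; nlinarith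

lemma mink (s : Set V3) (hs : ∀ x ∈ s, -x ∈ s) (hc : Convex ℝ s) (hv : 8 < volume s) :
    ∃ z : Fin 3 → ℤ, z ≠ 0 ∧ (fun i => (z i : ℝ)) ∈ s := by
  have fund := ZSpan.isAddFundamentalDomain' (Pi.basisFun ℝ (Fin 3)) (volume : Measure V3)
  have hF : volume (ZSpan.fundamentalDomain (Pi.basisFun ℝ (Fin 3))) = 1 := by
    rw [ZSpan.fundamentalDomain_pi_basisFun, volume_pi_pi]
    simp
  have : Countable (Submodule.span ℤ (Set.range (Pi.basisFun ℝ (Fin 3)))).toAddSubgroup :=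
    inferInstanceAs (Countable (Submodule.span ℤ (Set.range (Pi.basisFun ℝ (Fin 3)))))
  obtain ⟨x, hx0, hx⟩ := exists_ne_zero_mem_lattice_of_measure_mul_two_pow_lt_measure fund hs hc (by
    rw [hF]
    simp
    norm_num
    exact hv)
  have hmem := x.2
  have hm : ∀ i, ∃ n : ℤ, (n : ℝ) = (x : V3) i := by
    have := ((Pi.basisFun ℝ (Fin 3)).mem_span_iff_repr_mem ℤ (x : V3)).1 hmem
    intro i
    simpa using this i
  choose z hz using hm
  refine ⟨z, ?_, ?_⟩
  · intro h
    apply hx0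
    ext i
    rw [← hz i, h]
    simp
  · convert hx using 1
    ext i
    exact hz i

/-- `det (α, a, c)` -/
def d3 {R : Type*} [CommRing R] (α a c : Fin 3 → R) : R :=
  α 0 * (a 1 * c 2 - a 2 * c 1) - α 1 * (a 0 * c 2 - a 2 * c 0) + α 2 * (a 0 * c 1 - a 1 * c 0)

noncomputable def phiM (α x a c : V3) (D : ℝ) : Matrix (Fin 3) (Fin 3) ℝ :=
  !![x 0, (α 1 * a 2 - α 2 * a 1) / D, (α 1 * c 2 - α 2 * c 1) / D;
     x 1, (α 2 * a 0 - α 0 * a 2) / D, (α 2 * c 0 - α 0 * c 2) / D;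
     x 2, (α 0 * a 1 - α 1 * a 0) / D, (α 0 * c 1 - α 1 * c 0) / D]

lemma det_phiM (α x a c : V3) (D : ℝ) (hD : D = d3 α a c) (hD0 : D ≠ 0) :
    (phiM α x a c D).det = (∑ i, α i * x i) / D := by
  have h : (phiM α x a c D).det = (∑ i, α i * x i) * d3 α a c / D ^ 2 := by
    simp only [phiM, Matrix.det_fin_three, Fin.sum_univ_three, d3]
    simp
    field_simp
    ring
  rw [h, ← hD]
  field_simp

lemma S_symm {ι : Type*} (u : ι → ℝ × ℝ) : ∀ z ∈ S u, -z ∈ S u := by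
  rintro z ⟨h1, h2⟩
  refine ⟨by simpa using h1, fun k => ?_⟩
  rw [← abs_neg]
  convert h2 k using 2
  simp [dt]; ring

lemma S_conv {ι : Type*} (u : ι → ℝ × ℝ) : Convex ℝ (S u) := by
  rintro x ⟨hx1, hx2⟩ y ⟨hy1, hy2⟩ a b ha hb hab
  have key : ∀ p q : ℝ, |p| < 1 → |q| < 1 → |a * p + b * q| < 1 := by
    intro p q hp hq
    have hp := abs_lt.1 hp
    have hq := abs_lt.1 hq
    rw [abs_lt]
    rcases ha.eq_or_lt with h | h
    · have : b = 1 := by linarith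
      rw [← h, this]
      constructor <;> linarith
    · constructor <;> nlinarith [mul_pos h (sub_pos.2 hp.1), mul_pos h (sub_pos.2 hp.2)]
  refine ⟨by simpa using key _ _ hx1 hy1, fun k => ?_⟩
  convert key _ _ (hx2 k) (hy2 k) using 2
  simp [dt]; ring

end Prox

/-- Three-dimensional proximity bound (`κ₃ < √2`). -/
theorem stmt7 {m : ℕ} (A : Matrix (Fin m) (Fin 3) ℤ) (b : Fin m → ℤ)
    (α : Fin 3 → ℤ) (hα : α ≠ 0)
    (P : Set (Fin 3 → ℝ))
    (hP : P = {x | ∀ i, (A.map (Int.cast : ℤ → ℝ)).mulVec x i ≤ (b i : ℝ)})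
    (hzero : (0 : Fin 3 → ℝ) ∈ P)
    (hint : ∀ x ∈ P, (∀ i, ∃ z : ℤ, x i = (z : ℝ)) → x = 0)
    (hfulldim : (interior P).Nonempty)
    (Δ : ℕ)
    (hΔ : Δ = Finset.univ.sup fun p : Fin m × Fin m =>
      (Matrix.det !![α 0, A p.1 0, A p.2 0; α 1, A p.1 1, A p.2 1;
                     α 2, A p.1 2, A p.2 2]).natAbs) :
    ∀ x ∈ P, ∑ i, (α i : ℝ) * x i < Real.sqrt 2 * (Δ : ℝ) := by
  have hmem : ∀ x, x ∈ P ↔ ∀ k, (A k 0 : ℝ) * x 0 + A k 1 * x 1 + A k 2 * x 2 ≤ b k := by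
    intro x
    rw [hP]
    simp [Matrix.mulVec, dotProduct, Fin.sum_univ_three]
  have hdet : ∀ k l, (Matrix.det !![α 0, A k 0, A l 0; α 1, A k 1, A l 1;
                     α 2, A k 2, A l 2]) = Prox.d3 α (A k) (A l) := by
    intro k l
    simp [Matrix.det_fin_three, Prox.d3]
    ring
  simp only [hdet] at hΔ
  have hle : ∀ k l, (Prox.d3 α (A k) (A l)).natAbs ≤ Δ := by
    intro k l
    rw [hΔ]
    exact Finset.le_sup (f := fun p : Fin m × Fin m => (Prox.d3 α (A p.1) (A p.2)).natAbs)
      (Finset.mem_univ (k, l))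
  have hb : ∀ k, (0 : ℝ) ≤ b k := by
    intro k
    have := (hmem 0).1 hzero k
    simpa using this
  -- integer points in the polyhedron vanish
  have hz0 : ∀ z : Fin 3 → ℤ, (∀ k, A k 0 * z 0 + A k 1 * z 1 + A k 2 * z 2 ≤ b k) → z = 0 := by
    intro z hz
    have := hint (fun i => (z i : ℝ)) ((hmem _).2 fun k => by exact_mod_cast hz k)
      (fun i => ⟨z i, rfl⟩)
    ext i
    have := congrFun this i
    simpa using this
  have hbZ : ∀ k, 0 ≤ b k := fun k => by exact_mod_cast hb k
  have hΔ0 : Δ ≠ 0 := by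
    intro h0
    have hd : ∀ k l, Prox.d3 α (A k) (A l) = 0 := by
      intro k l
      have := hle k l
      rw [h0] at this
      simpa using this
    have hcr : ∀ k, ![α 1 * A k 2 - α 2 * A k 1, α 2 * A k 0 - α 0 * A k 2,
        α 0 * A k 1 - α 1 * A k 0] = 0 := by
      intro k
      apply hz0
      intro l
      have h1 := hd k l
      simp only [Prox.d3] at h1
      simp
      have := hbZ l
      linarith
    have hcr0 : ∀ k, α 1 * A k 2 - α 2 * A k 1 = 0 ∧ α 2 * A k 0 - α 0 * A k 2 = 0 ∧
        α 0 * A k 1 - α 1 * A k 0 = 0 := by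
      intro k
      have h := hcr k
      exact ⟨by simpa using congrFun h 0, by simpa using congrFun h 1, by simpa using congrFun h 2⟩
    -- every row is parallel to `α`
    have key : ∀ i j : Fin 3, i ≠ j → α i * 0 = 0 ∧ ∀ k, α i * A k j = α j * A k i := by
      intro i j hij
      refine ⟨mul_zero _, fun k => ?_⟩
      obtain ⟨h1, h2, h3⟩ := hcr0 k
      fin_cases i <;> fin_cases j <;> simp at hij ⊢ <;> linarith
    have e01 := (key 0 1 (by decide)).2
    have e02 := (key 0 2 (by decide)).2
    have e12 := (key 1 2 (by decide)).2
    apply hα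
    by_cases hα0 : α 0 = 0
    · -- then use `(0, -α 2, α 1)` and `(1,0,0)`
      have z1 := hz0 ![0, -α 2, α 1] (fun k => by
        have := hbZ k
        have := e12 k
        simp; linarith)
      have h1 : α 1 = 0 := by simpa using congrFun z1 2
      have h2 : α 2 = 0 := by simpa using congrFun z1 1
      ext i; fin_cases i <;> simp [hα0, h1, h2]
    · have z1 := hz0 ![-α 1, α 0, 0] (fun k => by
        have := hbZ k
        have := e01 k
        simp; linarith)
      exact absurd (by simpa using congrFun z1 1) hα0
  intro x hx
  by_contra hcon
  push Not at hcon
  have hm : (Finset.univ : Finset (Fin m × Fin m)).Nonempty := by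
    by_contra h
    rw [Finset.not_nonempty_iff_eq_empty] at h
    rw [h] at hΔ
    exact hΔ0 hΔ
  obtain ⟨⟨i, j⟩, -, hij⟩ := Finset.exists_mem_eq_sup _ hm
    (fun p : Fin m × Fin m => (Prox.d3 α (A p.1) (A p.2)).natAbs)
  rw [← hΔ] at hij
  simp only at hij
  -- move to the reals
  let a : Fin m → Fin 3 → ℝ := fun k t => (A k t : ℝ)
  let β : Fin 3 → ℝ := fun t => (α t : ℝ)
  have hcast : ∀ k l, ((Prox.d3 α (A k) (A l) : ℤ) : ℝ) = Prox.d3 β (a k) (a l) := by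
    intro k l
    simp [Prox.d3, a, β]
  have hleR : ∀ k l, |Prox.d3 β (a k) (a l)| ≤ Δ := by
    intro k l
    rw [← hcast, ← Int.cast_abs, Int.abs_eq_natAbs]
    exact_mod_cast hle k l
  obtain ⟨D, hD⟩ : ∃ D, D = Prox.d3 β (a i) (a j) := ⟨_, rfl⟩
  have hDabs : |D| = Δ := by
    rw [hD, ← hcast, ← Int.cast_abs, Int.abs_eq_natAbs, hij]
    simp
  have hΔpos : (0 : ℝ) < Δ := by exact_mod_cast Nat.pos_of_ne_zero hΔ0
  have hD0 : D ≠ 0 := by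
    intro h
    rw [h, abs_zero] at hDabs
    linarith
  let u : Fin m → ℝ × ℝ := fun k => (Prox.d3 β (a k) (a j) / D, Prox.d3 β (a i) (a k) / D)
  have hself : ∀ k, Prox.d3 β (a k) (a k) = 0 := by
    intro k; simp only [Prox.d3]; ring
  have hdt : ∀ k l, Prox.dt (u k) (u l) = Prox.d3 β (a k) (a l) / D := by
    intro k l
    have h1 : Prox.dt (u k) (u l) = (Prox.d3 β (a k) (a j) * Prox.d3 β (a i) (a l)
      - Prox.d3 β (a i) (a k) * Prox.d3 β (a l) (a j)) / D ^ 2 := by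
      simp only [Prox.dt, u]
      field_simp
    have h2 : Prox.d3 β (a k) (a j) * Prox.d3 β (a i) (a l)
      - Prox.d3 β (a i) (a k) * Prox.d3 β (a l) (a j) = Prox.d3 β (a k) (a l) * D := by
      rw [hD]
      simp only [Prox.d3]
      ring
    rw [h1, h2]
    field_simp
  obtain ⟨v, hv, hvol⟩ := Prox.planar u i j
    (by simp only [u]; rw [hself, ← hD, div_self hD0, zero_div])
    (by simp only [u]; rw [hself, ← hD, div_self hD0, zero_div])
    (fun k l => by
      rw [hdt, abs_div, hDabs]
      exact (div_le_one hΔpos).2 (hleR k l))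
  let Φ := Matrix.toLin' (Prox.phiM β x (a i) (a j) D)
  have hbig : 8 < volume (Φ '' Prox.S u) := by
    rw [Measure.addHaar_image_linearMap, LinearMap.det_toLin', Prox.det_phiM _ _ _ _ _ hD hD0,
      abs_div, hDabs]
    have h1 : Real.sqrt 2 ≤ |∑ t, β t * x t| / Δ := by
      rw [le_div_iff₀ hΔpos]
      exact hcon.trans (le_abs_self _)
    calc (8 : ENNReal) = ENNReal.ofReal 8 := by norm_num
      _ < ENNReal.ofReal (Real.sqrt 2 * (2 * v)) := by
        have h2 : Real.sqrt 2 ^ 2 = 2 := Real.sq_sqrt (by norm_num)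
        have h20 : 0 < Real.sqrt 2 := by positivity
        have h3 : 8 < Real.sqrt 2 * (2 * v) := by nlinarith
        exact (ENNReal.ofReal_lt_ofReal_iff (by linarith)).2 h3
      _ = ENNReal.ofReal (Real.sqrt 2) * ENNReal.ofReal (2 * v) :=
        ENNReal.ofReal_mul (Real.sqrt_nonneg 2)
      _ ≤ _ := by
        gcongr
  -- apply Minkowski
  obtain ⟨z, hzne, hz⟩ := Prox.mink (Φ '' Prox.S u)
    (by
      rintro _ ⟨w, hw, rfl⟩
      exact ⟨-w, Prox.S_symm u w hw, by simp⟩)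
    ((Prox.S_conv u).linear_image Φ) hbig
  have main : ∀ (z : Fin 3 → ℤ) (w : Fin 3 → ℝ), w ∈ Prox.S u → 0 ≤ w 0 →
      Φ w = (fun t => (z t : ℝ)) → z = 0 := by
    rintro z w ⟨hw1, hw2⟩ hw0 hΦ
    apply hz0
    intro k
    have hrow : (A k 0 : ℝ) * z 0 + A k 1 * z 1 + A k 2 * z 2
        = w 0 * ((A k 0 : ℝ) * x 0 + A k 1 * x 1 + A k 2 * x 2) - Prox.dt (u k) (w 1, w 2) := by
      have e0 := congrFun hΦ 0
      have e1 := congrFun hΦ 1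
      have e2 := congrFun hΦ 2
      simp [Φ, Prox.phiM, Matrix.mulVec, dotProduct, Fin.sum_univ_three] at e0 e1 e2
      rw [← e0, ← e1, ← e2]
      simp only [Prox.dt, u, Prox.d3, a]
      field_simp
      ring
    have hxk := (hmem x).1 hx k
    have h1 := abs_lt.1 (hw2 k)
    have h2 := abs_lt.1 hw1
    have h3 : (A k 0 : ℝ) * z 0 + A k 1 * z 1 + A k 2 * z 2 < b k + 1 := by
      rw [hrow]
      nlinarith [hb k, mul_le_mul_of_nonneg_left hxk hw0, mul_nonneg (hb k) (sub_nonneg.2 h2.2.le)]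
    have h4 : A k 0 * z 0 + A k 1 * z 1 + A k 2 * z 2 < b k + 1 := by exact_mod_cast h3
    linarith
  obtain ⟨w, hw, hwz⟩ := hz
  rcases le_total 0 (w 0) with h | h
  · exact hzne (main z w hw h hwz)
  · have := main (-z) (-w) (Prox.S_symm u w hw) (by simpa using h) (by
      rw [map_neg, hwz]
      ext t
      simp)
    exact hzne (neg_eq_zero.1 this)
end

section
/- Let n ≥ 2, A ∈ ℤ^{m×n} of full column rank, b ∈ ℤ^m, c ∈ ℚⁿ. Let x* be an optimal vertex of the linear program max{cᵀx : Ax ≤ b}. If {x ∈ ℤⁿ : Ax ≤ b} is nonempty, then there exists an optimal solution z* of the integer program max{cᵀx : Ax ≤ b, x ∈ ℤⁿ} with ‖x* − z*‖_∞ < (n/2) · Δ_{n−1}(A), where Δ_{n−1}(A) is the maximum absolute value of an (n−1)×(n−1) minor of A. -/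
open Matrix

/-- `maxMinor A k` is the largest absolute value of a `k × k` minor of `A`. -/
def maxMinor {m n : ℕ} (A : Matrix (Fin m) (Fin n) ℤ) (k : ℕ) : ℕ :=
  Finset.sup (Finset.univ.filter fun p : (Fin k → Fin m) × (Fin k → Fin n) =>
      Function.Injective p.1 ∧ Function.Injective p.2)
    fun p => ((A.submatrix p.1 p.2).det).natAbs


section Decomp

lemma px_step {κ : Type*} [Fintype κ] (g s : κ → ℝ) (hg : ∀ j, 0 ≤ g j)
    (h0 : ∀ j, g j = 0 → 0 ≤ s j) (hneg : ∃ j, s j < 0) :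
    ∃ t : ℝ, 0 < t ∧ (∀ j, 0 ≤ g j + t * s j) ∧ ∃ j, s j < 0 ∧ g j + t * s j = 0 := by
  classical
  obtain ⟨j1, hj1⟩ := hneg
  obtain ⟨j0, hj0, hmin⟩ := Finset.exists_min_image (Finset.univ.filter fun j => s j < 0)
    (fun j => g j / (- s j)) ⟨j1, by simpa using hj1⟩
  simp only [Finset.mem_filter, Finset.mem_univ, true_and] at hj0 hmin
  have hgpos : 0 < g j0 := lt_of_le_of_ne (hg j0) (fun h => by
    have := h0 j0 h.symm; linarith)
  refine ⟨g j0 / (- s j0), div_pos hgpos (by linarith), ?_, j0, hj0, ?_⟩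
  · intro j
    by_cases hs : s j < 0
    · have h1 := hmin j hs
      rw [le_div_iff₀ (by linarith)] at h1
      linarith
    · have : 0 ≤ g j0 / (- s j0) * s j :=
        mul_nonneg (div_pos hgpos (by linarith)).le (by linarith)
      linarith [hg j]
  · have : s j0 ≠ 0 := hj0.ne
    field_simp
    ring

variable {E : Type*} [AddCommGroup E] [Module ℝ E]

/-- Common kernel of the functionals vanishing at `u`. -/
def kerAt {ι : Type*} (L : ι → E →ₗ[ℝ] ℝ) (u : E) : Submodule ℝ E where
  carrier := {w | ∀ i, L i u = 0 → L i w = 0}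
  add_mem' := by
    intro a b ha hb i hi
    simp [ha i hi, hb i hi]
  zero_mem' := by intro i _; simp
  smul_mem' := by
    intro c a ha i hi
    simp [ha i hi]

lemma mem_kerAt {ι : Type*} {L : ι → E →ₗ[ℝ] ℝ} {u w : E} :
    w ∈ kerAt L u ↔ ∀ i, L i u = 0 → L i w = 0 := Iff.rfl

lemma self_mem_kerAt {ι : Type*} (L : ι → E →ₗ[ℝ] ℝ) (u : E) : u ∈ kerAt L u :=
  fun _ h => h

variable [FiniteDimensional ℝ E]

lemma px_ray {κ : Type*} [Fintype κ] (M : κ → E →ₗ[ℝ] ℝ)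
    (hfull : ∀ w, (∀ j, M j w = 0) → w = 0) (σ : E →ₗ[ℝ] ℝ) :
    ∀ (d : ℕ) (w : E), Module.finrank ℝ (kerAt M w) ≤ d → (∀ j, 0 ≤ M j w) → 0 < σ w →
      ∃ w', (∀ j, 0 ≤ M j w') ∧ 0 < σ w' ∧ Module.finrank ℝ (kerAt M w') ≤ 1 := by
  intro d
  induction d with
  | zero => intro w h1 h2 h3; exact ⟨w, h2, h3, by omega⟩
  | succ d ih =>
    intro w hd hw hσ
    by_cases h1 : Module.finrank ℝ (kerAt M w) ≤ 1
    · exact ⟨w, hw, hσ, h1⟩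
    -- find e
    obtain ⟨e, he, hne, hσe⟩ : ∃ e ∈ kerAt M w, e ≠ 0 ∧ σ e = 0 := by
      have h2 : Module.finrank ℝ ℝ < Module.finrank ℝ (kerAt M w) := by simp; omega
      have h3 := LinearMap.ker_ne_bot_of_finrank_lt (f := σ.domRestrict (kerAt M w)) h2
      obtain ⟨⟨e, he⟩, hek, he0⟩ := (Submodule.ne_bot_iff _).1 h3
      exact ⟨e, he, by simpa using he0, by simpa using hek⟩
    obtain ⟨j1, hj1⟩ : ∃ j, M j e ≠ 0 := by
      by_contra! h
      exact hne (hfull e h)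
    obtain ⟨e, he, hne, hσe, hj1⟩ : ∃ e ∈ kerAt M w, e ≠ 0 ∧ σ e = 0 ∧ M j1 e < 0 := by
      rcases lt_or_gt_of_ne hj1 with h | h
      · exact ⟨e, he, hne, hσe, h⟩
      · exact ⟨-e, neg_mem he, neg_ne_zero.mpr hne, by simp [hσe], by simpa using h⟩
    obtain ⟨t, ht, hpos, j0, hj0, hj0'⟩ := px_step (fun j => M j w) (fun j => M j e) hw
      (fun j hj => (he j hj).ge) ⟨j1, hj1⟩
    refine ih (w + t • e) ?_ (by simpa using hpos) (by simpa [hσe] using hσ)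
    have hlt : kerAt M (w + t • e) < kerAt M w := by
      refine lt_of_le_of_ne ?_ ?_
      · intro a ha j hj
        exact ha j (by simp [hj, he j hj])
      · intro h
        rw [← h] at he
        have := he j0 (by simpa using hj0')
        linarith
    have := Submodule.finrank_lt_finrank_of_lt hlt
    omega

lemma px_decomp {ι : Type*} [Fintype ι] (L : ι → E →ₗ[ℝ] ℝ)
    (hfull : ∀ w, (∀ i, L i w = 0) → w = 0) (y : E) (hy : ∀ i, 0 ≤ L i y)
    (k : ℕ) (hk : Module.finrank ℝ (kerAt L y) = k + 2) :
    ∃ u, (∀ i, 0 ≤ L i u) ∧ (∀ i, L i u ≤ L i y) ∧ Module.finrank ℝ (kerAt L u) ≤ 2 ∧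
      Module.finrank ℝ (kerAt L (y - u)) ≤ k := by
  classical
  set X : Set E := {u | ((∀ i, 0 ≤ L i u) ∧ ∀ i, L i u ≤ L i y) ∧
    kerAt L u ⊓ kerAt L (y - u) = ⊥ ∧ Module.finrank ℝ (kerAt L u) ≤ 1} with hX
  have hk0 : kerAt L 0 = ⊥ := by
    rw [eq_bot_iff]; intro w hw
    exact hfull w fun i => hw i (by simp)
  have h0X : (0 : E) ∈ X := by
    refine ⟨⟨fun i => by simp, fun i => by simpa using hy i⟩, ?_, ?_⟩
    · rw [hk0]; simp
    · rw [hk0]; simp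
  have hfin : X.Finite := by
    refine Set.Finite.of_injOn (t := Set.univ)
      (f := fun u => ((Finset.univ.filter fun i => L i u = 0 : Finset ι),
        (Finset.univ.filter fun i => L i (y - u) = 0 : Finset ι))) (fun _ _ => Set.mem_univ _) ?_
        Set.finite_univ
    intro u hu u' hu' h
    simp only [Prod.mk.injEq, Finset.ext_iff, Finset.mem_filter, Finset.mem_univ, true_and] at h
    have : u - u' ∈ kerAt L u ⊓ kerAt L (y - u) := by
      constructor
      · intro i hi
        have := (h.1 i).1 hi
        simp [hi, this]
      · intro i hi
        have := (h.2 i).1 hi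
        simp only [map_sub] at hi this ⊢
        linarith
    rw [hu.2.1, Submodule.mem_bot] at this
    exact sub_eq_zero.mp this
  set σ : E →ₗ[ℝ] ℝ := ∑ i, L i with hσ
  have hσa : ∀ w, σ w = ∑ i, L i w := fun w => by simp [hσ]
  obtain ⟨v, hvX, hvmax⟩ := Set.exists_max_image X σ hfin ⟨0, h0X⟩
  obtain ⟨⟨hv0, hvy⟩, hvv, hv1⟩ := hvX
  have hvne : v ≠ y := by
    rintro rfl; omega
  have hσpos : 0 < σ (y - v) := by
    rw [hσa]
    have hnn : ∀ i ∈ Finset.univ, 0 ≤ L i (y - v) := fun i _ => by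
      simpa using hvy i
    refine lt_of_le_of_ne (Finset.sum_nonneg hnn) (fun h => hvne ?_)
    have := (Finset.sum_eq_zero_iff_of_nonneg hnn).1 h.symm
    exact (sub_eq_zero.mp (hfull _ fun i => this i (Finset.mem_univ i))).symm
  -- ray
  obtain ⟨w, hw, hσw, hw1⟩ := px_ray
    (κ := {i // L i v = 0} ⊕ {i // L i (y - v) = 0})
    (Sum.elim (fun i => L i.1) (fun i => - L i.1)) (by
      intro e he
      have : e ∈ kerAt L v ⊓ kerAt L (y - v) :=
        ⟨fun i hi => he (Sum.inl ⟨i, hi⟩), fun i hi => by simpa using he (Sum.inr ⟨i, hi⟩)⟩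
      rw [hvv] at this
      simpa using this) σ _ (y - v) le_rfl (by
      rintro (⟨i, hi⟩ | ⟨i, hi⟩)
      · simpa using hvy i
      · simp only [Sum.elim_inr, LinearMap.neg_apply]; rw [hi]; simp) hσpos
  set M : {i // L i v = 0} ⊕ {i // L i (y - v) = 0} → E →ₗ[ℝ] ℝ :=
    (Sum.elim (fun i => L i.1) (fun i => - L i.1)) with hM
  have hwl : ∀ i, L i v = 0 → 0 ≤ L i w := fun i hi => hw (Sum.inl ⟨i, hi⟩)
  have hwr : ∀ i, L i (y - v) = 0 → L i w ≤ 0 := fun i hi => by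
    simpa [hM] using hw (Sum.inr ⟨i, hi⟩)
  obtain ⟨i1, hi1⟩ : ∃ i, L i w ≠ 0 := by
    by_contra! h
    have := hfull w h
    simp [this] at hσw
  obtain ⟨t, ht, hpos, j0, hj0, hj0'⟩ := px_step (κ := ι ⊕ ι)
    (Sum.elim (fun i => L i v) (fun i => L i (y - v)))
    (Sum.elim (fun i => L i w) (fun i => - L i w))
    (by rintro (i | i); exacts [hv0 i, by simpa using hvy i])
    (by
      rintro (i | i) hi
      · exact hwl i hi
      · simpa using hwr i hi)
    (by
      rcases lt_or_gt_of_ne hi1 with h | h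
      · exact ⟨Sum.inl i1, h⟩
      · exact ⟨Sum.inr i1, by simpa using h⟩)
  have hin : ∀ s : ℝ, ∀ e ∈ kerAt L (v + s • w) ⊓ kerAt L (y - (v + s • w)), e ∈ kerAt M w := by
    rintro s e ⟨he1, he2⟩ (⟨i, hi⟩ | ⟨i, hi⟩) hj
    · have hj' : L i w = 0 := hj
      exact he1 i (by simp [hi, hj'])
    · have hj' : L i w = 0 := by simpa [hM] using hj
      have := he2 i (by simp only [map_sub, map_add, map_smul, hj'] at hi ⊢; simpa using hi)
      simpa [hM] using this
  set v' := v + t • w with hv'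
  set m := v + (t / 2) • w with hm
  have hv'0 : ∀ i, 0 ≤ L i v' := fun i => by simpa [hv'] using hpos (Sum.inl i)
  have hv'y : ∀ i, L i v' ≤ L i y := fun i => by
    have := hpos (Sum.inr i)
    simp only [Sum.elim_inr, map_sub] at this
    simp only [hv', map_add, map_smul, smul_eq_mul]; linarith
  have hmL : ∀ i, L i m = (L i v + L i v') / 2 := fun i => by
    simp only [hm, hv', map_add, map_smul, smul_eq_mul]; ring
  have hvert' : kerAt L v' ⊓ kerAt L (y - v') = ⊥ := by
    rw [eq_bot_iff]
    intro e he
    have h1 := hin t e he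
    have hw0 : w ≠ 0 := by rintro rfl; simp at hi1
    obtain ⟨c, hc⟩ : ∃ c : ℝ, c • w = e := by
      have h2 : Module.finrank ℝ (kerAt M w) = 1 := by
        refine le_antisymm hw1 ?_
        have : Nontrivial (kerAt M w) := ⟨⟨w, self_mem_kerAt M w⟩, 0, by simpa using hw0⟩
        exact Module.finrank_pos
      obtain ⟨c, hc⟩ := (finrank_eq_one_iff_of_nonzero' (⟨w, self_mem_kerAt M w⟩ : kerAt M w)
        (by simpa using hw0)).1 h2 ⟨e, h1⟩
      exact ⟨c, by simpa using congrArg Subtype.val hc⟩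
    have hc0 : c = 0 := by
      rcases j0 with i | i
      · have hi : L i e = 0 := he.1 i (by simpa [hv'] using hj0')
        have hj0 : L i w < 0 := hj0
        rw [← hc, map_smul, smul_eq_mul] at hi
        exact (mul_eq_zero.1 hi).resolve_right hj0.ne
      · have hi : L i e = 0 := he.2 i (by
          simp only [Sum.elim_inr, map_sub] at hj0'
          simp only [hv', map_sub, map_add, map_smul, smul_eq_mul]; linarith)
        have hj0 : - L i w < 0 := hj0
        rw [← hc, map_smul, smul_eq_mul] at hi
        exact (mul_eq_zero.1 hi).resolve_right (by intro h; simp [h] at hj0)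
    simp [← hc, hc0]
  have hdim : ∀ u, (∀ i, 0 ≤ L i u) → (∀ i, L i u ≤ L i y) →
      Module.finrank ℝ (kerAt L u) + Module.finrank ℝ (kerAt L (y - u)) ≤
      k + 2 + Module.finrank ℝ ↥(kerAt L u ⊓ kerAt L (y - u)) := by
    intro u hu hu'
    rw [← Submodule.finrank_sup_add_finrank_inf_eq, ← hk]
    refine Nat.add_le_add_right (Submodule.finrank_mono (sup_le ?_ ?_)) _
    · intro e he i hi
      exact he i (le_antisymm (by rw [← hi]; exact hu' i) (hu i))
    · intro e he i hi
      refine he i ?_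
      have h1 := hu i
      have h2 := hu' i
      simp only [map_sub]; linarith
  have hv'2 : 2 ≤ Module.finrank ℝ (kerAt L v') := by
    by_contra! h
    have := hvmax v' ⟨⟨hv'0, hv'y⟩, hvert', by omega⟩
    simp only [hv', map_add, map_smul, smul_eq_mul] at this
    nlinarith
  have hm0 : ∀ i, 0 ≤ L i m := fun i => by rw [hmL]; linarith [hv0 i, hv'0 i]
  have hmy : ∀ i, L i m ≤ L i y := fun i => by rw [hmL]; linarith [hvy i, hv'y i]
  have hm1 : Module.finrank ℝ ↥(kerAt L m ⊓ kerAt L (y - m)) ≤ 1 :=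
    (Submodule.finrank_mono (hin (t/2))).trans hw1
  have hd1 := hdim v' hv'0 hv'y
  have hd2 := hdim m hm0 hmy
  rw [hvert', finrank_bot] at hd1
  have hle1 : Module.finrank ℝ (kerAt L v') ≤ Module.finrank ℝ (kerAt L m) := by
    refine Submodule.finrank_mono ?_
    intro e he i hi
    rw [hmL] at hi
    exact he i (by linarith [hv0 i, hv'0 i])
  have hle2 : Module.finrank ℝ (kerAt L (y - v)) ≤ Module.finrank ℝ (kerAt L (y - m)) := by
    refine Submodule.finrank_mono ?_
    intro e he i hi
    rw [map_sub, hmL] at hi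
    exact he i (by rw [map_sub]; linarith [hvy i, hv'y i])
  by_cases h3 : Module.finrank ℝ (kerAt L v') = 2
  · exact ⟨v', hv'0, hv'y, h3.le, by omega⟩
  · exact ⟨v, hv0, hvy, by omega, by omega⟩

end Decomp


section Select

lemma px_drop {E : Type*} [AddCommGroup E] [Module ℝ E] [FiniteDimensional ℝ E]
    (K : Submodule ℝ E) (φ : E →ₗ[ℝ] ℝ) (w : E) (hw : w ∈ K) (hφ : φ w ≠ 0) :
    Module.finrank ℝ ↥(K ⊓ LinearMap.ker φ) + 1 = Module.finrank ℝ K := by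
  have h1 : φ.domRestrict K ≠ 0 := by
    intro h
    exact hφ (by simpa using LinearMap.congr_fun h ⟨w, hw⟩)
  have h2 := Module.Dual.finrank_ker_add_one_of_ne_zero h1
  rw [← h2]
  congr 1
  have : K ⊓ LinearMap.ker φ = (LinearMap.ker (φ.domRestrict K)).map K.subtype := by
    ext x
    simp only [Submodule.mem_inf, LinearMap.mem_ker, Submodule.mem_map, Submodule.subtype_apply,
      LinearMap.domRestrict_apply, Subtype.exists, exists_and_left, exists_prop]
    constructor
    · rintro ⟨h, h'⟩; exact ⟨x, h', h, rfl⟩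
    · rintro ⟨a, h', h, rfl⟩; exact ⟨h, h'⟩
  rw [this]
  exact Submodule.finrank_map_subtype_eq _ _

lemma px_greedy {E : Type*} [AddCommGroup E] [Module ℝ E] [FiniteDimensional ℝ E]
    {ι : Type*} (L : ι → E →ₗ[ℝ] ℝ) (Z : ι → Prop) (N : Submodule ℝ E)
    (hN : ∀ w, w ∈ N ↔ ∀ i, Z i → L i w = 0) :
    ∀ (d : ℕ) (K : Submodule ℝ E),
      Module.finrank ℝ K = Module.finrank ℝ ↥(K ⊓ N) + d →
      ∃ j : Fin d → ι, (∀ p, Z (j p)) ∧ ∀ w ∈ K, (∀ p, L (j p) w = 0) → w ∈ N := by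
  intro d
  induction d with
  | zero =>
    intro K hK
    refine ⟨Fin.elim0, fun p => p.elim0, fun w hw _ => ?_⟩
    have : K ⊓ N = K := Submodule.eq_of_le_of_finrank_eq inf_le_left (by omega)
    exact (inf_eq_left.1 this) hw
  | succ d ih =>
    intro K hK
    have hnle : ¬ K ≤ N := by
      intro h
      rw [inf_eq_left.2 h] at hK
      omega
    obtain ⟨w, hwK, hwN⟩ := Set.not_subset.1 hnle
    have hwN' : ¬ w ∈ N := hwN
    rw [hN] at hwN'
    push Not at hwN'
    obtain ⟨i, hi, hiw⟩ := hwN'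
    have h1 := px_drop K (L i) w hwK hiw
    have h2 : K ⊓ LinearMap.ker (L i) ⊓ N = K ⊓ N := by
      apply le_antisymm
      · exact inf_le_inf_right _ inf_le_left
      · rintro x ⟨hx1, hx2⟩
        exact ⟨⟨hx1, (hN x).1 hx2 i hi⟩, hx2⟩
    obtain ⟨j, hj, hjw⟩ := ih (K ⊓ LinearMap.ker (L i)) (by rw [h2]; omega)
    refine ⟨Fin.cons i j, ?_, ?_⟩
    · intro p
      refine Fin.cases ?_ ?_ p
      · simpa using hi
      · intro p; simpa using hj p
    · intro x hx hp
      refine hjw x ⟨hx, by simpa using hp 0⟩ (fun p => by simpa using hp p.succ)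

/-- Row functional. -/
noncomputable def rowL {m n : ℕ} (A : Matrix (Fin m) (Fin n) ℤ) (i : Fin m) :
    (Fin n → ℝ) →ₗ[ℝ] ℝ := (LinearMap.proj i) ∘ₗ (A.map (Int.cast : ℤ → ℝ)).mulVecLin

lemma rowL_apply {m n : ℕ} (A : Matrix (Fin m) (Fin n) ℤ) (i : Fin m) (y : Fin n → ℝ) :
    rowL A i y = ∑ c, (A i c : ℝ) * y c := by
  simp [rowL, Matrix.mulVec, dotProduct]

lemma rowL_int {m n : ℕ} (A : Matrix (Fin m) (Fin n) ℤ) (i : Fin m) (u : Fin n → ℤ) :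
    rowL A i (fun c => (u c : ℝ)) = ((∑ c, A i c * u c : ℤ) : ℝ) := by
  simp [rowL_apply]

lemma px_select {m n' f r : ℕ} (A : Matrix (Fin m) (Fin (n' + 1)) ℤ)
    (hfull : ∀ w, (∀ i, rowL A i w = 0) → w = 0) (q : Fin (n' + 1))
    (y : Fin (n' + 1) → ℝ) (hy : y q ≠ 0) (hn : n' = f + r)
    (hk : Module.finrank ℝ (kerAt (rowL A) y) = f + 1) :
    ∃ j : Fin n' → Fin m, (∀ p, f ≤ p.val → rowL A (j p) y = 0) ∧
      (A.submatrix j q.succAbove).det ≠ 0 := by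
  set α : (Fin (n' + 1) → ℝ) →ₗ[ℝ] ℝ := LinearMap.proj q with hα
  have hd1 : Module.finrank ℝ ↥(LinearMap.ker α) = n' := by
    have := px_drop ⊤ α y trivial hy
    rw [top_inf_eq] at this
    simp at this
    exact this
  have hd2 : Module.finrank ℝ ↥(LinearMap.ker α ⊓ kerAt (rowL A) y) = f := by
    have := px_drop (kerAt (rowL A) y) α y (self_mem_kerAt _ _) hy
    rw [inf_comm]
    omega
  obtain ⟨j0, hj0, hj0'⟩ := px_greedy (rowL A) (fun i => rowL A i y = 0) (kerAt (rowL A) y)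
    (fun w => Iff.rfl) r (LinearMap.ker α) (by omega)
  obtain ⟨j1, -, hj1⟩ := px_greedy (rowL A) (fun _ => True) ⊥ (by
      intro w
      constructor
      · intro h i _
        simp only [Submodule.mem_bot] at h
        simp [h]
      · intro h
        simpa using hfull w fun i => h i trivial) f (LinearMap.ker α ⊓ kerAt (rowL A) y) (by
        simp [hd2])
  subst hn
  refine ⟨Fin.append j1 j0, ?_, ?_⟩
  · intro p
    refine Fin.addCases ?_ ?_ p
    · intro p hp
      have := p.2
      simp at hp; omega
    · intro p _
      simpa using hj0 p
  · intro hdet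
    have hdet' : ((A.map (Int.cast : ℤ → ℝ)).submatrix (Fin.append j1 j0) q.succAbove).det = 0 := by
      have : (A.map (Int.cast : ℤ → ℝ)).submatrix (Fin.append j1 j0) q.succAbove
        = (Int.castRingHom ℝ).mapMatrix (A.submatrix (Fin.append j1 j0) q.succAbove) := rfl
      rw [this, ← RingHom.map_det, hdet]
      simp
    obtain ⟨v, hv0, hv⟩ := Matrix.exists_mulVec_eq_zero_iff.2 hdet'
    set w : Fin (f + r + 1) → ℝ := q.insertNth 0 v with hw
    have hwr : ∀ p, rowL A (Fin.append j1 j0 p) w = 0 := by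
      intro p
      have := congrFun hv p
      rw [rowL_apply, Fin.sum_univ_succAbove _ q]
      simpa [hw, Matrix.mulVec, dotProduct] using this
    have hwq : w ∈ LinearMap.ker α := by simp [hα, hw]
    have hwk := hj0' w hwq (fun p => by simpa using hwr (Fin.natAdd f p))
    have hw0 : w = 0 := by
      simpa using hj1 w ⟨hwq, hwk⟩ (fun p => by simpa using hwr (Fin.castAdd r p))
    apply hv0
    ext p
    have := congrFun hw0 (q.succAbove p)
    simpa [hw] using this

/-- Cramer in row form. -/
lemma px_cramer {m n' : ℕ} (A : Matrix (Fin m) (Fin (n' + 1)) ℤ) (q : Fin (n' + 1))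
    (j : Fin n' → Fin m) (i : Fin m) (w : Fin (n' + 1) → ℝ) (hw : w q = 0) :
    ((A.submatrix j q.succAbove).det : ℝ) * rowL A i w =
      ∑ p, ((A.submatrix (Function.update j p i) q.succAbove).det : ℝ) * rowL A (j p) w := by
  have hc : ∀ c, (A.submatrix j q.succAbove).det * A i (q.succAbove c) =
      ∑ p, (A.submatrix (Function.update j p i) q.succAbove).det * A (j p) (q.succAbove c) := by
    intro c
    have := congrFun (Matrix.mulVec_cramer (A.submatrix j q.succAbove)ᵀ
      (fun c => A i (q.succAbove c))) c
    rw [Matrix.det_transpose] at this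
    simp only [Pi.smul_apply, smul_eq_mul] at this
    rw [← this, Matrix.mulVec, dotProduct]
    refine Finset.sum_congr rfl fun p _ => ?_
    have hu : (A.submatrix j q.succAbove).updateRow p (fun c => A i (q.succAbove c)) =
        A.submatrix (Function.update j p i) q.succAbove := by
      ext a b
      by_cases h : a = p
      · subst h; simp
      · simp [h]
    rw [Matrix.cramer_transpose_apply, mul_comm, hu]
    rfl
  have hr : ∀ i, rowL A i w = ∑ c, (A i (q.succAbove c) : ℝ) * w (q.succAbove c) := by
    intro i
    rw [rowL_apply, Fin.sum_univ_succAbove _ q, hw]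
    simp
  simp only [hr, Finset.mul_sum]
  rw [Finset.sum_comm]
  refine Finset.sum_congr rfl fun c _ => ?_
  have := congrArg (Int.cast : ℤ → ℝ) (hc c)
  simp only [Int.cast_mul, Int.cast_sum] at this
  rw [← mul_assoc, this, Finset.sum_mul]
  exact Finset.sum_congr rfl fun p _ => by ring

lemma px_minor_le {m n' : ℕ} (A : Matrix (Fin m) (Fin (n' + 1)) ℤ) (q : Fin (n' + 1))
    (j : Fin n' → Fin m) :
    |((A.submatrix j q.succAbove).det : ℝ)| ≤ (maxMinor A n' : ℝ) := by
  by_cases hj : Function.Injective j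
  · have h : ((A.submatrix j q.succAbove).det).natAbs ≤ maxMinor A n' := by
      unfold maxMinor
      exact Finset.le_sup (f := fun p : (Fin n' → Fin m) × (Fin n' → Fin (n' + 1)) =>
        ((A.submatrix p.1 p.2).det).natAbs) (b := (j, q.succAbove))
        (by simpa using ⟨hj, Fin.succAbove_right_injective⟩)
    have h2 : ((((A.submatrix j q.succAbove).det).natAbs : ℕ) : ℝ) ≤ maxMinor A n' := by
      exact_mod_cast h
    rwa [Nat.cast_natAbs, Int.cast_abs] at h2
  · have : (A.submatrix j q.succAbove).det = 0 := by
      unfold Function.Injective at hj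
      push Not at hj
      obtain ⟨a, b, hab, hne⟩ := hj
      exact Matrix.det_zero_of_row_eq hne (by ext c; simp [hab])
    simp [this]

end Select

section Mink
open MeasureTheory

lemma px_minkZ {n : ℕ} (S : Set (Fin n → ℝ)) (hs : ∀ x ∈ S, -x ∈ S) (hc : Convex ℝ S)
    (hv : (2 : ENNReal) ^ n < volume S) :
    ∃ u : Fin n → ℤ, u ≠ 0 ∧ (fun i => (u i : ℝ)) ∈ S := by
  classical
  have fund := ZSpan.isAddFundamentalDomain (Pi.basisFun ℝ (Fin n)) (volume : Measure (Fin n → ℝ))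
  have hvol : volume (ZSpan.fundamentalDomain (Pi.basisFun ℝ (Fin n))) = 1 := by
    rw [ZSpan.fundamentalDomain_pi_basisFun, Real.volume_pi_Ico]
    simp
  have : Countable (Submodule.span ℤ (Set.range (Pi.basisFun ℝ (Fin n)))).toAddSubgroup := by
    change Countable (Submodule.span ℤ (Set.range (Pi.basisFun ℝ (Fin n))))
    infer_instance
  obtain ⟨x, hx0, hxS⟩ := exists_ne_zero_mem_lattice_of_measure_mul_two_pow_lt_measure
    (L := (Submodule.span ℤ (Set.range (Pi.basisFun ℝ (Fin n)))).toAddSubgroup)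
    fund (s := S) hs hc (by simpa [hvol] using hv)
  have hx := x.2
  have hx' : (x : Fin n → ℝ) ∈ Submodule.span ℤ (Set.range (Pi.basisFun ℝ (Fin n))) := hx
  rw [Module.Basis.mem_span_iff_repr_mem] at hx'
  choose u hu using hx'
  refine ⟨u, ?_, ?_⟩
  · rintro rfl
    apply hx0
    ext i
    have := hu i
    simp at this
    simpa using this.symm
  · have : (fun i => (u i : ℝ)) = (x : Fin n → ℝ) := by
      ext i
      have := hu i
      simpa using this
    rw [this]; exact hxS

/-- Transfer matrix. -/
noncomputable def pxN {n' : ℕ} (B : Fin n' → Fin (n' + 1) → ℝ) (q : Fin (n' + 1))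
    (a : Fin n' → ℝ) : Matrix (Fin (n' + 1)) (Fin (n' + 1)) ℝ :=
  Fin.cons (Pi.single q 1) (fun p c => B p c - a p * (Pi.single q (1 : ℝ) : Fin (n' + 1) → ℝ) c)

lemma pxN_zero {n' : ℕ} (B : Fin n' → Fin (n' + 1) → ℝ) (q : Fin (n' + 1)) (a : Fin n' → ℝ)
    (c : Fin (n' + 1)) : pxN B q a 0 c = (Pi.single q (1 : ℝ) : Fin (n' + 1) → ℝ) c := rfl

lemma pxN_succ {n' : ℕ} (B : Fin n' → Fin (n' + 1) → ℝ) (q : Fin (n' + 1)) (a : Fin n' → ℝ)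
    (p : Fin n') (c : Fin (n' + 1)) :
    pxN B q a p.succ c = B p c - a p * (Pi.single q (1 : ℝ) : Fin (n' + 1) → ℝ) c := rfl

lemma pxN_det {n' : ℕ} (B : Fin n' → Fin (n' + 1) → ℝ) (q : Fin (n' + 1)) (a : Fin n' → ℝ) :
    |(pxN B q a).det| = |(Matrix.of fun p c => B p (q.succAbove c)).det| := by
  rw [Matrix.det_succ_row_zero, Finset.sum_eq_single q]
  · rw [abs_mul, abs_mul, abs_pow]
    simp only [abs_neg, abs_one, one_pow, one_mul]
    have h1 : pxN B q a 0 q = 1 := by simp [pxN_zero]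
    rw [h1, abs_one, one_mul]
    congr 2
    ext p c
    simp [pxN_succ]
  · intro c _ hc
    simp [pxN_zero, hc]
  · simp

lemma px_mink {n' : ℕ} (B : Fin n' → Fin (n' + 1) → ℝ) (q : Fin (n' + 1)) (a : Fin n' → ℝ)
    (D : ℝ) (hD : |(Matrix.of fun p c => B p (q.succAbove c)).det| = D) (hD0 : 0 < D)
    (O : Set (Fin n' → ℝ)) (hOc : Convex ℝ O) (hOs : ∀ x ∈ O, -x ∈ O)
    (V : ℝ) (hV : ENNReal.ofReal V ≤ volume O) (hV0 : 0 < V) (Y : ℝ) (hY0 : 0 ≤ Y)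
    (hY : 2 ^ n' * D ≤ Y * V) :
    ∃ u : Fin (n' + 1) → ℤ, u ≠ 0 ∧ |(u q : ℝ)| ≤ Y ∧
      (fun p => ∑ c, B p c * (u c : ℝ) - a p * (u q : ℝ)) ∈ O := by
  classical
  set cc : ℤ := ⌊Y⌋ + 1 with hcc
  have hccY : Y < cc := by rw [hcc]; push_cast; exact Int.lt_floor_add_one Y
  set Q : Set (Fin (n' + 1) → ℝ) := {v | |v 0| < cc ∧ (fun p : Fin n' => v p.succ) ∈ O} with hQ
  have hQv : volume Q = ENNReal.ofReal (2 * cc) * volume O := by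
    have hmp := volume_preserving_piFinSuccAbove (fun _ : Fin (n' + 1) => ℝ) 0
    have := hmp.measure_preimage_equiv (Set.Ioo (-(cc : ℝ)) cc ×ˢ O)
    have h2 : (MeasurableEquiv.piFinSuccAbove (fun _ : Fin (n' + 1) => ℝ) 0) ⁻¹'
        (Set.Ioo (-(cc : ℝ)) cc ×ˢ O) = Q := by
      ext v
      simp only [hQ, Set.mem_preimage, Set.mem_prod, Set.mem_Ioo, Set.mem_ofPred_eq, abs_lt]
      rfl
    rw [h2] at this
    rw [this, Measure.volume_eq_prod, Measure.prod_prod, Real.volume_Ioo]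
    congr 2; ring
  set f := (pxN B q a).toLin' with hf
  have hfd : |LinearMap.det f| = D := by
    rw [hf, LinearMap.det_toLin', pxN_det, hD]
  have hfd0 : LinearMap.det f ≠ 0 := by
    intro h; rw [h] at hfd; simp at hfd; linarith
  have hvol := Measure.addHaar_preimage_linearMap (volume : Measure (Fin (n' + 1) → ℝ)) hfd0 Q
  obtain ⟨u, hu0, huS⟩ := px_minkZ (f ⁻¹' Q) (by
      rintro x ⟨h1, h2⟩
      refine ⟨?_, ?_⟩
      · rw [map_neg]; simpa using h1
      · rw [map_neg]; exact hOs _ h2) (by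
      apply Convex.linear_preimage (f := f)
      have e1 : Convex ℝ {v : Fin (n' + 1) → ℝ | |v 0| < cc} := by
        have : {v : Fin (n' + 1) → ℝ | |v 0| < cc} = 
          (LinearMap.proj 0 : (Fin (n' + 1) → ℝ) →ₗ[ℝ] ℝ) ⁻¹' (Set.Ioo (-(cc : ℝ)) cc) := by
          ext v; simp [abs_lt]
        rw [this]
        exact (convex_Ioo _ _).linear_preimage _
      have e2 : Convex ℝ {v : Fin (n' + 1) → ℝ | (fun p : Fin n' => v p.succ) ∈ O} :=
        hOc.linear_preimage (LinearMap.funLeft ℝ ℝ Fin.succ)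
      exact e1.inter e2) (by
      rw [hvol, hQv, abs_inv, hfd]
      calc (2 : ENNReal) ^ (n' + 1) = ENNReal.ofReal (2 ^ (n' + 1)) := by
            rw [ENNReal.ofReal_pow (by norm_num)]; norm_num
        _ < ENNReal.ofReal (D⁻¹ * (2 * cc * V)) := by
            apply (ENNReal.ofReal_lt_ofReal_iff_of_nonneg (by positivity)).2
            rw [inv_mul_eq_div, lt_div_iff₀ hD0, pow_succ]
            nlinarith [mul_lt_mul_of_pos_right hccY hV0]
        _ = ENNReal.ofReal D⁻¹ * (ENNReal.ofReal (2 * cc) * ENNReal.ofReal V) := by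
            rw [ENNReal.ofReal_mul (by positivity), ENNReal.ofReal_mul (by linarith)]
        _ ≤ _ := by gcongr)
  have hrow0 : f (fun i => (u i : ℝ)) 0 = u q := by
    rw [hf, Matrix.toLin'_apply, Matrix.mulVec, dotProduct]
    simp [pxN_zero, Pi.single_apply]
  have hrow : ∀ p : Fin n', f (fun i => (u i : ℝ)) p.succ =
      ∑ c, B p c * (u c : ℝ) - a p * (u q : ℝ) := by
    intro p
    rw [hf, Matrix.toLin'_apply, Matrix.mulVec, dotProduct]
    simp [pxN_succ, sub_mul, Finset.sum_sub_distrib, Pi.single_apply]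
  refine ⟨u, hu0, ?_, ?_⟩
  · have h1 := huS.1
    rw [hrow0] at h1
    have h2 : |u q| < cc := by exact_mod_cast h1
    have h3 : |u q| ≤ ⌊Y⌋ := by omega
    have h4 := Int.le_floor.1 h3
    simpa using h4
  · have h1 := huS.2
    simpa only [hrow] using h1

end Mink

section Contra

lemma px_contra {m n' : ℕ} (A : Matrix (Fin m) (Fin (n' + 1)) ℤ) (q : Fin (n' + 1))
    (T : Fin m → Prop) (b' : Fin m → ℤ) (hb : ∀ i, 0 ≤ b' i)
    (hR : ∀ u : Fin (n' + 1) → ℤ, (∀ i, rowL A i (fun c => (u c : ℝ)) ≤ b' i) →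
      (∀ i, T i → 0 ≤ rowL A i (fun c => (u c : ℝ))) → u = 0)
    (y : Fin (n' + 1) → ℝ) (hy1 : ∀ i, rowL A i y ≤ b' i) (hy2 : ∀ i, T i → 0 ≤ rowL A i y)
    (hyq : y q ≠ 0) (j : Fin n' → Fin m) (hD : (A.submatrix j q.succAbove).det ≠ 0)
    (O : Set (Fin n' → ℝ)) (hOc : Convex ℝ O) (hOs : ∀ x ∈ O, -x ∈ O)
    (V : ℝ) (hV : ENNReal.ofReal V ≤ MeasureTheory.volume O) (hV0 : 0 < V)
    (hO1 : ∀ v ∈ O, ∀ p, rowL A (j p) y = 0 → |v p| < 1)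
    (hO : ∀ w, w q = 0 → (∀ p, rowL A (j p) y = 0 → rowL A (j p) w = 0) →
      (fun p => rowL A (j p) w) ∈ O → ∀ i, |rowL A i w| < 1) :
    |y q| * V < 2 ^ n' * |((A.submatrix j q.succAbove).det : ℝ)| := by
  by_contra hcon
  push Not at hcon
  have key : ∀ u : Fin (n' + 1) → ℤ, u ≠ 0 → 0 ≤ (u q : ℝ) / y q → (u q : ℝ) / y q ≤ 1 →
      (fun p => rowL A (j p) (fun c => (u c : ℝ)) - (rowL A (j p) y / y q) * (u q : ℝ)) ∈ O →
      False := by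
    intro u hu0 ht0 ht1 hu
    set t := (u q : ℝ) / y q with ht
    set w : Fin (n' + 1) → ℝ := (fun c => (u c : ℝ)) - t • y with hw
    have hwr : ∀ i, rowL A i w = rowL A i (fun c => (u c : ℝ)) - t * rowL A i y := by
      intro i; simp [hw]
    have hwq : w q = 0 := by
      simp [hw, ht, div_mul_cancel₀ _ hyq]
    have hw1 : (fun p => rowL A (j p) w) ∈ O := by
      convert hu using 2 with p
      rw [hwr, ht]; ring
    have hw2 : ∀ p, rowL A (j p) y = 0 → rowL A (j p) w = 0 := by
      intro p hp
      have h1 := hO1 _ hw1 p hp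
      rw [hwr, hp, mul_zero, sub_zero, rowL_int] at h1 ⊢
      have : |∑ c, A (j p) c * u c| < 1 := by exact_mod_cast h1
      rw [Int.abs_lt_one_iff.1 this]; simp
    have hw3 := hO w hwq hw2 hw1
    apply hu0
    apply hR
    · intro i
      have h1 := (abs_lt.1 (hw3 i)).2
      rw [hwr] at h1
      have hb0 : (0 : ℝ) ≤ b' i := by exact_mod_cast hb i
      have h2 : t * rowL A i y ≤ b' i := by nlinarith [hy1 i]
      have h3 : rowL A i (fun c => (u c : ℝ)) < b' i + 1 := by linarith
      rw [rowL_int] at h3 ⊢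
      have : (∑ c, A i c * u c) < b' i + 1 := by exact_mod_cast h3
      exact_mod_cast Int.lt_add_one_iff.1 this
    · intro i hi
      have h1 := (abs_lt.1 (hw3 i)).1
      rw [hwr] at h1
      have h2 : 0 ≤ t * rowL A i y := mul_nonneg ht0 (hy2 i hi)
      have h3 : -1 < rowL A i (fun c => (u c : ℝ)) := by linarith
      rw [rowL_int] at h3 ⊢
      have : -1 < (∑ c, A i c * u c) := by exact_mod_cast h3
      have : 0 ≤ (∑ c, A i c * u c) := by omega
      exact_mod_cast this
  obtain ⟨u, hu0, huq, huO⟩ := px_mink (fun p c => (A (j p) c : ℝ)) q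
    (fun p => rowL A (j p) y / y q) |((A.submatrix j q.succAbove).det : ℝ)| (by
      congr 1
      have : (Matrix.of fun p c => (A (j p) (q.succAbove c) : ℝ))
        = (Int.castRingHom ℝ).mapMatrix (A.submatrix j q.succAbove) := rfl
      rw [this, ← RingHom.map_det]
      simp) (by
      have : ((A.submatrix j q.succAbove).det : ℝ) ≠ 0 := by exact_mod_cast hD
      exact abs_pos.2 this) O hOc hOs V hV hV0 |y q| (abs_nonneg _) hcon
  simp only [← rowL_apply] at huO
  have habs : |(u q : ℝ) / y q| ≤ 1 := by
    rw [abs_div, div_le_one (abs_pos.2 hyq)]; exact huq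
  rw [abs_le] at habs
  rcases le_total 0 ((u q : ℝ) / y q) with h | h
  · exact key u hu0 h habs.2 huO
  · refine key (-u) (by simpa using hu0) ?_ ?_ ?_
    · simp only [Pi.neg_apply, Int.cast_neg, neg_div]; linarith
    · simp only [Pi.neg_apply, Int.cast_neg, neg_div]; linarith
    · have := hOs _ huO
      convert this using 1
      ext p
      have e : (fun c => (((-u) c : ℤ) : ℝ)) = -(fun c => (u c : ℝ)) := by ext; simp
      rw [e]
      simp
      ring

/-- choose rows maximizing the determinant -/
lemma px_max {m n' f : ℕ} (A : Matrix (Fin m) (Fin (n' + 1)) ℤ) (q : Fin (n' + 1))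
    (y : Fin (n' + 1) → ℝ)
    (hex : ∃ j : Fin n' → Fin m, (∀ p, f ≤ p.val → rowL A (j p) y = 0) ∧
      (A.submatrix j q.succAbove).det ≠ 0) :
    ∃ j : Fin n' → Fin m, (∀ p, f ≤ p.val → rowL A (j p) y = 0) ∧
      (A.submatrix j q.succAbove).det ≠ 0 ∧
      ∀ j' : Fin n' → Fin m, (∀ p, f ≤ p.val → rowL A (j' p) y = 0) →
        |((A.submatrix j' q.succAbove).det : ℝ)| ≤ |((A.submatrix j q.succAbove).det : ℝ)| := by
  classical
  obtain ⟨j0, h0, h0'⟩ := hex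
  obtain ⟨j, hj, hmax⟩ := Finset.exists_max_image
    (Finset.univ.filter fun j : Fin n' → Fin m => ∀ p, f ≤ p.val → rowL A (j p) y = 0)
    (fun j => |((A.submatrix j q.succAbove).det : ℝ)|) ⟨j0, by simpa using h0⟩
  simp only [Finset.mem_filter, Finset.mem_univ, true_and] at hj hmax
  refine ⟨j, hj, ?_, hmax⟩
  intro h
  have := hmax j0 h0
  rw [h] at this
  simp only [Int.cast_zero, abs_zero, abs_nonpos_iff, Int.cast_eq_zero] at this
  exact h0' this

lemma px_bound1 {m n' f r : ℕ} (A : Matrix (Fin m) (Fin (n' + 1)) ℤ) (q : Fin (n' + 1))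
    (hfull : ∀ w, (∀ i, rowL A i w = 0) → w = 0)
    (T : Fin m → Prop) (b' : Fin m → ℤ) (hb : ∀ i, 0 ≤ b' i)
    (hR : ∀ u : Fin (n' + 1) → ℤ, (∀ i, rowL A i (fun c => (u c : ℝ)) ≤ b' i) →
      (∀ i, T i → 0 ≤ rowL A i (fun c => (u c : ℝ))) → u = 0)
    (y : Fin (n' + 1) → ℝ) (hy1 : ∀ i, rowL A i y ≤ b' i) (hy2 : ∀ i, T i → 0 ≤ rowL A i y)
    (hyq : y q ≠ 0) (hn : n' = f + r) (hf : f ≤ 1)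
    (hk : Module.finrank ℝ (kerAt (rowL A) y) = f + 1) :
    |y q| < (maxMinor A n' : ℝ) := by
  obtain ⟨j, hj, hD, hmax⟩ := px_max A q y (px_select A hfull q y hyq hn hk)
  have hD' : 0 < |((A.submatrix j q.succAbove).det : ℝ)| := by
    have : ((A.submatrix j q.succAbove).det : ℝ) ≠ 0 := by exact_mod_cast hD
    exact abs_pos.2 this
  have := px_contra A q T b' hb hR y hy1 hy2 hyq j hD
    (Set.pi Set.univ fun _ => Set.Ioo (-1 : ℝ) 1) (convex_pi fun _ _ => convex_Ioo _ _)
    (by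
      intro x hx p _
      have := hx p trivial
      simp only [Set.mem_Ioo, Pi.neg_apply] at this ⊢
      constructor <;> linarith) (2 ^ n') (by
      rw [Real.volume_pi_Ioo]
      simp only [Finset.prod_const, Finset.card_univ, Fintype.card_fin]
      rw [ENNReal.ofReal_pow (by norm_num)]
      norm_num) (by positivity)
    (by
      intro v hv p _
      have := hv p trivial
      exact abs_lt.2 this)
    (by
      intro w hwq hw0 hw i
      have hc := px_cramer A q j i w hwq
      have hlt : ∀ p, |rowL A (j p) w| < 1 := fun p => abs_lt.2 (hw p trivial)
      have hle : |∑ p, ((A.submatrix (Function.update j p i) q.succAbove).det : ℝ) *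
          rowL A (j p) w| < |((A.submatrix j q.succAbove).det : ℝ)| := by
        by_cases hf0 : ∃ p : Fin n', p.val < f
        · obtain ⟨p0, hp0⟩ := hf0
          rw [Finset.sum_eq_single p0]
          · rw [abs_mul]
            have h1 : |((A.submatrix (Function.update j p0 i) q.succAbove).det : ℝ)| ≤
                |((A.submatrix j q.succAbove).det : ℝ)| := by
              apply hmax
              intro p hp
              have : p ≠ p0 := by rintro rfl; omega
              simpa [this] using hj p hp
            nlinarith [hlt p0, abs_nonneg (rowL A (j p0) w)]
          · intro p _ hp
            have : f ≤ p.val := by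
              by_contra h
              apply hp; ext; omega
            rw [hw0 p (hj p this), mul_zero]
          · simp
        · push Not at hf0
          rw [Finset.sum_eq_zero]
          · simpa using hD'
          · intro p _
            rw [hw0 p (hj p (hf0 p)), mul_zero]
      rw [← hc, abs_mul] at hle
      nlinarith [abs_nonneg (rowL A i w)])
  have h2 := px_minor_le A q j
  have h3 : (0 : ℝ) < 2 ^ n' := by positivity
  nlinarith

end Contra

section Area
open MeasureTheory

lemma px_tri (s : ℝ) (hs : 1 ≤ s) :
    volume (regionBetween (fun a : ℝ => a) (fun a : ℝ => 1 - (s - 1) * a) (Set.Ioo 0 (1 / s)))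
      = ENNReal.ofReal (1 / (2 * s)) := by
  have hs0 : 0 < s := by linarith
  have hIntOn : ∀ a b : ℝ, IntegrableOn (fun x : ℝ => a + b * x) (Set.Ioo 0 (1 / s)) := by
    intro a b
    have : ContinuousOn (fun x : ℝ => a + b * x) (Set.Icc 0 (1 / s)) := by fun_prop
    exact (this.integrableOn_Icc).mono_set Set.Ioo_subset_Icc_self
  rw [Measure.volume_eq_prod, volume_regionBetween_eq_integral]
  · congr 1
    rw [← integral_Ioc_eq_integral_Ioo, ← intervalIntegral.integral_of_le (by positivity)]
    have e : ∀ x : ℝ, ((fun a : ℝ => 1 - (s - 1) * a) - fun a : ℝ => a) x = 1 - s * x := by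
      intro x; simp; ring
    simp only [e]
    rw [intervalIntegral.integral_sub (by simp) (by
      apply Continuous.intervalIntegrable; fun_prop), intervalIntegral.integral_const_mul, integral_id]
    simp
    field_simp
    ring
  · simpa using hIntOn 0 1
  · have := hIntOn 1 (-(s - 1))
    refine this.congr_fun (fun x _ => by ring) measurableSet_Ioo
  · exact measurableSet_Ioo
  · intro x hx
    have := hx.2
    rw [lt_div_iff₀ hs0] at this
    linarith

lemma px_quad (s : ℝ) (hs : 1 ≤ s) (hs2 : s ≤ 2) (S : Set (ℝ × ℝ))
    (hS : ∀ x y : ℝ, 0 < x → 0 < y → x + (s - 1) * y < 1 → y + (s - 1) * x < 1 → (x, y) ∈ S) :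
    ENNReal.ofReal (1 / s) ≤ volume (S ∩ Set.Ioi 0 ×ˢ Set.Ioi 0) := by
  have hs0 : 0 < s := by linarith
  set R := regionBetween (fun a : ℝ => a) (fun a : ℝ => 1 - (s - 1) * a) (Set.Ioo 0 (1 / s))
    with hR
  have hRm : MeasurableSet R := measurableSet_regionBetween (by fun_prop) (by fun_prop)
    measurableSet_Ioo
  have hR1 : ∀ x y, (x, y) ∈ R → 0 < x ∧ x < y ∧ y + (s - 1) * x < 1 := by
    rintro x y ⟨⟨h1, h2⟩, h3, h4⟩
    simp only at h1 h2 h3 h4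
    exact ⟨h1, h3, by linarith⟩
  have hsw : volume (Prod.swap ⁻¹' R) = volume R := by
    have : MeasurePreserving (Prod.swap : ℝ × ℝ → ℝ × ℝ) volume volume :=
      Measure.measurePreserving_swap
    exact this.measure_preimage hRm.nullMeasurableSet
  have hd : Disjoint R (Prod.swap ⁻¹' R) := by
    rw [Set.disjoint_left]
    rintro ⟨x, y⟩ h1 h2
    have h1 := hR1 _ _ h1
    have h2 := hR1 _ _ h2
    linarith [h1.2.1, h2.2.1]
  calc ENNReal.ofReal (1 / s) = volume R + volume (Prod.swap ⁻¹' R) := by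
        rw [hsw, px_tri s hs, ← ENNReal.ofReal_add (by positivity) (by positivity)]
        congr 1; field_simp; ring
    _ = volume (R ∪ Prod.swap ⁻¹' R) := by
        rw [measure_union hd (measurable_swap hRm)]
    _ ≤ _ := by
        apply measure_mono
        rintro ⟨x, y⟩ (h | h)
        · obtain ⟨h1, h2, h3⟩ := hR1 _ _ h
          refine ⟨hS x y h1 (by linarith)
            (by nlinarith [mul_nonneg (sub_nonneg.2 h2.le) (sub_nonneg.2 hs2)]) h3, h1, ?_⟩
          simp; linarith
        · obtain ⟨h1, h2, h3⟩ := hR1 y x h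
          refine ⟨hS x y (by linarith) h1 h3
            (by nlinarith [mul_nonneg (sub_nonneg.2 h2.le) (sub_nonneg.2 hs2)]), ?_, h1⟩
          simp; linarith

lemma px_quad_in (s p1 p2 x y : ℝ) (h1 : |p1| ≤ 1) (h2 : |p2| ≤ 1)
    (h3 : |p1 + p2| ≤ s) (hx : 0 < x) (hy : 0 < y) (hxy : x + (s - 1) * y < 1)
    (hyx : y + (s - 1) * x < 1) : |p1 * x + p2 * y| < 1 := by
  rw [abs_le] at h1 h2 h3
  rw [abs_lt]
  rcases le_total x y with h | h
  · constructor
    · nlinarith [mul_nonneg (sub_nonneg.2 h) (by linarith : 0 ≤ p2 + 1),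
        mul_nonneg hx.le (by linarith : 0 ≤ p1 + p2 + s)]
    · nlinarith [mul_nonneg (sub_nonneg.2 h) (by linarith : 0 ≤ 1 - p2),
        mul_nonneg hx.le (by linarith : 0 ≤ s - (p1 + p2))]
  · constructor
    · nlinarith [mul_nonneg (sub_nonneg.2 h) (by linarith : 0 ≤ p1 + 1),
        mul_nonneg hy.le (by linarith : 0 ≤ p1 + p2 + s)]
    · nlinarith [mul_nonneg (sub_nonneg.2 h) (by linarith : 0 ≤ 1 - p1),
        mul_nonneg hy.le (by linarith : 0 ≤ s - (p1 + p2))]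

lemma px_smax {ι : Type*} [Fintype ι] (g : ι → ℝ) :
    ∃ s : ℝ, 1 ≤ s ∧ (∀ i, g i ≤ s) ∧ (s = 1 ∨ ∃ i, s = g i) := by
  by_cases h : ∀ i, g i ≤ 1
  · exact ⟨1, le_rfl, h, Or.inl rfl⟩
  · push Not at h
    obtain ⟨i0, hi0⟩ := h
    obtain ⟨i, -, hi⟩ := Finset.exists_max_image Finset.univ g ⟨i0, Finset.mem_univ _⟩
    exact ⟨g i, by linarith [hi i0 (Finset.mem_univ _)], fun k => hi k (Finset.mem_univ _),
      Or.inr ⟨i, rfl⟩⟩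

lemma px_three (a b c d : ℝ) (ha : |a| ≤ 1) (hb : |b| ≤ 1) (hc : |c| ≤ 1) (hd : |d| ≤ 1)
    (h : |a * d - b * c| ≤ 1) : |a + b| + |c - d| ≤ 3 := by
  rw [abs_le] at ha hb hc hd h
  obtain ⟨a1, a2⟩ := ha
  obtain ⟨b1, b2⟩ := hb
  obtain ⟨c1, c2⟩ := hc
  obtain ⟨d1, d2⟩ := hd
  obtain ⟨h1, h2⟩ := h
  rcases abs_cases (a + b) with ⟨e, _⟩ | ⟨e, _⟩ <;>
    rcases abs_cases (c - d) with ⟨e', _⟩ | ⟨e', _⟩ <;> rw [e, e']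
  · nlinarith [mul_nonneg (sub_nonneg.2 a2) (by linarith : 0 ≤ 1 + d),
      mul_nonneg (sub_nonneg.2 b2) (by linarith : 0 ≤ 1 - c)]
  · nlinarith [mul_nonneg (sub_nonneg.2 a2) (by linarith : 0 ≤ 1 - d),
      mul_nonneg (sub_nonneg.2 b2) (by linarith : 0 ≤ 1 + c)]
  · nlinarith [mul_nonneg (by linarith : 0 ≤ 1 + a) (by linarith : 0 ≤ 1 + d),
      mul_nonneg (by linarith : 0 ≤ 1 + b) (by linarith : 0 ≤ 1 - c)]
  · nlinarith [mul_nonneg (by linarith : 0 ≤ 1 + a) (by linarith : 0 ≤ 1 - d),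
      mul_nonneg (by linarith : 0 ≤ 1 + b) (by linarith : 0 ≤ 1 + c)]

lemma px_area {ι : Type*} [Fintype ι] (p1 p2 : ι → ℝ) (h1 : ∀ i, |p1 i| ≤ 1)
    (h2 : ∀ i, |p2 i| ≤ 1) (h12 : ∀ i k, |p1 i * p2 k - p2 i * p1 k| ≤ 1) :
    MeasurableSet {v : ℝ × ℝ | ∀ i, |p1 i * v.1 + p2 i * v.2| < 1} ∧
    ENNReal.ofReal (8 / 3) ≤ volume {v : ℝ × ℝ | ∀ i, |p1 i * v.1 + p2 i * v.2| < 1} := by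
  set S := {v : ℝ × ℝ | ∀ i, |p1 i * v.1 + p2 i * v.2| < 1} with hS
  have hSm : MeasurableSet S := by
    have : S = ⋂ i, {v : ℝ × ℝ | |p1 i * v.1 + p2 i * v.2| < 1} := by
      ext v; simp [hS]
    rw [this]
    exact MeasurableSet.iInter fun i => measurableSet_lt (by fun_prop) measurable_const
  refine ⟨hSm, ?_⟩
  obtain ⟨s, hs1, hs, hsx⟩ := px_smax fun i => |p1 i + p2 i|
  obtain ⟨t, ht1, ht, htx⟩ := px_smax fun i => |p1 i - p2 i|
  have hst : s + t ≤ 3 := by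
    have hle2 : ∀ i, |p1 i + p2 i| ≤ 2 := fun i => by
      have := abs_add_le (p1 i) (p2 i); linarith [h1 i, h2 i]
    have hle2' : ∀ i, |p1 i - p2 i| ≤ 2 := fun i => by
      have := abs_sub (p1 i) (p2 i); linarith [h1 i, h2 i]
    rcases hsx with rfl | ⟨i, rfl⟩ <;> rcases htx with rfl | ⟨k, rfl⟩
    · norm_num
    · linarith [hle2' k]
    · linarith [hle2 i]
    · exact px_three _ _ _ _ (h1 i) (h2 i) (h1 k) (h2 k) (h12 i k)
  have mneg : MeasurePreserving (fun x : ℝ => -x) volume volume :=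
    Measure.measurePreserving_neg volume
  have mid : MeasurePreserving (fun x : ℝ => x) volume volume := MeasurePreserving.id volume
  have gen : ∀ (φ ψ : ℝ → ℝ) (_ : MeasurePreserving φ volume volume)
      (_ : MeasurePreserving ψ volume volume) (s : ℝ) (_ : 1 ≤ s) (_ : s ≤ 2)
      (_ : ∀ x y : ℝ, 0 < x → 0 < y → x + (s - 1) * y < 1 → y + (s - 1) * x < 1 →
        (φ x, ψ y) ∈ S) (I J : Set ℝ) (_ : MeasurableSet I) (_ : MeasurableSet J)
      (_ : φ ⁻¹' I = Set.Ioi 0) (_ : ψ ⁻¹' J = Set.Ioi 0),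
      ENNReal.ofReal (1 / s) ≤ volume (S ∩ I ×ˢ J) := by
    intro φ ψ hφ hψ s hs1 hs2 hin I J hI hJ hφI hψJ
    have hm : MeasurePreserving (Prod.map φ ψ) (volume : Measure (ℝ × ℝ)) volume := hφ.prod hψ
    rw [← hm.measure_preimage (hSm.inter (hI.prod hJ)).nullMeasurableSet]
    have := px_quad s hs1 hs2 (Prod.map φ ψ ⁻¹' S) hin
    have e : Prod.map φ ψ ⁻¹' (S ∩ I ×ˢ J) =
        Prod.map φ ψ ⁻¹' S ∩ (φ ⁻¹' I) ×ˢ (ψ ⁻¹' J) := rfl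
    rw [e, hφI, hψJ]
    exact this
  have q1 := gen _ _ mid mid s hs1 (by linarith) (fun x y hx hy hxy hyx i => px_quad_in s _ _ x y (h1 i) (h2 i)
    (hs i) hx hy hxy hyx) (Set.Ioi 0) (Set.Ioi 0) measurableSet_Ioi measurableSet_Ioi rfl rfl
  have q2 := gen _ _ mneg mneg s hs1 (by linarith) (fun x y hx hy hxy hyx i => by
    have := px_quad_in s (p1 i) (p2 i) x y (h1 i) (h2 i) (hs i) hx hy hxy hyx
    rw [← abs_neg] at this
    convert this using 2
    simp; ring) (Set.Iio 0) (Set.Iio 0) measurableSet_Iio measurableSet_Iio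
    (by ext; simp) (by ext; simp)
  have q3 := gen _ _ mid mneg t ht1 (by linarith) (fun x y hx hy hxy hyx i => by
    have := px_quad_in t (p1 i) (-p2 i) x y (h1 i) (by simpa using h2 i)
      (by simpa [sub_eq_add_neg] using ht i) hx hy hxy hyx
    convert this using 2
    simp) (Set.Ioi 0) (Set.Iio 0) measurableSet_Ioi measurableSet_Iio
    (by ext; simp) (by ext; simp)
  have q4 := gen _ _ mneg mid t ht1 (by linarith) (fun x y hx hy hxy hyx i => by
    have := px_quad_in t (p1 i) (-p2 i) x y (h1 i) (by simpa using h2 i)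
      (by simpa [sub_eq_add_neg] using ht i) hx hy hxy hyx
    rw [← abs_neg] at this
    convert this using 2
    simp; ring) (Set.Iio 0) (Set.Ioi 0) measurableSet_Iio measurableSet_Ioi
    (by ext; simp) (by ext; simp)
  have hr1 : volume ((S ∩ Set.Ioi 0 ×ˢ Set.Ioi 0) ∪ (S ∩ Set.Ioi 0 ×ˢ Set.Iio 0)) = 
      volume (S ∩ Set.Ioi 0 ×ˢ Set.Ioi 0) + volume (S ∩ Set.Ioi 0 ×ˢ Set.Iio 0) := by
    apply measure_union
    · rw [Set.disjoint_left]
      rintro ⟨x, y⟩ ⟨-, -, h⟩ ⟨-, -, h'⟩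
      simp at h h'; linarith
    · exact hSm.inter (measurableSet_Ioi.prod measurableSet_Iio)
  have hr2 : volume ((S ∩ Set.Iio 0 ×ˢ Set.Iio 0) ∪ (S ∩ Set.Iio 0 ×ˢ Set.Ioi 0)) = 
      volume (S ∩ Set.Iio 0 ×ˢ Set.Iio 0) + volume (S ∩ Set.Iio 0 ×ˢ Set.Ioi 0) := by
    apply measure_union
    · rw [Set.disjoint_left]
      rintro ⟨x, y⟩ ⟨-, -, h⟩ ⟨-, -, h'⟩
      simp at h h'; linarith
    · exact hSm.inter (measurableSet_Iio.prod measurableSet_Ioi)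
  have hr : volume (((S ∩ Set.Ioi 0 ×ˢ Set.Ioi 0) ∪ (S ∩ Set.Ioi 0 ×ˢ Set.Iio 0)) ∪
      ((S ∩ Set.Iio 0 ×ˢ Set.Iio 0) ∪ (S ∩ Set.Iio 0 ×ˢ Set.Ioi 0))) = 
      volume ((S ∩ Set.Ioi 0 ×ˢ Set.Ioi 0) ∪ (S ∩ Set.Ioi 0 ×ˢ Set.Iio 0)) +
      volume ((S ∩ Set.Iio 0 ×ˢ Set.Iio 0) ∪ (S ∩ Set.Iio 0 ×ˢ Set.Ioi 0)) := by
    apply measure_union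
    · rw [Set.disjoint_left]
      rintro ⟨x, y⟩ h h'
      have h0 : 0 < x := by rcases h with ⟨-, h, -⟩ | ⟨-, h, -⟩ <;> exact h
      have h0' : x < 0 := by rcases h' with ⟨-, h, -⟩ | ⟨-, h, -⟩ <;> exact h
      linarith
    · exact (hSm.inter (measurableSet_Iio.prod measurableSet_Iio)).union
        (hSm.inter (measurableSet_Iio.prod measurableSet_Ioi))
  have hsub : (((S ∩ Set.Ioi 0 ×ˢ Set.Ioi 0) ∪ (S ∩ Set.Ioi 0 ×ˢ Set.Iio 0)) ∪
      ((S ∩ Set.Iio 0 ×ˢ Set.Iio 0) ∪ (S ∩ Set.Iio 0 ×ˢ Set.Ioi 0))) ⊆ S := by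
    rintro v ((h | h) | (h | h)) <;> exact h.1
  have hs0 : 0 < s := by linarith
  have ht0 : 0 < t := by linarith
  calc ENNReal.ofReal (8 / 3) ≤ ENNReal.ofReal ((1 / s + 1 / t) + (1 / s + 1 / t)) := by
        apply ENNReal.ofReal_le_ofReal
        rw [div_add_div _ _ hs0.ne' ht0.ne', ← add_div, div_le_div_iff₀ (by norm_num)
          (by positivity)]
        nlinarith [sq_nonneg (s - t)]
    _ = (ENNReal.ofReal (1 / s) + ENNReal.ofReal (1 / t)) +
        (ENNReal.ofReal (1 / s) + ENNReal.ofReal (1 / t)) := by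
        rw [ENNReal.ofReal_add (by positivity) (by positivity),
          ENNReal.ofReal_add (by positivity) (by positivity)]
    _ ≤ (volume (S ∩ Set.Ioi 0 ×ˢ Set.Ioi 0) + volume (S ∩ Set.Ioi 0 ×ˢ Set.Iio 0)) +
        (volume (S ∩ Set.Iio 0 ×ˢ Set.Iio 0) + volume (S ∩ Set.Iio 0 ×ˢ Set.Ioi 0)) := by
        gcongr
    _ = _ := by rw [← hr1, ← hr2, ← hr]
    _ ≤ volume S := measure_mono hsub

lemma px_vol {r : ℕ} (S : Set (ℝ × ℝ)) (hS : MeasurableSet S)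
    (hV : ENNReal.ofReal (8 / 3) ≤ volume S) :
    ENNReal.ofReal (8 / 3 * 2 ^ r) ≤ volume {v : Fin (r + 2) → ℝ | (v 0, v 1) ∈ S ∧
      ∀ p : Fin r, |v p.succ.succ| < 1} := by
  have m1 := volume_preserving_piFinSuccAbove (fun _ : Fin (r + 2) => ℝ) 0
  have m2 := volume_preserving_piFinSuccAbove (fun _ : Fin (r + 1) => ℝ) 0
  have m3 : MeasurePreserving (Prod.map id (MeasurableEquiv.piFinSuccAbove
    (fun _ : Fin (r + 1) => ℝ) 0)) (volume : Measure (ℝ × (Fin (r + 1) → ℝ))) volume :=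
    (MeasurePreserving.id volume).prod m2
  have m4 : MeasurePreserving (MeasurableEquiv.prodAssoc.symm : ℝ × (ℝ × (Fin r → ℝ)) ≃ᵐ _)
    volume volume := (volume_preserving_prodAssoc (α₁ := ℝ) (β₁ := ℝ) (γ₁ := Fin r → ℝ)).symm
  have m := m4.comp (m3.comp m1)
  have hB : MeasurableSet (Set.pi Set.univ fun _ : Fin r => Set.Ioo (-1 : ℝ) 1) :=
    MeasurableSet.univ_pi fun _ => measurableSet_Ioo
  have := m.measure_preimage (hS.prod hB).nullMeasurableSet
  rw [Measure.volume_eq_prod, Measure.prod_prod, Real.volume_pi_Ioo] at this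
  have e : {v : Fin (r + 2) → ℝ | (v 0, v 1) ∈ S ∧ ∀ p : Fin r, |v p.succ.succ| < 1} =
    (⇑MeasurableEquiv.prodAssoc.symm ∘ Prod.map id (MeasurableEquiv.piFinSuccAbove
      (fun _ : Fin (r + 1) => ℝ) 0) ∘ (MeasurableEquiv.piFinSuccAbove
      (fun _ : Fin (r + 2) => ℝ) 0)) ⁻¹' (S ×ˢ Set.pi Set.univ fun _ : Fin r => Set.Ioo (-1 : ℝ) 1) := by
    ext v
    constructor
    · rintro ⟨h1, h2⟩
      exact ⟨h1, fun p _ => abs_lt.1 (h2 p)⟩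
    · rintro ⟨h1, h2⟩
      exact ⟨h1, fun p => abs_lt.2 (h2 p trivial)⟩
  rw [e, this, ENNReal.ofReal_mul (by norm_num)]
  gcongr
  simp only [Finset.prod_const, Finset.card_univ, Fintype.card_fin]
  rw [ENNReal.ofReal_pow (by norm_num)]
  norm_num

end Area

section Bound2

lemma px_det2 {k : ℕ} (M : Matrix (Fin k) (Fin k) ℤ) (s t : Fin k) (hst : s ≠ t)
    (v v' : Fin k → ℤ) :
    M.det * ((M.updateRow s v).updateRow t v').det =
      (M.updateRow s v).det * (M.updateRow t v').det -
        (M.updateRow t v).det * (M.updateRow s v').det := by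
  set φ : (Fin k → ℤ) →ₗ[ℤ] ℤ :=
    (Matrix.detRowAlternating (R := ℤ) (n := Fin k)).toMultilinearMap.toLinearMap
      (M.updateRow s v) t with hφ
  have hφa : ∀ x, φ x = ((M.updateRow s v).updateRow t x).det := fun x => rfl
  obtain ⟨R, hR⟩ : ∃ R : Fin k → Fin k → ℤ, ∀ p c, R p c = M p c := ⟨fun p c => M p c, fun _ _ => rfl⟩
  have h1 : M.det • v' = ∑ p, (M.updateRow p v').det • R p := by
    have := Matrix.mulVec_cramer Mᵀ v'
    rw [Matrix.det_transpose] at this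
    rw [← this]
    ext c
    simp only [Matrix.mulVec, dotProduct, Finset.sum_apply, Pi.smul_apply, smul_eq_mul]
    refine Finset.sum_congr rfl fun p _ => ?_
    rw [Matrix.cramer_transpose_apply, mul_comm, hR]
    rfl
  have h2 := congrArg φ h1
  rw [map_smul, map_sum, smul_eq_mul, hφa] at h2
  simp only [hφa, Matrix.det_updateRow_smul] at h2
  rw [h2, ← Finset.add_sum_erase _ _ (Finset.mem_univ t),
    ← Finset.add_sum_erase _ _ (Finset.mem_erase.2 ⟨hst, Finset.mem_univ s⟩),
    Finset.sum_eq_zero]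
  · have e1 : (M.updateRow s v).updateRow t (R t) = M.updateRow s v := by
      ext a b
      by_cases ha : a = t
      · subst ha
        simp [Matrix.updateRow_apply, hst.symm, hR]
      · simp [Matrix.updateRow_apply, ha]
    have e2 : ((M.updateRow s v).updateRow t (R s)).det = - (M.updateRow t v).det := by
      have : (M.updateRow s v).updateRow t (R s) =
          (M.updateRow t v).submatrix (Equiv.swap s t) id := by
        ext a b
        by_cases ha : a = t
        · subst ha
          simp [Matrix.updateRow_apply, hst, hR]
        · by_cases ha' : a = s
          · subst ha'
            simp [Matrix.updateRow_apply, hst, hR]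
          · simp [Matrix.updateRow_apply, ha, ha', Equiv.swap_apply_of_ne_of_ne]
      rw [this, Matrix.det_permute, Equiv.Perm.sign_swap hst]
      simp
    rw [e1, e2]
    ring
  · intro p hp
    simp only [Finset.mem_erase, Finset.mem_univ, and_true] at hp
    rw [Matrix.det_zero_of_row_eq (M := (M.updateRow s v).updateRow t (R p)) (i := p) (j := t) hp.2,
      mul_zero]
    ext c
    simp [Matrix.updateRow_apply, hp.1, hp.2, hR]

lemma px_upd {m n' : ℕ} (A : Matrix (Fin m) (Fin (n' + 1)) ℤ) (q : Fin (n' + 1))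
    (j : Fin n' → Fin m) (p : Fin n') (i : Fin m) :
    A.submatrix (Function.update j p i) q.succAbove =
    (A.submatrix j q.succAbove).updateRow p (fun c => A i (q.succAbove c)) := by
  ext a b
  by_cases h : a = p
  · subst h; simp
  · simp [h]

lemma px_bound2 {m r : ℕ} (A : Matrix (Fin m) (Fin (r + 2 + 1)) ℤ) (q : Fin (r + 2 + 1))
    (hfull : ∀ w, (∀ i, rowL A i w = 0) → w = 0)
    (T : Fin m → Prop) (b' : Fin m → ℤ) (hb : ∀ i, 0 ≤ b' i)
    (hR : ∀ u : Fin (r + 2 + 1) → ℤ, (∀ i, rowL A i (fun c => (u c : ℝ)) ≤ b' i) →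
      (∀ i, T i → 0 ≤ rowL A i (fun c => (u c : ℝ))) → u = 0)
    (y : Fin (r + 2 + 1) → ℝ) (hy1 : ∀ i, rowL A i y ≤ b' i) (hy2 : ∀ i, T i → 0 ≤ rowL A i y)
    (hyq : y q ≠ 0)
    (hk : Module.finrank ℝ (kerAt (rowL A) y) = 2 + 1) :
    |y q| < 3 / 2 * (maxMinor A (r + 2) : ℝ) := by
  obtain ⟨j, hj, hD, hmax⟩ := px_max A q y (px_select A hfull q y hyq (add_comm r 2) hk)
  set D : ℝ := ((A.submatrix j q.succAbove).det : ℝ) with hDdef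
  have hDne : D ≠ 0 := Int.cast_ne_zero.2 hD
  have hD' : 0 < |D| := abs_pos.2 hDne
  set d : Fin (r + 2) → Fin m → ℝ := fun p i =>
    ((A.submatrix (Function.update j p i) q.succAbove).det : ℝ) with hd
  have hdle : ∀ p : Fin (r + 2), p.val < 2 → ∀ i, |d p i / D| ≤ 1 := by
    intro p0 hp0 i
    rw [abs_div, div_le_one hD']
    apply hmax
    intro p hp
    have : p ≠ p0 := by rintro rfl; omega
    simpa [this] using hj p hp
  have h01 : (0 : Fin (r + 2)) ≠ 1 := by simp
  have hdet2 : ∀ i k, |d 0 i / D * (d 1 k / D) - d 1 i / D * (d 0 k / D)| ≤ 1 := by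
    intro i k
    have h1 := px_det2 (A.submatrix j q.succAbove) 0 1 h01 (fun c => A i (q.succAbove c))
      (fun c => A k (q.succAbove c))
    simp only [← px_upd] at h1
    have h2 := congrArg (Int.cast : ℤ → ℝ) h1
    simp only [Int.cast_mul, Int.cast_sub] at h2
    have h3 : |((A.submatrix (Function.update (Function.update j 0 i) 1 k)
        q.succAbove).det : ℝ)| ≤ |D| := by
      apply hmax
      intro p hp
      have e1 : p ≠ 0 := by rintro rfl; simp at hp
      have e2 : p ≠ 1 := by rintro rfl; simp at hp
      simpa [e1, e2] using hj p hp
    have h4 : d 0 i / D * (d 1 k / D) - d 1 i / D * (d 0 k / D) =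
        ((A.submatrix (Function.update (Function.update j 0 i) 1 k) q.succAbove).det : ℝ) / D := by
      field_simp
      rw [← hDdef] at h2
      simp only [hd]
      linarith
    rw [h4, abs_div, div_le_one hD']
    exact h3
  obtain ⟨hSm, hSv⟩ := px_area (fun i => d 0 i / D) (fun i => d 1 i / D)
    (hdle 0 (by simp)) (hdle 1 (by simp)) hdet2
  have hOv := px_vol (r := r) _ hSm hSv
  set O : Set (Fin (r + 2) → ℝ) := {v | (v 0, v 1) ∈ {v : ℝ × ℝ | ∀ i,
    |d 0 i / D * v.1 + d 1 i / D * v.2| < 1} ∧ ∀ p : Fin r, |v p.succ.succ| < 1} with hO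
  have hOmem : ∀ v, v ∈ O ↔ (∀ i, |d 0 i / D * v 0 + d 1 i / D * v 1| < 1) ∧
    ∀ p : Fin r, |v p.succ.succ| < 1 := fun v => Iff.rfl
  have hrow : ∀ i w, w q = 0 → (∀ p, rowL A (j p) y = 0 → rowL A (j p) w = 0) →
      rowL A i w = d 0 i / D * rowL A (j 0) w + d 1 i / D * rowL A (j 1) w := by
    intro i w hwq hw0
    have hc := px_cramer A q j i w hwq
    rw [Fin.sum_univ_succ, Fin.sum_univ_succ, Finset.sum_eq_zero] at hc
    · rw [← hDdef] at hc
      have hc' : D * rowL A i w = d 0 i * rowL A (j 0) w + (d 1 i * rowL A (j 1) w + 0) := hc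
      field_simp
      linarith
    · intro p _
      rw [hw0 _ (hj _ (by simp)), mul_zero]
  have hdself : ∀ p p', p ≠ p' → d p (j p') = 0 := by
    intro p p' hp
    simp only [hd]
    rw [Matrix.det_zero_of_row_eq (i := p) (j := p') hp (by ext c; simp [hp.symm])]
    simp
  have hdself' : ∀ p, d p (j p) = D := by
    intro p
    simp [hd, hDdef]
  have := px_contra A q T b' hb hR y hy1 hy2 hyq j hD O ?_ ?_ (8 / 3 * 2 ^ r) hOv (by positivity)
    ?_ ?_
  · have h2 := px_minor_le A q j
    rw [← hDdef] at this h2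
    have h3 : (0 : ℝ) < 2 ^ r := by positivity
    rw [pow_add] at this
    nlinarith
  · intro x hx z hz a b ha hb hab
    rw [hOmem] at hx hz ⊢
    have cvx : ∀ s t : ℝ, |s| < 1 → |t| < 1 → |a * s + b * t| < 1 := by
      intro s t hs ht
      rw [abs_lt] at *
      have := (convex_Ioo (-1 : ℝ) 1) hs ht ha hb hab
      simpa using this
    constructor
    · intro i
      have := cvx _ _ (hx.1 i) (hz.1 i)
      convert this using 2
      simp; ring
    · intro p
      have := cvx _ _ (hx.2 p) (hz.2 p)
      simpa using this
  · intro x hx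
    rw [hOmem] at hx ⊢
    constructor
    · intro i
      have := hx.1 i
      rw [← abs_neg] at this
      convert this using 2
      simp; ring
    · intro p
      simpa using hx.2 p
  · intro v hv p _
    rw [hOmem] at hv
    refine Fin.cases ?_ (fun p => Fin.cases ?_ (fun p => hv.2 p) p) p
    · have := hv.1 (j 0)
      rw [hdself', hdself 1 0 h01.symm, div_self hDne] at this
      simpa using this
    · have := hv.1 (j 1)
      rw [hdself', hdself 0 1 h01, div_self hDne] at this
      simpa using this
  · intro w hwq hw0 hw i
    rw [hOmem] at hw
    rw [hrow i w hwq hw0]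
    exact hw.1 i

end Bound2

section Final

lemma px_base {m n' : ℕ} (hn' : 1 ≤ n') (A : Matrix (Fin m) (Fin (n' + 1)) ℤ)
    (hfull : ∀ w, (∀ i, rowL A i w = 0) → w = 0)
    (T : Fin m → Prop) (b' : Fin m → ℤ) (hb : ∀ i, 0 ≤ b' i)
    (hR : ∀ u : Fin (n' + 1) → ℤ, (∀ i, rowL A i (fun c => (u c : ℝ)) ≤ b' i) →
      (∀ i, T i → 0 ≤ rowL A i (fun c => (u c : ℝ))) → u = 0)
    (hΔ : (0 : ℝ) < maxMinor A n') (q : Fin (n' + 1))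
    (y : Fin (n' + 1) → ℝ) (hy1 : ∀ i, rowL A i y ≤ b' i) (hy2 : ∀ i, T i → 0 ≤ rowL A i y)
    (hk : Module.finrank ℝ (kerAt (rowL A) y) ≤ 2) :
    |y q| < (maxMinor A n' : ℝ) := by
  by_cases hyq : y q = 0
  · rw [hyq, abs_zero]; exact hΔ
  have hpos : 0 < Module.finrank ℝ (kerAt (rowL A) y) := by
    rw [Module.finrank_pos_iff_exists_ne_zero]
    refine ⟨⟨y, self_mem_kerAt _ _⟩, fun h => hyq ?_⟩
    have : y = 0 := congrArg Subtype.val h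
    rw [this]; rfl
  exact px_bound1 (f := Module.finrank ℝ (kerAt (rowL A) y) - 1)
    (r := n' - (Module.finrank ℝ (kerAt (rowL A) y) - 1)) A q hfull T b' hb hR y hy1 hy2 hyq
    (by omega) (by omega) (by omega)

lemma px_base3 {m n' : ℕ} (A : Matrix (Fin m) (Fin (n' + 1)) ℤ)
    (hfull : ∀ w, (∀ i, rowL A i w = 0) → w = 0)
    (T : Fin m → Prop) (b' : Fin m → ℤ) (hb : ∀ i, 0 ≤ b' i)
    (hR : ∀ u : Fin (n' + 1) → ℤ, (∀ i, rowL A i (fun c => (u c : ℝ)) ≤ b' i) →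
      (∀ i, T i → 0 ≤ rowL A i (fun c => (u c : ℝ))) → u = 0)
    (hΔ : (0 : ℝ) < maxMinor A n') (q : Fin (n' + 1))
    (y : Fin (n' + 1) → ℝ) (hy1 : ∀ i, rowL A i y ≤ b' i) (hy2 : ∀ i, T i → 0 ≤ rowL A i y)
    (hk : Module.finrank ℝ (kerAt (rowL A) y) = 3) :
    |y q| < 3 / 2 * (maxMinor A n' : ℝ) := by
  by_cases hyq : y q = 0
  · rw [hyq, abs_zero]; positivity
  have hle : Module.finrank ℝ (kerAt (rowL A) y) ≤ n' + 1 := by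
    have := Submodule.finrank_le (kerAt (rowL A) y)
    simpa using this
  obtain ⟨r, rfl⟩ : ∃ r, n' = r + 2 := ⟨n' - 2, by omega⟩
  exact px_bound2 A q hfull T b' hb hR y hy1 hy2 hyq hk

lemma px_ind {m n' : ℕ} (hn' : 1 ≤ n') (A : Matrix (Fin m) (Fin (n' + 1)) ℤ)
    (hfull : ∀ w, (∀ i, rowL A i w = 0) → w = 0)
    (T : Fin m → Prop) (b' : Fin m → ℤ) (hb : ∀ i, 0 ≤ b' i)
    (hR : ∀ u : Fin (n' + 1) → ℤ, (∀ i, rowL A i (fun c => (u c : ℝ)) ≤ b' i) →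
      (∀ i, T i → 0 ≤ rowL A i (fun c => (u c : ℝ))) → u = 0)
    (hΔ : (0 : ℝ) < maxMinor A n') (q : Fin (n' + 1)) (k : ℕ) :
    2 ≤ k → ∀ y : Fin (n' + 1) → ℝ, (∀ i, rowL A i y ≤ b' i) → (∀ i, T i → 0 ≤ rowL A i y) →
    Module.finrank ℝ (kerAt (rowL A) y) ≤ k → |y q| < (k : ℝ) / 2 * (maxMinor A n' : ℝ) := by
  induction k using Nat.strong_induction_on with
  | _ k ih =>
  intro hk2 y hy1 hy2 hk
  rcases Nat.lt_or_ge (Module.finrank ℝ (kerAt (rowL A) y)) 3 with h2 | h3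
  · have := px_base hn' A hfull T b' hb hR hΔ q y hy1 hy2 (by omega)
    have h : (2 : ℝ) ≤ k := by exact_mod_cast hk2
    nlinarith
  rcases Nat.lt_or_ge (Module.finrank ℝ (kerAt (rowL A) y)) k with hlt | hge
  · have := ih (k - 1) (by omega) (by omega) y hy1 hy2 (by omega)
    have h : ((k - 1 : ℕ) : ℝ) ≤ k := by exact_mod_cast Nat.sub_le k 1
    nlinarith
  have hkeq : Module.finrank ℝ (kerAt (rowL A) y) = k := le_antisymm hk hge
  rcases Nat.lt_or_ge k 4 with h4 | h4
  · have h3 : k = 3 := by omega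
    have := px_base3 A hfull T b' hb hR hΔ q y hy1 hy2 (by omega)
    rw [h3]; exact_mod_cast this
  obtain ⟨k, rfl⟩ : ∃ k', k = k' + 2 := ⟨k - 2, by omega⟩
  classical
  set ε : Fin m → ℝ := fun i => if 0 ≤ rowL A i y then 1 else -1 with hε
  have hε0 : ∀ i, ε i ≠ 0 := by
    intro i; simp only [hε]; split_ifs <;> norm_num
  have hker : ∀ u, kerAt (fun i => ε i • rowL A i) u = kerAt (rowL A) u := by
    intro u
    ext w
    simp [mem_kerAt, hε0]
  obtain ⟨u, hu0, hu1, hu2, hu3⟩ := px_decomp (fun i => ε i • rowL A i) (by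
      intro w hw
      apply hfull w
      intro i
      have := hw i
      simpa [hε0] using this) y (by
      intro i
      simp only [hε, LinearMap.smul_apply, smul_eq_mul]
      split_ifs with h
      · linarith
      · push Not at h; linarith) k (by rw [hker]; exact hkeq)
  rw [hker] at hu2 hu3
  have hcase : ∀ i, (0 ≤ rowL A i y ∧ 0 ≤ rowL A i u ∧ rowL A i u ≤ rowL A i y) ∨
      (rowL A i y < 0 ∧ rowL A i u ≤ 0 ∧ rowL A i y ≤ rowL A i u) := by
    intro i
    have h0 := hu0 i
    have h1 := hu1 i
    simp only [hε, LinearMap.smul_apply, smul_eq_mul] at h0 h1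
    split_ifs at h0 h1 with h
    · left; exact ⟨h, by linarith, by linarith⟩
    · right; push Not at h; exact ⟨h, by linarith, by linarith⟩
  have hb' : ∀ i, (0 : ℝ) ≤ b' i := fun i => by exact_mod_cast hb i
  have r1 := px_base hn' A hfull T b' hb hR hΔ q u (by
      intro i
      rcases hcase i with h | h
      · linarith [hy1 i]
      · linarith [hb' i]) (by
      intro i hi
      rcases hcase i with h | h
      · exact h.2.1
      · linarith [hy2 i hi]) hu2
  have r2 := ih k (by omega) (by omega) (y - u) (by
      intro i
      rw [map_sub]
      rcases hcase i with h | h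
      · linarith [hy1 i]
      · linarith [hb' i]) (by
      intro i hi
      rw [map_sub]
      rcases hcase i with h | h
      · linarith
      · linarith [hy2 i hi]) hu3
  have r3 : |y q| ≤ |u q| + |(y - u) q| := by
    have := abs_add_le (u q) ((y - u) q)
    simpa using this
  push_cast
  linarith

lemma px_pos {m n' : ℕ} (A : Matrix (Fin m) (Fin (n' + 1)) ℤ)
    (hfull : ∀ w, (∀ i, rowL A i w = 0) → w = 0) : (0 : ℝ) < maxMinor A n' := by
  set y : Fin (n' + 1) → ℝ := fun _ => 1 with hy
  have hyq : y 0 ≠ 0 := by simp [hy]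
  have hpos : 0 < Module.finrank ℝ (kerAt (rowL A) y) := by
    rw [Module.finrank_pos_iff_exists_ne_zero]
    refine ⟨⟨y, self_mem_kerAt _ _⟩, fun h => hyq ?_⟩
    have : y = 0 := congrArg Subtype.val h
    rw [this]; rfl
  have hle : Module.finrank ℝ (kerAt (rowL A) y) ≤ n' + 1 := by
    have := Submodule.finrank_le (kerAt (rowL A) y)
    simpa using this
  obtain ⟨j, -, hD⟩ := px_select (f := Module.finrank ℝ (kerAt (rowL A) y) - 1)
    (r := n' - (Module.finrank ℝ (kerAt (rowL A) y) - 1)) A hfull 0 y hyq (by omega) (by omega)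
  have h1 := px_minor_le A 0 j
  have : 0 < |((A.submatrix j (Fin.succAbove 0)).det : ℝ)| := abs_pos.2 (Int.cast_ne_zero.2 hD)
  linarith

lemma px_eps {m n : ℕ} (A : Matrix (Fin m) (Fin n) ℤ) (b : Fin m → ℤ) (x w : Fin n → ℝ)
    (hx : ∀ i, rowL A i x ≤ b i) (hw : ∀ i, rowL A i x = b i → rowL A i w ≤ 0) :
    ∀ᶠ ε in nhdsWithin (0 : ℝ) (Set.Ioi 0), ∀ i, rowL A i (x + ε • w) ≤ b i := by
  rw [Filter.eventually_all]
  intro i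
  simp only [map_add, map_smul, smul_eq_mul]
  rcases eq_or_lt_of_le (hx i) with h | h
  · filter_upwards [self_mem_nhdsWithin] with ε hε
    have := hw i h
    have hε' : 0 < ε := hε
    nlinarith
  · have ht : Filter.Tendsto (fun ε : ℝ => rowL A i x + ε * rowL A i w) (nhds 0)
        (nhds (rowL A i x + 0 * rowL A i w)) := by
      apply Continuous.tendsto
      fun_prop
    rw [zero_mul, add_zero] at ht
    have hev : ∀ᶠ ε in nhds (0 : ℝ), rowL A i x + ε * rowL A i w < b i :=
      (tendsto_order.1 ht).2 _ h
    exact (hev.filter_mono nhdsWithin_le_nhds).mono fun ε hε => le_of_lt hε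

end Final

/-- Main theorem: proximity bound `(n/2) · Δ_{n−1}(A)` for integral right-hand sides. -/
theorem stmt8 {m n : ℕ} (hn : 2 ≤ n) (A : Matrix (Fin m) (Fin n) ℤ)
    (hrank : (A.map (Int.cast : ℤ → ℚ)).rank = n)
    (b : Fin m → ℤ) (c : Fin n → ℚ)
    (P : Set (Fin n → ℝ))
    (hP : P = {x | ∀ i, (A.map (Int.cast : ℤ → ℝ)).mulVec x i ≤ (b i : ℝ)})
    (xs : Fin n → ℝ) (hxsP : xs ∈ P)
    (hvert : xs ∈ Set.extremePoints ℝ P)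
    (hopt : ∀ x ∈ P, ∑ i, (c i : ℝ) * x i ≤ ∑ i, (c i : ℝ) * xs i)
    (hfeas : ∃ z : Fin n → ℤ, (fun i => (z i : ℝ)) ∈ P) :
    ∃ z : Fin n → ℤ, (fun i => (z i : ℝ)) ∈ P ∧
      (∀ w : Fin n → ℤ, (fun i => (w i : ℝ)) ∈ P →
        ∑ i, (c i : ℝ) * (w i : ℝ) ≤ ∑ i, (c i : ℝ) * (z i : ℝ)) ∧
      ‖(fun i => xs i - (z i : ℝ))‖ < ((n : ℝ) / 2) * (maxMinor A (n - 1) : ℝ) := by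
  classical
  obtain ⟨n', rfl⟩ : ∃ n', n = n' + 1 := ⟨n - 1, by omega⟩
  have hPm : ∀ x, x ∈ P ↔ ∀ i, rowL A i x ≤ b i := by
    intro x; rw [hP]; rfl
  have hxs := (hPm xs).1 hxsP
  -- trivial kernel of tight rows
  have htight : ∀ w, (∀ i, rowL A i xs = b i → rowL A i w = 0) → w = 0 := by
    intro w hw
    have e1 := px_eps A b xs w hxs (fun i hi => (hw i hi).le)
    have e2 := px_eps A b xs (-w) hxs (fun i hi => by simp [hw i hi])
    obtain ⟨ε, ⟨h1, h2⟩, hε⟩ := ((e1.and e2).and self_mem_nhdsWithin).exists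
    have hε' : 0 < ε := hε
    have := (mem_extremePoints.1 hvert).2 _ ((hPm _).2 h1) _ ((hPm _).2 h2) (by
      refine ⟨1 / 2, 1 / 2, by norm_num, by norm_num, by norm_num, ?_⟩
      ext i
      simp
      ring)
    have h3 := this.1
    simp only [add_eq_left, smul_eq_zero] at h3
    exact h3.resolve_left hε'.ne'
  have hfull : ∀ w, (∀ i, rowL A i w = 0) → w = 0 := fun w hw => htight w fun i _ => hw i
  -- common denominator
  obtain ⟨D, hD0, e, he⟩ : ∃ D : ℝ, 0 < D ∧ ∃ e : Fin (n' + 1) → ℤ, ∀ i, D * (c i : ℝ) = e i := by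
    refine ⟨((∏ i, (c i).den : ℕ) : ℝ), ?_, ?_⟩
    · have : 0 < ∏ i, (c i).den := Finset.prod_pos fun i _ => (c i).den_pos
      exact_mod_cast this
    · have : ∀ i, ∃ e : ℤ, ((∏ i, (c i).den : ℕ) : ℝ) * (c i : ℝ) = e := by
        intro i
        obtain ⟨k, hk⟩ := Finset.dvd_prod_of_mem (fun i => (c i).den) (Finset.mem_univ i)
        refine ⟨k * (c i).num, ?_⟩
        rw [hk]
        have h1 : (c i) * ((c i).den : ℚ) = (c i).num := Rat.mul_den_eq_num (c i)
        have h2 : (c i : ℝ) * ((c i).den : ℝ) = (c i).num := by exact_mod_cast h1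
        push_cast
        rw [← h2]; ring
      choose e he using this
      exact ⟨e, he⟩
  have hE : ∀ x : Fin (n' + 1) → ℝ, D * ∑ i, (c i : ℝ) * x i = ∑ i, (e i : ℝ) * x i := by
    intro x
    rw [Finset.mul_sum]
    exact Finset.sum_congr rfl fun i _ => by rw [← he]; ring
  have hEz : ∀ z : Fin (n' + 1) → ℤ, D * ∑ i, (c i : ℝ) * (z i : ℝ) =
      ((∑ i, e i * z i : ℤ) : ℝ) := by
    intro z
    rw [hE fun i => (z i : ℝ)]
    push_cast; rfl
  obtain ⟨M, ⟨z0, hz0P, hz0M⟩, hMmax⟩ := Int.exists_greatest_of_bdd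
    (P := fun v => ∃ z : Fin (n' + 1) → ℤ, (fun i => (z i : ℝ)) ∈ P ∧ ∑ i, e i * z i = v) (by
      refine ⟨⌈D * ∑ i, (c i : ℝ) * xs i⌉, ?_⟩
      rintro v ⟨z, hz, rfl⟩
      have h1 := mul_le_mul_of_nonneg_left (hopt _ hz) hD0.le
      rw [hEz] at h1
      exact_mod_cast h1.trans (Int.le_ceil _)) (by
      obtain ⟨z, hz⟩ := hfeas
      exact ⟨_, z, hz, rfl⟩)
  set TS : Finset (Fin m) := Finset.univ.filter fun i => rowL A i xs = b i with hTS
  have hfz : ∀ z : Fin (n' + 1) → ℤ, (fun i => (z i : ℝ)) ∈ P →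
      ∀ i, 0 ≤ b i - ∑ k, A i k * z k := by
    intro z hz i
    have := (hPm _).1 hz i
    rw [rowL_int] at this
    have : ∑ k, A i k * z k ≤ b i := by exact_mod_cast this
    omega
  obtain ⟨s, ⟨z, hzP, hzM, hzs⟩, hsmin⟩ := Int.exists_least_of_bdd
    (P := fun v => ∃ z : Fin (n' + 1) → ℤ, (fun i => (z i : ℝ)) ∈ P ∧ ∑ i, e i * z i = M ∧
      ∑ i ∈ TS, (b i - ∑ k, A i k * z k) = v) (by
      refine ⟨0, ?_⟩
      rintro v ⟨z, hz, -, rfl⟩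
      exact Finset.sum_nonneg fun i _ => hfz z hz i) ⟨_, z0, hz0P, hz0M, rfl⟩
  refine ⟨z, hzP, ?_, ?_⟩
  · intro w hw
    have h1 := hMmax _ ⟨w, hw, rfl⟩
    rw [← hzM] at h1
    have h2 : ((∑ i, e i * w i : ℤ) : ℝ) ≤ ((∑ i, e i * z i : ℤ) : ℝ) := by exact_mod_cast h1
    rw [← hEz, ← hEz] at h2
    exact le_of_mul_le_mul_left h2 hD0
  set b' : Fin m → ℤ := fun i => b i - ∑ k, A i k * z k with hb'
  have hR : ∀ u : Fin (n' + 1) → ℤ, (∀ i, rowL A i (fun c => (u c : ℝ)) ≤ b' i) →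
      (∀ i, rowL A i xs = b i → 0 ≤ rowL A i (fun c => (u c : ℝ))) → u = 0 := by
    intro u hu1 hu2
    have hzu : (fun i => ((z + u) i : ℝ)) = (fun i => (z i : ℝ)) + (fun i => (u i : ℝ)) := by
      ext i; simp
    have hzuP : (fun i => ((z + u) i : ℝ)) ∈ P := by
      rw [hPm]
      intro i
      rw [hzu, map_add]
      have := hu1 i
      simp only [hb', Int.cast_sub, ← rowL_int] at this
      linarith
    have hcu : 0 ≤ ∑ i, (c i : ℝ) * (u i : ℝ) := by
      have e1 := px_eps A b xs (-(fun i => (u i : ℝ))) hxs (fun i hi => by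
        rw [map_neg]; linarith [hu2 i hi])
      obtain ⟨ε, h1, hε⟩ := (e1.and self_mem_nhdsWithin).exists
      have hε' : 0 < ε := hε
      have h2 := hopt _ ((hPm _).2 h1)
      have h3 : ∑ i, (c i : ℝ) * (xs + ε • -(fun i => (u i : ℝ))) i =
          ∑ i, (c i : ℝ) * xs i - ε * ∑ i, (c i : ℝ) * (u i : ℝ) := by
        rw [Finset.mul_sum, ← Finset.sum_sub_distrib]
        refine Finset.sum_congr rfl fun i _ => ?_
        simp
        ring
      rw [h3] at h2
      have h4 : 0 ≤ ε * ∑ i, (c i : ℝ) * (u i : ℝ) := by linarith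
      exact nonneg_of_mul_nonneg_right h4 hε'
    have hEu : 0 ≤ ∑ i, e i * u i := by
      have := mul_nonneg hD0.le hcu
      rw [hEz] at this
      exact_mod_cast this
    have hEzu : ∑ i, e i * (z + u) i = ∑ i, e i * z i + ∑ i, e i * u i := by
      rw [← Finset.sum_add_distrib]
      exact Finset.sum_congr rfl fun i _ => by simp [mul_add]
    have hMzu := hMmax _ ⟨z + u, hzuP, rfl⟩
    have hmin := hsmin _ ⟨z + u, hzuP, by omega, rfl⟩
    have hzs' : ∑ i ∈ TS, (b i - ∑ k, A i k * z k) = s := hzs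
    have hmin' : s ≤ ∑ i ∈ TS, (b i - ∑ k, A i k * (z + u) k) := hmin
    have hsl : ∑ i ∈ TS, (b i - ∑ k, A i k * (z + u) k) =
        ∑ i ∈ TS, (b i - ∑ k, A i k * z k) - ∑ i ∈ TS, ∑ k, A i k * u k := by
      rw [← Finset.sum_sub_distrib]
      refine Finset.sum_congr rfl fun i _ => ?_
      simp only [Pi.add_apply, mul_add, Finset.sum_add_distrib]
      ring
    have hnn : ∀ i ∈ TS, 0 ≤ ∑ k, A i k * u k := by
      intro i hi
      have := hu2 i (by simpa [hTS] using hi)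
      rw [rowL_int] at this
      exact_mod_cast this
    have hz : ∑ i ∈ TS, ∑ k, A i k * u k = 0 :=
      le_antisymm (by linarith) (Finset.sum_nonneg hnn)
    rw [Finset.sum_eq_zero_iff_of_nonneg hnn] at hz
    have h0 := htight (fun i => (u i : ℝ)) (by
      intro i hi
      rw [rowL_int, hz i (by simpa [hTS] using hi)]
      simp)
    ext i
    have := congrFun h0 i
    simpa using this
  have hΔ := px_pos A hfull
  have hsub : (fun i => xs i - (z i : ℝ)) = xs - (fun i => (z i : ℝ)) := rfl
  have hbr : ∀ i, (b' i : ℝ) = b i - rowL A i (fun i => (z i : ℝ)) := by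
    intro i; rw [rowL_int]; simp [hb']
  have hfin := fun q => px_ind (by omega : 1 ≤ n') A hfull (fun i => rowL A i xs = b i) b'
    (hfz z hzP) hR hΔ q (n' + 1) hn (xs - (fun i => (z i : ℝ))) (by
      intro i
      rw [map_sub, hbr]
      linarith [hxs i]) (by
      intro i hi
      rw [map_sub, hi]
      linarith [(hPm _).1 hzP i]) (by
      have := Submodule.finrank_le (kerAt (rowL A) (xs - (fun i => (z i : ℝ))))
      simpa using this)
  rw [Nat.add_sub_cancel, pi_norm_lt_iff (by positivity)]
  intro q
  rw [Real.norm_eq_abs]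
  exact hfin q
end

section
/- Let A ∈ ℤ^{m×n}, b ∈ ℚ^m, c ∈ ℚⁿ, with A of full column rank. Let x* be an optimal vertex of max{cᵀx : Ax ≤ b}. If the integer program max{cᵀx : Ax ≤ b, x ∈ ℤⁿ} is feasible, then it has an optimal solution z* with ‖x* − z*‖_∞ ≤ n · max{Δ_k(A) : k = 1,…,n}. -/
open Matrix

noncomputable def tightK {m n : ℕ} (L : Fin m → (Fin n → ℝ) →ₗ[ℝ] ℝ) (v : Fin n → ℝ) :
    Submodule ℝ (Fin n → ℝ) where
  carrier := {u | ∀ i, L i v = 0 → L i u = 0}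
  zero_mem' := by intro i _; simp
  add_mem' := by
    intro a b ha hb i hi
    simp [ha i hi, hb i hi]
  smul_mem' := by
    intro c a ha i hi
    simp [ha i hi]

lemma mem_tightK {m n : ℕ} {L : Fin m → (Fin n → ℝ) →ₗ[ℝ] ℝ} {v u : Fin n → ℝ} :
    u ∈ tightK L v ↔ ∀ i, L i v = 0 → L i u = 0 := Iff.rfl

lemma step {m n : ℕ} (L : Fin m → (Fin n → ℝ) →ₗ[ℝ] ℝ) (v w : Fin n → ℝ)
    (hv : ∀ i, L i v ≤ 0) (hw : w ∈ tightK L v) (hpos : ∃ i, 0 < L i w) :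
    ∃ t : ℝ, 0 ≤ t ∧ (∀ i, L i (v + t • w) ≤ 0) ∧
      Module.finrank ℝ (tightK L (v + t • w)) < Module.finrank ℝ (tightK L v) := by
  obtain ⟨i₁, hi₁⟩ := hpos
  obtain ⟨i₀, hi₀, hmin⟩ := Finset.exists_min_image (Finset.univ.filter fun i => 0 < L i w)
    (fun i => (- L i v) / L i w) ⟨i₁, by simpa using hi₁⟩
  simp only [Finset.mem_filter, Finset.mem_univ, true_and] at hi₀ hmin
  have ht : 0 ≤ (- L i₀ v) / L i₀ w := div_nonneg (by linarith [hv i₀]) hi₀.le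
  refine ⟨(- L i₀ v) / L i₀ w, ht, ?_, ?_⟩
  · intro i
    simp only [map_add, map_smul, smul_eq_mul]
    by_cases h : 0 < L i w
    · have := hmin i h
      rw [le_div_iff₀ h] at this
      linarith
    · have := mul_nonneg ht (by linarith : 0 ≤ - L i w)
      linarith [hv i]
  · apply Submodule.finrank_lt_finrank_of_lt
    rw [SetLike.lt_iff_le_and_exists]
    refine ⟨?_, w, hw, ?_⟩
    · intro u hu i hi
      apply hu i
      simp [hi, hw i hi]
    · intro h
      have := h i₀ (by simp; field_simp; ring)
      linarith

lemma decomp {m n : ℕ} (L : Fin m → (Fin n → ℝ) →ₗ[ℝ] ℝ) (D : ℝ)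
    (hinj : ∀ v, (∀ i, L i v = 0) → v = 0)
    (hint : ∀ v : Fin n → ℝ, v ≠ 0 → ∃ h : Fin n → ℤ, h ≠ 0 ∧ (∀ j, |(h j : ℝ)| ≤ D) ∧
      (fun j => (h j : ℝ)) ∈ tightK L v) (d : ℕ) :
    ∀ v : Fin n → ℝ, (∀ i, L i v ≤ 0) → Module.finrank ℝ (tightK L v) ≤ d →
    ∃ (l : Fin d → ℝ) (g : Fin d → Fin n → ℤ), (∀ k, 0 ≤ l k) ∧
      (∀ k j, |(g k j : ℝ)| ≤ D) ∧ (∀ k i, L i (fun j => (g k j : ℝ)) ≤ 0) ∧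
      v = ∑ k, l k • (fun j => (g k j : ℝ)) := by
  have hself : ∀ v, v ∈ tightK L v := fun v i hi => hi
  -- extreme rays
  have hray : ∀ v : Fin n → ℝ, v ≠ 0 → (∀ i, L i v ≤ 0) → ∃ h : Fin n → ℤ, h ≠ 0 ∧
      (∀ j, |(h j : ℝ)| ≤ D) ∧ (∀ i, L i (fun j => (h j : ℝ)) ≤ 0) ∧
      (fun j => (h j : ℝ)) ∈ tightK L v := by
    intro v
    induction hN : Module.finrank ℝ (tightK L v) using Nat.strong_induction_on generalizing v with
    | _ N ih =>
    intro hv0 hv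
    by_cases hall : ∀ w ∈ tightK L v, ∃ s : ℝ, w = s • v
    · obtain ⟨h, h0, hD, hK⟩ := hint v hv0
      obtain ⟨s, hs⟩ := hall _ hK
      rcases le_total 0 s with hs0 | hs0
      · refine ⟨h, h0, hD, ?_, hK⟩
        intro i
        rw [hs, map_smul, smul_eq_mul]
        exact mul_nonpos_of_nonneg_of_nonpos hs0 (hv i)
      · have e : (fun j => (((-h) j : ℤ) : ℝ)) = -(fun j => (h j : ℝ)) := by
          ext j; simp
        refine ⟨-h, neg_ne_zero.2 h0, ?_, ?_, ?_⟩
        · intro j; simpa using hD j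
        · intro i
          rw [e, hs, map_neg, map_smul, smul_eq_mul]
          have := mul_nonneg_of_nonpos_of_nonpos hs0 (hv i)
          linarith
        · rw [e]; exact neg_mem hK
    · push Not at hall
      obtain ⟨w, hw, hws⟩ := hall
      obtain ⟨w', hw', hws', hpos⟩ : ∃ w' ∈ tightK L v, (∀ s : ℝ, w' ≠ s • v) ∧
          ∃ i, 0 < L i w' := by
        have : ∃ i, L i w ≠ 0 := by
          by_contra! hc
          exact hws 0 (by simpa using hinj w hc)
        obtain ⟨i, hi⟩ := this
        rcases lt_or_gt_of_ne hi with hi | hi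
        · refine ⟨-w, neg_mem hw, ?_, i, by simpa using hi⟩
          intro s hs
          exact hws (-s) (by rw [neg_smul, ← hs, neg_neg])
        · exact ⟨w, hw, hws, i, hi⟩
      obtain ⟨t, ht, hC, hlt⟩ := step L v w' hv hw' hpos
      have hne : v + t • w' ≠ 0 := by
        intro h0
        by_cases ht0 : t = 0
        · apply hv0; simpa [ht0] using h0
        · apply hws' (-t⁻¹)
          have : v = -(t • w') := eq_neg_of_add_eq_zero_left h0
          rw [this, smul_neg, neg_smul, neg_neg, smul_smul, inv_mul_cancel₀ ht0, one_smul]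
      obtain ⟨h, h0, hD, hLC, hK⟩ := ih _ (hN ▸ hlt) (v + t • w') rfl hne hC
      refine ⟨h, h0, hD, hLC, ?_⟩
      intro i hi
      apply hK i
      simp [hi, hw' i hi]
  induction d with
  | zero =>
    intro v hv hd
    have hb : tightK L v = ⊥ := Submodule.finrank_eq_zero.1 (Nat.le_zero.1 hd)
    have : v ∈ (⊥ : Submodule ℝ (Fin n → ℝ)) := hb ▸ hself v
    refine ⟨fun _ => 0, fun _ _ => 0, by simp, fun k => k.elim0, fun k => k.elim0, ?_⟩
    simpa using this
  | succ d ih =>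
    intro v hv hd
    by_cases hv0 : v = 0
    · obtain ⟨l, g, h1, h2, h3, h4⟩ := ih 0 (by simp) (by
        have : tightK L (0 : Fin n → ℝ) = ⊥ := by
          rw [eq_bot_iff]
          intro u hu
          exact hinj u (fun i => hu i (by simp))
        rw [this]; simp)
      have hD : 0 ≤ D ∨ n = 0 := by
        rcases Nat.eq_zero_or_pos n with h | h
        · exact Or.inr h
        · left
          obtain ⟨h', _, hD, _⟩ := hint (fun _ => 1) (by
            intro hc; have := congrFun hc ⟨0, h⟩; simp at this)
          exact (abs_nonneg _).trans (hD ⟨0, h⟩)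
      refine ⟨Fin.cons 0 l, Fin.cons 0 g, ?_, ?_, ?_, ?_⟩
      · intro k; refine Fin.cases ?_ ?_ k <;> simp [h1]
      · intro k j
        rcases hD with hD | hD
        · refine Fin.cases ?_ ?_ k
          · simpa using hD
          · intro k; simpa using h2 k j
        · subst hD; exact j.elim0
      · intro k i
        refine Fin.cases ?_ ?_ k
        · have : (fun j => (((Fin.cons 0 g : Fin (d+1) → Fin n → ℤ) 0 j : ℤ) : ℝ)) = 0 := by
            ext j; simp
          rw [this]; simp
        · intro k; simpa using h3 k i
      · rw [Fin.sum_univ_succ]; simp only [Fin.cons_zero, Fin.cons_succ, zero_smul, zero_add]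
        rw [← h4, hv0]
    · obtain ⟨h, h0, hD, hC, hK⟩ := hray v hv0 hv
      have hpos : ∃ i, 0 < L i (-(fun j => (h j : ℝ))) := by
        by_contra! hc
        apply h0
        have := hinj (fun j => (h j : ℝ)) (fun i => le_antisymm (hC i) (by simpa using hc i))
        ext j
        simpa using congrFun this j
      obtain ⟨t, ht, hC', hlt⟩ := step L v _ hv (neg_mem hK) hpos
      obtain ⟨l, g, h1, h2, h3, h4⟩ := ih _ hC' (by omega)
      refine ⟨Fin.cons t l, Fin.cons h g, ?_, ?_, ?_, ?_⟩
      · intro k; refine Fin.cases ?_ ?_ k <;> simp [h1, ht]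
      · intro k j
        refine Fin.cases ?_ ?_ k
        · simpa using hD j
        · intro k; simpa using h2 k j
      · intro k i
        refine Fin.cases ?_ ?_ k
        · simpa using hC i
        · intro k; simpa using h3 k i
      · rw [Fin.sum_univ_succ]; simp only [Fin.cons_zero, Fin.cons_succ]
        rw [← h4]; simp

lemma real_inj {m n : ℕ} (A : Matrix (Fin m) (Fin n) ℤ)
    (hrank : (A.map (Int.cast : ℤ → ℚ)).rank = n) (v : Fin n → ℝ)
    (hv : ∀ i, (A.map (Int.cast : ℤ → ℝ)).mulVec v i = 0) : v = 0 := by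
  have hs : Function.Surjective (A.map (Int.cast : ℤ → ℚ))ᵀ.mulVec := by
    have h1 : Module.finrank ℚ (LinearMap.range (A.map (Int.cast : ℤ → ℚ))ᵀ.mulVecLin) = n := by
      have := Matrix.rank_transpose (A.map (Int.cast : ℤ → ℚ))
      rw [hrank] at this
      exact this
    have h2 : LinearMap.range (A.map (Int.cast : ℤ → ℚ))ᵀ.mulVecLin = ⊤ :=
      Submodule.eq_top_of_finrank_eq (by rw [h1]; simp)
    exact LinearMap.range_eq_top.1 h2
  obtain ⟨B, hB⟩ := Matrix.mulVec_surjective_iff_exists_right_inverse.1 hs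
  have hB' : Bᵀ * A.map (Int.cast : ℤ → ℚ) = 1 := by
    have := congrArg Matrix.transpose hB
    simpa [Matrix.transpose_mul] using this
  have hR : (Bᵀ.map (Rat.castHom ℝ)) * A.map (Int.cast : ℤ → ℝ) = 1 := by
    have := congrArg (fun M => M.map (Rat.castHom ℝ)) hB'
    simp only [Matrix.map_mul] at this
    rw [Matrix.map_one _ (map_zero _) (map_one _)] at this
    rw [← this]
    congr 1
  have hv' : (A.map (Int.cast : ℤ → ℝ)).mulVec v = 0 := funext hv
  have := congrArg (fun M => M.mulVec v) hR
  simp only [← Matrix.mulVec_mulVec, hv', Matrix.mulVec_zero, Matrix.one_mulVec] at this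
  exact this.symm

lemma minor_le {m n k : ℕ} (A : Matrix (Fin m) (Fin n) ℤ) (p : Fin k → Fin m) (q : Fin k → Fin n)
    (hp : Function.Injective p) (hq : Function.Injective q) (hk : 1 ≤ k) (hkn : k ≤ n) :
    ((A.submatrix p q).det).natAbs ≤ (Finset.Icc 1 n).sup (maxMinor A) := by
  refine le_trans ?_ (Finset.le_sup (f := maxMinor A) (Finset.mem_Icc.2 ⟨hk, hkn⟩))
  exact Finset.le_sup (f := fun p : (Fin k → Fin m) × (Fin k → Fin n) =>
    ((A.submatrix p.1 p.2).det).natAbs) (b := (p, q)) (by simp [hp, hq])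

lemma exists_int_ray {m n : ℕ} (A : Matrix (Fin m) (Fin n) ℤ)
    (hinj : ∀ v : Fin n → ℝ, (∀ i, (A.map (Int.cast : ℤ → ℝ)).mulVec v i = 0) → v = 0)
    (v : Fin n → ℝ) (hv : v ≠ 0) :
    ∃ h : Fin n → ℤ, h ≠ 0 ∧
      (∀ j, |(h j : ℝ)| ≤ (((Finset.Icc 1 n).sup (maxMinor A) : ℕ) : ℝ)) ∧
      ∀ i, (A.map (Int.cast : ℤ → ℝ)).mulVec v i = 0 →
        (A.map (Int.cast : ℤ → ℝ)).mulVec (fun j => (h j : ℝ)) i = 0 := by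
  classical
  set R := A.map (Int.cast : ℤ → ℝ) with hR
  have hspan : Submodule.span ℝ (Set.range R.row) = ⊤ := by
    apply Submodule.eq_top_of_finrank_eq
    rw [← Matrix.rank_eq_finrank_span_row]
    rw [Matrix.rank, LinearMap.finrank_range_of_inj]
    rw [← LinearMap.ker_eq_bot, LinearMap.ker_eq_bot']
    intro u hu
    exact hinj u (fun i => congrFun hu i)
  obtain ⟨T, hTs, -, hTspan, hTli⟩ := exists_linearIndepOn_extension (K := ℝ) (v := R.row)
    (s := ∅) (t := {i | R.mulVec v i = 0}) (linearIndepOn_empty _ _) (Set.empty_subset _)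
  obtain ⟨I, -, hTI, hIspan, hIli⟩ := exists_linearIndepOn_extension (K := ℝ) (v := R.row)
    (s := T) (t := Set.univ) hTli (Set.subset_univ _)
  have hItop : Submodule.span ℝ (R.row '' I) = ⊤ := by
    rw [eq_top_iff, ← hspan, Submodule.span_le, ← Set.image_univ]
    exact hIspan
  -- a vector killed by a set of rows is killed by their span
  have hkill : ∀ (u : Fin n → ℝ) (S : Set (Fin m)), (∀ i ∈ S, R.mulVec u i = 0) →
      ∀ x ∈ Submodule.span ℝ (R.row '' S), x ⬝ᵥ u = 0 := by
    intro u S hS x hx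
    induction hx using Submodule.span_induction with
    | mem x hx =>
      obtain ⟨i, hi, rfl⟩ := hx
      exact hS i hi
    | zero => simp
    | add x y _ _ hx hy => rw [add_dotProduct, hx, hy, add_zero]
    | smul a x _ hx => rw [smul_dotProduct, hx, smul_zero]
  obtain ⟨a, haI, haT⟩ : ∃ a ∈ I, a ∉ T := by
    by_contra! hc
    apply hv
    apply hinj
    intro i
    refine hkill v T (fun i hi => hTs hi) (R.row i) ?_
    have hIT : I ⊆ T := hc
    have : Submodule.span ℝ (R.row '' I) ≤ Submodule.span ℝ (R.row '' T) :=
      Submodule.span_mono (Set.image_mono hIT)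
    rw [hItop] at this
    exact this trivial
  have hcard : Fintype.card I = n := by
    have h1 := finrank_span_eq_card (R := ℝ) (b := fun i : I => R.row i) hIli
    have h2 : Set.range (fun i : I => R.row i) = R.row '' I := by
      ext; simp
    rw [h2, hItop] at h1
    simpa using h1.symm
  let e : Fin n ≃ I := (Fintype.equivFinOfCardEq hcard).symm
  let f : Fin n → Fin m := fun k => (e k : Fin m)
  have hf : Function.Injective f := Subtype.val_injective.comp e.injective
  let M : Matrix (Fin n) (Fin n) ℤ := A.submatrix f id
  have hdet : M.det ≠ 0 := by
    have hli : LinearIndependent ℝ (M.map (Int.cast : ℤ → ℝ)).row :=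
      hIli.comp e e.injective
    have hu := Matrix.linearIndependent_rows_iff_isUnit.1 hli
    rw [Matrix.isUnit_iff_isUnit_det] at hu
    intro h0
    have : (M.map (Int.cast : ℤ → ℝ)).det = (M.det : ℝ) := (Int.cast_det M).symm
    rw [this, h0] at hu
    simp at hu
  let k := e.symm ⟨a, haI⟩
  have hfk : f k = a := by simp [f, k]
  let h : Fin n → ℤ := fun j => M.adjugate j k
  have hMh : ∀ i, M.mulVec h i = if i = k then M.det else 0 := by
    intro i
    have := congrFun (congrFun (Matrix.mul_adjugate M) i) k
    rw [Matrix.mul_apply] at this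
    simp only [Matrix.smul_apply, Matrix.one_apply, smul_eq_mul, mul_ite, mul_one, mul_zero] at this
    exact this
  have hcast : ∀ i, R.mulVec (fun j => (h j : ℝ)) i = ((A.mulVec h i : ℤ) : ℝ) := by
    intro i
    simp [Matrix.mulVec, dotProduct, hR]
  refine ⟨h, ?_, ?_, ?_⟩
  · intro h0
    have := hMh k
    rw [h0] at this
    simp at this
    exact hdet this.symm
  · intro j
    have : (h j).natAbs ≤ (Finset.Icc 1 n).sup (maxMinor A) := by
      clear_value k e
      clear hcast hMh
      rcases n with _ | n
      · exact j.elim0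
      · rcases n with _ | n
        · have h1 : h j = 1 := by
            simp only [h]
            rw [show j = k from Fin.ext (by omega)]
            simp
          rw [h1]
          refine le_trans ?_ (minor_le A f id hf Function.injective_id le_rfl le_rfl)
          have : M.det.natAbs ≠ 0 := by simpa using hdet
          simp only [M] at this
          simp only [Int.natAbs_one]
          omega
        · simp only [h]
          rw [Matrix.adjugate_fin_succ_eq_det_submatrix, Int.natAbs_mul, Int.natAbs_pow]
          simp only [Int.natAbs_neg, Int.natAbs_one, one_pow, one_mul]
          simp only [M, Matrix.submatrix_submatrix]
          exact minor_le A _ _ (hf.comp Fin.succAbove_right_injective)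
            (Function.injective_id.comp Fin.succAbove_right_injective) (by omega) (by omega)
    rw [← Int.cast_abs, Int.abs_eq_natAbs]
    exact_mod_cast this
  · intro i hi
    refine hkill _ T ?_ (R.row i) (hTspan ⟨i, hi, rfl⟩)
    intro t ht
    have hk : e.symm ⟨t, hTI ht⟩ ≠ k := by
      intro hc
      have := e.symm.injective hc
      simp at this
      exact haT (this ▸ ht)
    have := hMh (e.symm ⟨t, hTI ht⟩)
    rw [if_neg hk] at this
    rw [hcast]
    have h2 : A.mulVec h t = M.mulVec h (e.symm ⟨t, hTI ht⟩) := by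
      simp [Matrix.mulVec, M, f, dotProduct]
    rw [h2, this]; simp

lemma exists_opt {n : ℕ} (c : Fin n → ℚ) (S : Set (Fin n → ℤ)) (hS : S.Nonempty) (B : ℝ)
    (hB : ∀ w ∈ S, ∑ i, (c i : ℝ) * (w i : ℝ) ≤ B) :
    ∃ z ∈ S, ∀ w ∈ S, ∑ i, (c i : ℝ) * (w i : ℝ) ≤ ∑ i, (c i : ℝ) * (z i : ℝ) := by
  obtain ⟨D, hD, hc⟩ : ∃ D : ℕ, 0 < D ∧ ∀ i, ∃ a : ℤ, (D : ℝ) * (c i : ℝ) = a := by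
    refine ⟨∏ i, (c i).den, Finset.prod_pos fun i _ => (c i).den_pos, ?_⟩
    intro i
    obtain ⟨q, hq⟩ := Finset.dvd_prod_of_mem (fun i => (c i).den) (Finset.mem_univ i)
    refine ⟨q * (c i).num, ?_⟩
    rw [hq]
    have : ((c i).den : ℝ) * (c i : ℝ) = (c i).num := by
      exact_mod_cast Rat.den_mul_eq_num (c i)
    push_cast
    rw [← this]; ring
  choose a ha using hc
  have hD' : (0 : ℝ) < D := by exact_mod_cast hD
  have hval : ∀ w : Fin n → ℤ, (D : ℝ) * ∑ i, (c i : ℝ) * (w i : ℝ) = ((∑ i, a i * w i : ℤ) : ℝ) := by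
    intro w
    push_cast
    rw [Finset.mul_sum]
    refine Finset.sum_congr rfl fun i _ => ?_
    rw [← ha]; ring
  obtain ⟨w₀, hw₀⟩ := hS
  obtain ⟨u, ⟨z, hz, hzu⟩, hu⟩ := Int.exists_greatest_of_bdd
    (P := fun k => ∃ w ∈ S, ∑ i, a i * w i = k)
    ⟨⌊D * B⌋, by
      rintro k ⟨w, hw, rfl⟩
      rw [Int.le_floor, ← hval]
      exact mul_le_mul_of_nonneg_left (hB w hw) hD'.le⟩ ⟨_, w₀, hw₀, rfl⟩
  refine ⟨z, hz, fun w hw => ?_⟩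
  have := hu _ ⟨w, hw, rfl⟩
  rw [← hzu] at this
  have h2 : ((∑ i, a i * w i : ℤ) : ℝ) ≤ ((∑ i, a i * z i : ℤ) : ℝ) := by exact_mod_cast this
  rw [← hval, ← hval] at h2
  exact le_of_mul_le_mul_left h2 hD'

/-- Cook--Gerards--Schrijver--Tardos proximity theorem. -/
theorem stmt9 {m n : ℕ} (A : Matrix (Fin m) (Fin n) ℤ)
    (hrank : (A.map (Int.cast : ℤ → ℚ)).rank = n)
    (b : Fin m → ℚ) (c : Fin n → ℚ)
    (P : Set (Fin n → ℝ))
    (hP : P = {x | ∀ i, (A.map (Int.cast : ℤ → ℝ)).mulVec x i ≤ (b i : ℝ)})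
    (xs : Fin n → ℝ) (hxsP : xs ∈ P)
    (hvert : xs ∈ Set.extremePoints ℝ P)
    (hopt : ∀ x ∈ P, ∑ i, (c i : ℝ) * x i ≤ ∑ i, (c i : ℝ) * xs i)
    (hfeas : ∃ z : Fin n → ℤ, (fun i => (z i : ℝ)) ∈ P) :
    ∃ z : Fin n → ℤ, (fun i => (z i : ℝ)) ∈ P ∧
      (∀ w : Fin n → ℤ, (fun i => (w i : ℝ)) ∈ P →
        ∑ i, (c i : ℝ) * (w i : ℝ) ≤ ∑ i, (c i : ℝ) * (z i : ℝ)) ∧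
      ‖(fun i => xs i - (z i : ℝ))‖ ≤ (n : ℝ) * (((Finset.Icc 1 n).sup (maxMinor A) : ℕ) : ℝ) := by
  classical
  set Δ : ℝ := (((Finset.Icc 1 n).sup (maxMinor A) : ℕ) : ℝ) with hΔ
  have hinj := real_inj A hrank
  set R := A.map (Int.cast : ℤ → ℝ) with hR
  obtain ⟨z, hz, hzopt⟩ := exists_opt c {z | (fun i => (z i : ℝ)) ∈ P} hfeas _
    (fun w hw => hopt _ hw)
  simp only [Set.mem_ofPred_eq] at hz hzopt
  have memP : ∀ x, x ∈ P ↔ ∀ i, R.mulVec x i ≤ (b i : ℝ) := by intro x; rw [hP]; rfl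
  let zr : Fin n → ℝ := fun i => (z i : ℝ)
  let s : Fin m → ℝ := fun i => if R.mulVec zr i ≤ R.mulVec xs i then 1 else -1
  let r : Fin m → (Fin n → ℝ) →ₗ[ℝ] ℝ := fun i => (LinearMap.proj i).comp R.mulVecLin
  have hr : ∀ i x, r i x = R.mulVec x i := fun i x => rfl
  let L : Fin m → (Fin n → ℝ) →ₗ[ℝ] ℝ := fun i => s i • r i
  have hs0 : ∀ i, s i ≠ 0 := by intro i; simp only [s]; split_ifs <;> norm_num
  have hL0 : ∀ i x, L i x = 0 ↔ R.mulVec x i = 0 := by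
    intro i x
    simp [L, hr, hs0 i]
  let cl : (Fin n → ℝ) →ₗ[ℝ] ℝ := ∑ i, (c i : ℝ) • LinearMap.proj i
  have hcl : ∀ x, cl x = ∑ i, (c i : ℝ) * x i := by intro x; simp [cl]
  obtain ⟨l, g, hl, hgΔ, hgC, hdec⟩ := decomp L Δ
    (fun v hv => hinj v fun i => (hL0 i v).1 (hv i))
    (fun v hv => by
      obtain ⟨h, h1, h2, h3⟩ := exists_int_ray A hinj v hv
      exact ⟨h, h1, h2, fun i hi => (hL0 i _).2 (h3 i ((hL0 i v).1 hi))⟩)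
    n (zr - xs)
    (by
      intro i
      simp only [L, LinearMap.smul_apply, map_sub, smul_eq_mul, hr, s]
      split_ifs with h
      · linarith
      · linarith)
    (by simpa using Submodule.finrank_le (tightK L (zr - xs)))
  let gr : Fin n → Fin n → ℝ := fun k j => (g k j : ℝ)
  have hxs := (memP xs).1 hxsP
  have hzb := (memP zr).1 hz
  -- the objective is nonincreasing along each generator
  have hcg : ∀ k, cl (gr k) ≤ 0 := by
    intro k
    have hev : ∀ᶠ ε : ℝ in nhdsWithin 0 (Set.Ioi 0), ∀ i, r i (xs + ε • gr k) ≤ b i := by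
      rw [Filter.eventually_all]
      intro i
      by_cases ht : r i xs = b i
      · have h1 : R.mulVec zr i ≤ R.mulVec xs i := by
          rw [← hr i xs, ht]; exact hzb i
        have h2 := hgC k i
        simp only [L, LinearMap.smul_apply, smul_eq_mul, s, if_pos h1, one_mul] at h2
        filter_upwards [self_mem_nhdsWithin] with ε hε
        rw [map_add, map_smul, smul_eq_mul, ht]
        have : ε * r i (gr k) ≤ 0 := mul_nonpos_of_nonneg_of_nonpos (le_of_lt hε) h2
        linarith
      · have hlt : r i xs < b i := lt_of_le_of_ne (hxs i) ht
        have hcont : Filter.Tendsto (fun ε : ℝ => r i xs + ε * r i (gr k))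
            (nhdsWithin 0 (Set.Ioi 0)) (nhds (r i xs)) := by
          have : Continuous (fun ε : ℝ => r i xs + ε * r i (gr k)) := by fun_prop
          have h := this.tendsto 0
          simp only [zero_mul, add_zero] at h
          exact h.mono_left nhdsWithin_le_nhds
        filter_upwards [hcont.eventually_lt_const hlt] with ε hε
        rw [map_add, map_smul, smul_eq_mul]
        exact hε.le
    obtain ⟨ε, hε, hε0⟩ := (hev.and self_mem_nhdsWithin).exists
    have h1 := hopt _ ((memP _).2 hε)
    rw [← hcl, ← hcl, map_add, map_smul, smul_eq_mul] at h1
    have hε0' : (0 : ℝ) < ε := hε0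
    by_contra! hc
    have := mul_pos hε0' hc
    linarith
  let z' : Fin n → ℤ := fun j => z j - ∑ k, ⌊l k⌋ * g k j
  let zr' : Fin n → ℝ := fun j => (z' j : ℝ)
  have hz1 : zr' = zr - ∑ k, (⌊l k⌋ : ℝ) • gr k := by
    ext j
    simp [zr', z', zr, gr]
  have hz2 : zr' = xs + ∑ k, Int.fract (l k) • gr k := by
    have h1 : zr = xs + ∑ k, l k • gr k := by
      rw [← hdec]; simp
    rw [hz1, h1, add_sub_assoc, ← Finset.sum_sub_distrib]
    congr 1
    refine Finset.sum_congr rfl fun k _ => ?_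
    rw [← sub_smul, Int.self_sub_floor]
  have hfl : ∀ k, (0 : ℝ) ≤ (⌊l k⌋ : ℝ) := fun k => by
    exact_mod_cast Int.floor_nonneg.2 (hl k)
  refine ⟨z', ?_, ?_, ?_⟩
  · change zr' ∈ P
    rw [memP]
    intro i
    rw [← hr]
    by_cases h : R.mulVec zr i ≤ R.mulVec xs i
    · rw [hz2, map_add, map_sum]
      have : ∑ k, r i (Int.fract (l k) • gr k) ≤ 0 := by
        refine Finset.sum_nonpos fun k _ => ?_
        have h2 := hgC k i
        simp only [L, LinearMap.smul_apply, smul_eq_mul, s, if_pos h, one_mul] at h2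
        rw [map_smul, smul_eq_mul]
        exact mul_nonpos_of_nonneg_of_nonpos (Int.fract_nonneg _) h2
      have := hxs i
      rw [← hr] at this
      linarith
    · rw [hz1, map_sub, map_sum]
      have : 0 ≤ ∑ k, r i ((⌊l k⌋ : ℝ) • gr k) := by
        refine Finset.sum_nonneg fun k _ => ?_
        have h2 := hgC k i
        simp only [L, LinearMap.smul_apply, smul_eq_mul, s, if_neg h] at h2
        rw [map_smul, smul_eq_mul]
        refine mul_nonneg (hfl k) ?_
        change 0 ≤ r i (fun j => (g k j : ℝ))
        linarith
      have := hzb i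
      rw [← hr] at this
      linarith
  · intro w hw
    refine (hzopt w hw).trans ?_
    have h1 := hcl zr
    have h2 := hcl zr'
    change ∑ i, (c i : ℝ) * zr i ≤ ∑ i, (c i : ℝ) * zr' i
    rw [← h1, ← h2, hz1, map_sub, map_sum]
    have : ∑ k, cl ((⌊l k⌋ : ℝ) • gr k) ≤ 0 := by
      refine Finset.sum_nonpos fun k _ => ?_
      rw [map_smul, smul_eq_mul]
      exact mul_nonpos_of_nonneg_of_nonpos (hfl k) (hcg k)
    linarith
  · have hΔ0 : 0 ≤ Δ := by rw [hΔ]; positivity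
    rw [pi_norm_le_iff_of_nonneg (by positivity)]
    intro j
    have h1 : xs j - (z' j : ℝ) = - ∑ k, Int.fract (l k) * gr k j := by
      have := congrFun hz2 j
      simp only [Pi.add_apply, Finset.sum_apply, Pi.smul_apply, smul_eq_mul] at this
      change xs j - zr' j = _
      rw [this]; ring
    rw [h1, norm_neg, Real.norm_eq_abs]
    refine (Finset.abs_sum_le_sum_abs _ _).trans ?_
    have : ∑ k, |Int.fract (l k) * gr k j| ≤ ∑ _k : Fin n, Δ := by
      refine Finset.sum_le_sum fun k _ => ?_
      rw [abs_mul, abs_of_nonneg (Int.fract_nonneg _)]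
      calc _ ≤ 1 * Δ := mul_le_mul (Int.fract_lt_one _).le (hgΔ k j) (abs_nonneg _) zero_le_one
        _ = Δ := one_mul _
    simpa using this
end

section
/- Let Δ ≥ 1 and n ≥ 2. Suppose A = TB ∈ ℤ^{m×n} with T totally unimodular and B ∈ ℤ^{n×n} with |det B| = Δ, b ∈ ℤ^m, c ∈ ℚⁿ, and the integer program max{cᵀx : Ax ≤ b, x ∈ ℤⁿ} is feasible. Then for every optimal vertex x* of the LP max{cᵀx : Ax ≤ b}, there is an optimal integral solution z* with ‖x* − z*‖_∞ ≤ max{Δ_{n−1}(A), Δ_n(A)} − 1. -/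
open Matrix

lemma exists_kernel {k n : ℕ} (h : k < n) (R : Fin k → Fin n → ℝ) :
    ∃ w : Fin n → ℝ, w ≠ 0 ∧ ∀ j, R j ⬝ᵥ w = 0 := by
  have := LinearMap.ker_ne_bot_of_finrank_lt (f := Matrix.mulVecLin (Matrix.of R)) (by simpa using h)
  obtain ⟨w, hw, hw0⟩ := Submodule.exists_mem_ne_zero_of_ne_bot this
  refine ⟨w, hw0, fun j => ?_⟩
  have h2 : (Matrix.of R) *ᵥ w = 0 := by simpa using hw
  exact congrFun h2 j

lemma linInd_cons {k n : ℕ} (R : Fin k → Fin n → ℝ) (hR : LinearIndependent ℝ R)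
    (x w : Fin n → ℝ) (hw : ∀ j, R j ⬝ᵥ w = 0) (hx : x ⬝ᵥ w ≠ 0) :
    LinearIndependent ℝ (Fin.cons x R : Fin (k+1) → Fin n → ℝ) := by
  rw [linearIndependent_finCons]
  refine ⟨hR, fun hmem => hx ?_⟩
  clear hx
  induction hmem using Submodule.span_induction with
  | mem y hy => obtain ⟨j, rfl⟩ := hy; exact hw j
  | zero => simp
  | add y z _ _ hy hz => rw [add_dotProduct, hy, hz, add_zero]
  | smul a y _ hy => rw [smul_dotProduct, hy, smul_zero]

/-- Linearly independent rows from a set with trivial common kernel. -/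
lemma exists_rows {m n : ℕ} (T : Fin m → Fin n → ℝ) (S : Fin m → Prop)
    (hS : ∀ w : Fin n → ℝ, (∀ i, S i → T i ⬝ᵥ w = 0) → w = 0) :
    ∀ k, k ≤ n → ∃ r : Fin k → Fin m, (∀ j, S (r j)) ∧ LinearIndependent ℝ (fun j => T (r j)) := by
  intro k
  induction k with
  | zero => intro _; exact ⟨Fin.elim0, fun j => j.elim0, linearIndependent_empty_type⟩
  | succ k ih =>
    intro hk
    obtain ⟨r, hr, hli⟩ := ih (by omega)
    obtain ⟨w, hw0, hw⟩ := exists_kernel (by omega : k < n) (fun j => T (r j))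
    have : ∃ i, S i ∧ T i ⬝ᵥ w ≠ 0 := by
      by_contra! hcon
      exact hw0 (hS w hcon)
    obtain ⟨i, hi, hiw⟩ := this
    refine ⟨Fin.cons i r, ?_, ?_⟩
    · intro j
      refine Fin.cases ?_ (fun j => ?_) j
      · simpa using hi
      · simpa using hr j
    · convert linInd_cons _ hli (T i) w hw hiw using 1
      funext j
      refine Fin.cases ?_ (fun j => ?_) j <;> simp

/-- Conformal vectors lying on many hyperplanes. -/
lemma exists_conf {m n : ℕ} (T : Fin m → Fin n → ℝ)
    (hS : ∀ w : Fin n → ℝ, (∀ i, T i ⬝ᵥ w = 0) → w = 0) (u : Fin n → ℝ) (hu : u ≠ 0) :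
    ∀ k, k + 1 ≤ n → ∃ r : Fin k → Fin m, LinearIndependent ℝ (fun j => T (r j)) ∧
      ∃ u' : Fin n → ℝ, u' ≠ 0 ∧ (∀ j, T (r j) ⬝ᵥ u' = 0) ∧
        ∀ i, (T i ⬝ᵥ u = 0 → T i ⬝ᵥ u' = 0) ∧ 0 ≤ (T i ⬝ᵥ u) * (T i ⬝ᵥ u') := by
  intro k
  induction k with
  | zero =>
    intro _
    exact ⟨Fin.elim0, linearIndependent_empty_type, u, hu, fun j => j.elim0,
      fun i => ⟨id, mul_self_nonneg _⟩⟩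
  | succ k ih =>
    intro hk
    obtain ⟨r, hli, u', hu', hker, hconf⟩ := ih (by omega)
    obtain ⟨i0, hi0⟩ : ∃ i0, u' i0 ≠ 0 := by
      by_contra! hcon
      exact hu' (funext hcon)
    obtain ⟨w, hw0, hw⟩ := exists_kernel (by omega : k + 1 < n)
      (Fin.cons (Pi.single i0 1) (fun j => T (r j)))
    have hwi0 : w i0 = 0 := by simpa using hw 0
    have hwr : ∀ j, T (r j) ⬝ᵥ w = 0 := fun j => by simpa using hw j.succ
    have hne : (Finset.univ.filter fun i => T i ⬝ᵥ w ≠ 0).Nonempty := by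
      by_contra hcon
      rw [Finset.not_nonempty_iff_eq_empty, Finset.filter_eq_empty_iff] at hcon
      exact hw0 (hS w fun i => by simpa using hcon (Finset.mem_univ i))
    obtain ⟨i, hi, hmin⟩ := Finset.exists_min_image _
      (fun i => |(T i ⬝ᵥ u') / (T i ⬝ᵥ w)|) hne
    have hiw : T i ⬝ᵥ w ≠ 0 := by simpa using hi
    set t := (T i ⬝ᵥ u') / (T i ⬝ᵥ w) with ht
    refine ⟨Fin.cons i r, ?_, u' - t • w, ?_, ?_, ?_⟩
    · convert linInd_cons _ hli (T i) w hwr hiw using 1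
      funext j
      refine Fin.cases ?_ (fun j => ?_) j <;> simp
    · intro h0
      have := congrFun h0 i0
      simp [hwi0] at this
      exact hi0 this
    · intro j
      refine Fin.cases ?_ (fun j => ?_) j
      · simp only [Fin.cons_zero, dotProduct_sub, dotProduct_smul, smul_eq_mul, ht]
        field_simp
        ring
      · simp [dotProduct_sub, dotProduct_smul, hker j, hwr j]
    · intro j
      have hb : |t * (T j ⬝ᵥ w)| ≤ |T j ⬝ᵥ u'| := by
        by_cases hj : T j ⬝ᵥ w = 0
        · simp [hj]
        · have := hmin j (by simpa using hj)
          rw [abs_div (T j ⬝ᵥ u')] at this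
          rw [abs_mul]
          exact (le_div_iff₀ (abs_pos.mpr hj)).mp this
      obtain ⟨h1, h2⟩ := hconf j
      simp only [dotProduct_sub, dotProduct_smul, smul_eq_mul]
      refine ⟨fun h => ?_, ?_⟩
      · rw [h1 h] at hb ⊢
        have : t * (T j ⬝ᵥ w) = 0 := abs_nonpos_iff.mp (by simpa only [abs_zero] using hb)
        rw [this, sub_zero]
      · rcases lt_trichotomy (T j ⬝ᵥ u) 0 with h | h | h
        · have : T j ⬝ᵥ u' ≤ 0 := by nlinarith
          rw [abs_of_nonpos this] at hb
          have := (abs_le.mp hb).1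
          exact mul_nonneg_of_nonpos_of_nonpos h.le (by linarith)
        · rw [h]; simp
        · have : 0 ≤ T j ⬝ᵥ u' := by nlinarith
          rw [abs_of_nonneg this] at hb
          have := (abs_le.mp hb).2
          exact mul_nonneg h.le (by linarith)

/-- Generalised cross product of `N` vectors in dimension `N+1`. -/
def crossVec {N : ℕ} (M : Matrix (Fin N) (Fin (N+1)) ℤ) : Fin (N+1) → ℤ :=
  fun k => (-1) ^ (k : ℕ) * (M.submatrix id k.succAbove).det

lemma dot_crossVec {N : ℕ} (M : Matrix (Fin N) (Fin (N+1)) ℤ) (x : Fin (N+1) → ℤ) :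
    x ⬝ᵥ crossVec M = (Matrix.of (Fin.cons x M : Fin (N+1) → Fin (N+1) → ℤ)).det := by
  rw [Matrix.det_succ_row_zero]
  simp only [dotProduct, crossVec]
  refine Finset.sum_congr rfl fun k _ => ?_
  have : (Matrix.of (Fin.cons x M : Fin (N+1) → Fin (N+1) → ℤ)).submatrix Fin.succ k.succAbove
      = M.submatrix id k.succAbove := by
    ext i j; rfl
  rw [this]
  change x k * _ = (-1) ^ (k : ℕ) * x k * _
  ring

lemma cross_mul {N : ℕ} (M : Matrix (Fin N) (Fin (N+1)) ℤ) (B : Matrix (Fin (N+1)) (Fin (N+1)) ℤ) :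
    B *ᵥ crossVec (M * B) = B.det • crossVec M := by
  funext k
  have h1 : (B *ᵥ crossVec (M * B)) k = B k ⬝ᵥ crossVec (M * B) := rfl
  have h2 : crossVec M k = (Pi.single k 1) ⬝ᵥ crossVec M := by simp
  rw [h1, Pi.smul_apply, h2, dot_crossVec, dot_crossVec, smul_eq_mul, mul_comm, ← Matrix.det_mul]
  congr 1
  ext i j
  refine Fin.cases ?_ (fun i => ?_) i
  · rw [Matrix.mul_apply]
    change B k j = ∑ l, (Pi.single k (1 : ℤ) : Fin (N+1) → ℤ) l * B l j
    simp [Pi.single_apply]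
  · rw [Matrix.mul_apply]
    change (M * B) i j = ∑ l, M i l * B l j
    rw [Matrix.mul_apply]

lemma pigeon {n : ℕ} (B : Matrix (Fin n) (Fin n) ℤ) (hB : B.det ≠ 0)
    (f : ℕ → Fin n → ℤ) : ∃ a b, a < b ∧ b ≤ B.det.natAbs ∧ ∃ q, B *ᵥ q = f b - f a := by
  have hinj : Function.Injective (Matrix.toLin' B) := by
    rw [← LinearMap.ker_eq_bot, Matrix.ker_toLin'_eq_bot_iff]
    intro v hv
    by_contra h
    exact hB (Matrix.exists_mulVec_eq_zero_iff.mp ⟨v, h, hv⟩)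
  let Nn := LinearMap.range (Matrix.toLin' B)
  let e : (Fin n → ℤ) ≃ₗ[ℤ] Nn := LinearEquiv.ofInjective (Matrix.toLin' B) hinj
  have hcard : Nat.card ((Fin n → ℤ) ⧸ Nn) = B.det.natAbs := by
    have := Submodule.natAbs_det_equiv Nn e
    have h2 : (Nn.subtype ∘ₗ AddMonoidHom.toIntLinearMap (e : (Fin n → ℤ) →+ Nn)) = Matrix.toLin' B := by
      ext i j; simp [e, Nn]
    rw [h2, LinearMap.det_toLin'] at this
    rw [this]
  have hfin : Finite ((Fin n → ℤ) ⧸ Nn) := Nat.finite_of_card_ne_zero (by rw [hcard]; simpa using hB)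
  have := Fintype.ofFinite ((Fin n → ℤ) ⧸ Nn)
  rw [Nat.card_eq_fintype_card] at hcard
  obtain ⟨a, b, hab, hf⟩ := Fintype.exists_ne_map_eq_of_card_lt
    (fun j : Fin (B.det.natAbs + 1) => (Submodule.Quotient.mk (f j) : (Fin n → ℤ) ⧸ Nn))
    (by simp [hcard])
  wlog hlt : a < b generalizing a b
  · exact this b a hab.symm hf.symm (lt_of_le_of_ne (not_lt.mp hlt) hab.symm)
  have h3 := (Submodule.Quotient.eq Nn).mp hf.symm
  obtain ⟨q, hq⟩ := h3
  exact ⟨a, b, hlt, by omega, q, by simpa using hq⟩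

lemma cast_dot {m n : ℕ} (T : Matrix (Fin m) (Fin n) ℤ) (u : Fin n → ℤ) (i : Fin m) :
    (T.map (Int.cast : ℤ → ℝ)) i ⬝ᵥ (fun j => (u j : ℝ)) = (((T *ᵥ u) i : ℤ) : ℝ) := by
  simp [mulVec, dotProduct]

lemma elem {m N : ℕ} (T : Matrix (Fin m) (Fin (N+1)) ℤ) (hT : T.IsTotallyUnimodular)
    (hS : ∀ w : Fin (N+1) → ℝ, (∀ i, (T.map (Int.cast : ℤ → ℝ)) i ⬝ᵥ w = 0) → w = 0)
    (u : Fin (N+1) → ℤ) (hu : u ≠ 0) :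
    ∃ r : Fin N → Fin m, Function.Injective r ∧ ∃ v : Fin (N+1) → ℤ,
      (v = crossVec (T.submatrix r id) ∨ v = - crossVec (T.submatrix r id)) ∧
      (∃ i, (T *ᵥ v) i ≠ 0) ∧
      ∀ i, (0 ≤ (T *ᵥ v) i ∧ (T *ᵥ v) i ≤ (T *ᵥ u) i) ∨
        ((T *ᵥ u) i ≤ (T *ᵥ v) i ∧ (T *ᵥ v) i ≤ 0) := by
  have huR : (fun j => (u j : ℝ)) ≠ 0 := by
    intro h
    exact hu (funext fun j => by simpa using congrFun h j)
  obtain ⟨r, hli, u', hu', hker, hconf⟩ :=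
    exists_conf (T.map (Int.cast : ℤ → ℝ)) hS _ huR N le_rfl
  have hrinj : Function.Injective r := fun a b hab => hli.injective (by simp only [hab])
  have hex : ∃ i, (T.map (Int.cast : ℤ → ℝ)) i ⬝ᵥ u' ≠ 0 := by
    by_contra! hcon
    exact hu' (hS u' hcon)
  obtain ⟨i0, hi0⟩ := hex
  set v0 := crossVec (T.submatrix r id) with hv0
  have hTv : ∀ i, (T *ᵥ v0) i = (T.submatrix (Fin.cons i r) id).det := by
    intro i
    change T i ⬝ᵥ v0 = _
    rw [hv0, dot_crossVec]
    congr 1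
    ext a b
    refine Fin.cases ?_ (fun a => ?_) a <;> rfl
  have hTvr : ∀ j, (T *ᵥ v0) (r j) = 0 := by
    intro j
    rw [hTv]
    refine Matrix.det_zero_of_row_eq (i := 0) (j := j.succ) (Fin.succ_ne_zero j).symm ?_
    rfl
  have hunit : ∀ i, (T *ᵥ v0) i = 0 ∨ (T *ᵥ v0) i = 1 ∨ (T *ᵥ v0) i = -1 := by
    intro i
    rw [hTv]
    obtain ⟨s, hs⟩ := (Matrix.isTotallyUnimodular_iff T).mp hT (N+1) (Fin.cons i r) id
    rw [← hs]
    cases s <;> simp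
  -- the square matrix
  let Q : Matrix (Fin (N+1)) (Fin (N+1)) ℝ :=
    Matrix.of (Fin.cons ((T.map (Int.cast : ℤ → ℝ)) i0) (fun j => (T.map (Int.cast : ℤ → ℝ)) (r j)))
  have hQli : LinearIndependent ℝ Q.row :=
    linInd_cons _ hli ((T.map (Int.cast : ℤ → ℝ)) i0) u' hker hi0
  have hQu : IsUnit Q := Matrix.linearIndependent_rows_iff_isUnit.mp hQli
  have hQdet : Q.det ≠ 0 := ((Matrix.isUnit_iff_isUnit_det Q).mp hQu).ne_zero
  have hQT : Q.det = (((T *ᵥ v0) i0 : ℤ) : ℝ) := by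
    rw [hTv, Int.cast_det]
    congr 1
    ext a b
    refine Fin.cases ?_ (fun a => ?_) a <;> rfl
  have hd : (((T *ᵥ v0) i0 : ℤ) : ℝ) ≠ 0 := hQT ▸ hQdet
  set lam := ((T.map (Int.cast : ℤ → ℝ)) i0 ⬝ᵥ u') / (((T *ᵥ v0) i0 : ℤ) : ℝ) with hlam
  have hlam0 : lam ≠ 0 := div_ne_zero hi0 hd
  have heq : u' = lam • (fun j => (v0 j : ℝ)) := by
    rw [← sub_eq_zero]
    by_contra hne
    refine hQdet (Matrix.exists_mulVec_eq_zero_iff.mp ⟨_, hne, ?_⟩)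
    funext a
    refine Fin.cases ?_ (fun a => ?_) a
    · change (T.map (Int.cast : ℤ → ℝ)) i0 ⬝ᵥ _ = 0
      rw [dotProduct_sub, dotProduct_smul, cast_dot, hlam, smul_eq_mul, div_mul_cancel₀ _ hd, sub_self]
    · change (T.map (Int.cast : ℤ → ℝ)) (r a) ⬝ᵥ _ = 0
      rw [dotProduct_sub, dotProduct_smul, cast_dot, hker, hTvr]
      simp
  have hd' : (T *ᵥ v0) i0 ≠ 0 := by exact_mod_cast hd
  have hc : ∀ i, ((T *ᵥ u) i = 0 → (T *ᵥ v0) i = 0) ∧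
      0 ≤ ((T *ᵥ u) i : ℝ) * (lam * ((T *ᵥ v0) i : ℝ)) := by
    intro i
    obtain ⟨h1, h2⟩ := hconf i
    rw [heq, dotProduct_smul, cast_dot, cast_dot, smul_eq_mul] at h1 h2
    refine ⟨fun h => ?_, h2⟩
    have := h1 (by exact_mod_cast h)
    simpa [hlam0] using this
  have key : ∀ a b : ℤ, (b = 0 ∨ b = 1 ∨ b = -1) → (a = 0 → b = 0) → 0 ≤ a * b →
      (0 ≤ b ∧ b ≤ a) ∨ (a ≤ b ∧ b ≤ 0) := by
    rintro a b (rfl | rfl | rfl) h1 h2 <;> simp at h1 h2 ⊢ <;> omega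
  rcases lt_or_gt_of_ne hlam0 with hneg | hpos
  · refine ⟨r, hrinj, -v0, Or.inr rfl, ⟨i0, by simpa [mulVec_neg] using hd'⟩, fun i => ?_⟩
    rw [mulVec_neg, Pi.neg_apply]
    refine key _ _ ?_ ?_ ?_
    · rcases hunit i with h | h | h <;> simp [h]
    · intro h; simp [(hc i).1 h]
    · have := (hc i).2
      have h3 : (0:ℝ) ≤ ((T *ᵥ u) i : ℝ) * (-((T *ᵥ v0) i : ℝ)) := by
        by_contra hcon
        push Not at hcon
        nlinarith
      exact_mod_cast h3
  · refine ⟨r, hrinj, v0, Or.inl rfl, ⟨i0, hd'⟩, fun i => ?_⟩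
    refine key _ _ (hunit i) (hc i).1 ?_
    have := (hc i).2
    have h3 : (0:ℝ) ≤ ((T *ᵥ u) i : ℝ) * ((T *ᵥ v0) i : ℝ) := by
      by_contra hcon
      push Not at hcon
      nlinarith
    exact_mod_cast h3

/-- The elementary vectors and their bound. -/
def IsElem {n : ℕ} (B : Matrix (Fin n) (Fin n) ℤ) (D : ℕ) (v : Fin n → ℤ) : Prop :=
  ∃ a : Fin n → ℤ, B *ᵥ a = B.det • v ∧ ∀ k, |a k| ≤ D

lemma cross_bound {m N : ℕ} (A : Matrix (Fin m) (Fin (N+1)) ℤ) (r : Fin N → Fin m)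
    (hr : Function.Injective r) (k : Fin (N+1)) :
    |crossVec (A.submatrix r id) k| ≤ maxMinor A N := by
  have h1 : |crossVec (A.submatrix r id) k| = ((A.submatrix r k.succAbove).det.natAbs : ℤ) := by
    simp [crossVec, abs_mul, Matrix.submatrix_submatrix]
  rw [h1]
  have := Finset.le_sup (s := Finset.univ.filter fun p : (Fin N → Fin m) × (Fin N → Fin (N+1)) =>
      Function.Injective p.1 ∧ Function.Injective p.2)
    (f := fun p => ((A.submatrix p.1 p.2).det).natAbs) (b := (r, k.succAbove))
    (by simp [hr, Fin.succAbove_right_injective])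
  exact_mod_cast this

lemma elem' {m N : ℕ} (T : Matrix (Fin m) (Fin (N+1)) ℤ) (hT : T.IsTotallyUnimodular)
    (B : Matrix (Fin (N+1)) (Fin (N+1)) ℤ)
    (hS : ∀ w : Fin (N+1) → ℝ, (∀ i, (T.map (Int.cast : ℤ → ℝ)) i ⬝ᵥ w = 0) → w = 0)
    (u : Fin (N+1) → ℤ) (hu : u ≠ 0) :
    ∃ v : Fin (N+1) → ℤ, IsElem B (maxMinor (T * B) N) v ∧
      (∃ i, (T *ᵥ v) i ≠ 0) ∧
      ∀ i, (0 ≤ (T *ᵥ v) i ∧ (T *ᵥ v) i ≤ (T *ᵥ u) i) ∨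
        ((T *ᵥ u) i ≤ (T *ᵥ v) i ∧ (T *ᵥ v) i ≤ 0) := by
  obtain ⟨r, hr, v, hv, h1, h2⟩ := elem T hT hS u hu
  refine ⟨v, ?_, h1, h2⟩
  have hsub : (T * B).submatrix r id = T.submatrix r id * B := by
    ext i j; simp [Matrix.mul_apply]
  have hcm := cross_mul (T.submatrix r id) B
  rw [← hsub] at hcm
  rcases hv with rfl | rfl
  · exact ⟨_, hcm, cross_bound _ r hr⟩
  · refine ⟨- crossVec ((T * B).submatrix r id), ?_, fun k => ?_⟩
    · rw [mulVec_neg, hcm, smul_neg]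
    · rw [Pi.neg_apply, abs_neg]; exact cross_bound _ r hr k

lemma decomp_s12 {m N : ℕ} (T : Matrix (Fin m) (Fin (N+1)) ℤ) (hT : T.IsTotallyUnimodular)
    (B : Matrix (Fin (N+1)) (Fin (N+1)) ℤ)
    (hS : ∀ w : Fin (N+1) → ℝ, (∀ i, (T.map (Int.cast : ℤ → ℝ)) i ⬝ᵥ w = 0) → w = 0) :
    ∀ (K : ℕ) (u : Fin (N+1) → ℤ), ∑ i, ((T *ᵥ u) i).natAbs = K →
    ∃ l : List (Fin (N+1) → ℤ), l.sum = u ∧ ∀ v ∈ l, IsElem B (maxMinor (T * B) N) v ∧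
      ∀ i, (0 ≤ (T *ᵥ u) i → 0 ≤ (T *ᵥ v) i) ∧ ((T *ᵥ u) i ≤ 0 → (T *ᵥ v) i ≤ 0) := by
  intro K
  induction K using Nat.strong_induction_on with
  | _ K ih =>
    intro u hK
    by_cases hu : u = 0
    · exact ⟨[], by simp [hu], by simp⟩
    obtain ⟨v, hv, ⟨i0, hi0⟩, hc⟩ := elem' T hT B hS u hu
    obtain ⟨l, hl, hlc⟩ := ih (∑ i, ((T *ᵥ (u - v)) i).natAbs) (by
      rw [← hK]
      refine Finset.sum_lt_sum (fun i _ => ?_) ⟨i0, Finset.mem_univ _, ?_⟩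
      · rw [mulVec_sub, Pi.sub_apply]
        have := hc i
        omega
      · rw [mulVec_sub, Pi.sub_apply]
        have := hc i0
        omega) (u - v) rfl
    refine ⟨v :: l, by simp [hl], fun w hw => ?_⟩
    rcases List.mem_cons.mp hw with rfl | hw
    · refine ⟨hv, fun i => ?_⟩
      have := hc i
      constructor <;> intro h <;> omega
    · refine ⟨(hlc w hw).1, fun i => ?_⟩
      have h2 := (hlc w hw).2 i
      rw [mulVec_sub, Pi.sub_apply] at h2
      have := hc i
      constructor <;> intro h
      · exact h2.1 (by omega)
      · exact h2.2 (by omega)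

lemma mulVec_list_sum_nonneg {m n : ℕ} (T : Matrix (Fin m) (Fin n) ℤ) (i : Fin m)
    (l : List (Fin n → ℤ)) (h : ∀ v ∈ l, 0 ≤ (T *ᵥ v) i) : 0 ≤ (T *ᵥ l.sum) i := by
  induction l with
  | nil => simp
  | cons a l ih =>
    rw [List.sum_cons, mulVec_add, Pi.add_apply]
    exact add_nonneg (h a (by simp)) (ih fun v hv => h v (by simp [hv]))

lemma mulVec_list_sum_nonpos {m n : ℕ} (T : Matrix (Fin m) (Fin n) ℤ) (i : Fin m)
    (l : List (Fin n → ℤ)) (h : ∀ v ∈ l, (T *ᵥ v) i ≤ 0) : (T *ᵥ l.sum) i ≤ 0 := by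
  induction l with
  | nil => simp
  | cons a l ih =>
    rw [List.sum_cons, mulVec_add, Pi.add_apply]
    exact add_nonpos (h a (by simp)) (ih fun v hv => h v (by simp [hv]))

/-- Shortening the decomposition. -/
lemma reduce {m n : ℕ} (T : Matrix (Fin m) (Fin n) ℤ) (B : Matrix (Fin n) (Fin n) ℤ)
    (hB : B.det ≠ 0) (b : Fin m → ℤ) (c : Fin n → ℝ) (ys : Fin n → ℤ)
    (hys : ∀ i, (T *ᵥ ys) i ≤ b i)
    (hopt : ∀ q : Fin n → ℤ, (∀ i, (T *ᵥ (ys + B *ᵥ q)) i ≤ b i) → ∑ j, c j * (q j : ℝ) ≤ 0)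
    (E : (Fin n → ℤ) → Prop) :
    ∀ (K : ℕ) (l : List (Fin n → ℤ)) (z : Fin n → ℤ), l.length = K → (∀ v ∈ l, E v) →
      (∀ i, (∀ v ∈ l, 0 ≤ (T *ᵥ v) i) ∨ (∀ v ∈ l, (T *ᵥ v) i ≤ 0)) →
      B *ᵥ z = ys + l.sum → (∀ i, (T *ᵥ (B *ᵥ z)) i ≤ b i) →
      ∃ (l' : List (Fin n → ℤ)) (z' : Fin n → ℤ), l'.length < B.det.natAbs ∧ (∀ v ∈ l', E v) ∧
        B *ᵥ z' = ys + l'.sum ∧ (∀ i, (T *ᵥ (B *ᵥ z')) i ≤ b i) ∧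
        ∑ j, c j * (z j : ℝ) ≤ ∑ j, c j * (z' j : ℝ) := by
  intro K
  induction K using Nat.strong_induction_on with
  | _ K ih =>
    intro l z hlK hE hconf hz hfeas
    by_cases hlen : l.length < B.det.natAbs
    · exact ⟨l, z, hlen, hE, hz, hfeas, le_rfl⟩
    obtain ⟨a, b', hab, hb', q, hq⟩ := pigeon B hB (fun j => (l.take j).sum)
    set mid := (l.take b').drop a with hmid
    have hmidsum : mid.sum = B *ᵥ q := by
      have h1 := congrArg List.sum (List.take_append_drop a (l.take b'))
      rw [List.sum_append, List.take_take, min_eq_left hab.le] at h1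
      rw [hq, ← h1, hmid]; simp
    set rest := l.take a ++ l.drop b' with hrest
    have hsum : l.sum = rest.sum + mid.sum := by
      have h1 := congrArg List.sum (List.take_append_drop b' l)
      rw [List.sum_append] at h1
      rw [← h1, hrest, List.sum_append, hmidsum, hq]; abel
    have hmidmem : ∀ v ∈ mid, v ∈ l := fun v hv => List.mem_of_mem_take (List.mem_of_mem_drop hv)
    have hrestmem : ∀ v ∈ rest, v ∈ l := by
      intro v hv
      rcases List.mem_append.mp hv with h | h
      · exact List.mem_of_mem_take h
      · exact List.mem_of_mem_drop h
    have hT0 : ∀ i, (T *ᵥ (B *ᵥ z)) i = (T *ᵥ ys) i + (T *ᵥ rest.sum) i + (T *ᵥ mid.sum) i := by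
      intro i
      rw [hz, hsum, mulVec_add, mulVec_add]; simp [add_assoc]
    have hz' : B *ᵥ (z - q) = ys + rest.sum := by
      rw [mulVec_sub, hz, ← hmidsum, hsum]; abel
    have hsg : ∀ i, (T *ᵥ (ys + rest.sum)) i ≤ b i ∧ (T *ᵥ (ys + mid.sum)) i ≤ b i := by
      intro i
      have h0 := hT0 i
      have h1 := hfeas i
      have h2 := hys i
      simp only [mulVec_add, Pi.add_apply]
      rcases hconf i with h | h
      · have h3 := mulVec_list_sum_nonneg T i mid fun v hv => h v (hmidmem v hv)
        have h4 := mulVec_list_sum_nonneg T i rest fun v hv => h v (hrestmem v hv)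
        constructor <;> omega
      · have h3 := mulVec_list_sum_nonpos T i mid fun v hv => h v (hmidmem v hv)
        have h4 := mulVec_list_sum_nonpos T i rest fun v hv => h v (hrestmem v hv)
        constructor <;> omega
    obtain ⟨l', z', h1, h2, h3, h4, h5⟩ := ih rest.length (by
        rw [hrest, List.length_append, List.length_take, List.length_drop]; omega)
      rest (z - q) rfl (fun v hv => hE v (hrestmem v hv))
      (fun i => (hconf i).imp (fun h v hv => h v (hrestmem v hv)) (fun h v hv => h v (hrestmem v hv)))
      hz' (fun i => by rw [hz']; exact (hsg i).1)
    refine ⟨l', z', h1, h2, h3, h4, le_trans ?_ h5⟩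
    have hq0 := hopt q (fun i => by rw [← hmidsum]; exact (hsg i).2)
    have : ∑ j, c j * ((z - q) j : ℝ) = ∑ j, c j * (z j : ℝ) - ∑ j, c j * (q j : ℝ) := by
      rw [← Finset.sum_sub_distrib]
      refine Finset.sum_congr rfl fun j _ => ?_
      simp [mul_sub]
    linarith

lemma elem_sum {n : ℕ} (B : Matrix (Fin n) (Fin n) ℤ) (D : ℕ) (l : List (Fin n → ℤ))
    (h : ∀ v ∈ l, IsElem B D v) :
    ∃ a : Fin n → ℤ, B *ᵥ a = B.det • l.sum ∧ ∀ k, |a k| ≤ l.length * D := by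
  induction l with
  | nil => exact ⟨0, by simp, by simp⟩
  | cons v l ih =>
    obtain ⟨a, h1, h2⟩ := ih fun w hw => h w (by simp [hw])
    obtain ⟨a', h1', h2'⟩ := h v (by simp)
    refine ⟨a' + a, by rw [mulVec_add, h1, h1', List.sum_cons, smul_add], fun k => ?_⟩
    have := abs_add_le (a' k) (a k)
    have := h2 k
    have := h2' k
    rw [List.length_cons, Pi.add_apply]
    push_cast
    linarith

lemma tight_kernel {m n : ℕ} (A : Matrix (Fin m) (Fin n) ℝ) (b : Fin m → ℝ) (xs : Fin n → ℝ)
    (hvert : xs ∈ Set.extremePoints ℝ {x | ∀ i, (A *ᵥ x) i ≤ b i}) (w : Fin n → ℝ)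
    (hw : ∀ i, (A *ᵥ xs) i = b i → (A *ᵥ w) i = 0) : w = 0 := by
  have hxs : ∀ i, (A *ᵥ xs) i ≤ b i := hvert.1
  have hev : ∀ᶠ ε : ℝ in nhdsWithin 0 (Set.Ioi 0),
      ∀ i, (A *ᵥ xs) i + ε * |(A *ᵥ w) i| ≤ b i := by
    rw [Filter.eventually_all]
    intro i
    rcases eq_or_lt_of_le (hxs i) with h | h
    · filter_upwards with ε
      rw [hw i h, h]; simp
    · have hc : Continuous fun ε : ℝ => (A *ᵥ xs) i + ε * |(A *ᵥ w) i| := by fun_prop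
      have h2 : ∀ᶠ ε : ℝ in nhds 0, (A *ᵥ xs) i + ε * |(A *ᵥ w) i| < b i :=
        hc.continuousAt.eventually (gt_mem_nhds (by simpa using h))
      exact (h2.filter_mono nhdsWithin_le_nhds).mono fun _ h => h.le
  obtain ⟨ε, hε, hε0⟩ := (hev.and self_mem_nhdsWithin).exists
  have hε0 : 0 < ε := hε0
  have hp : ∀ s : ℝ, |s| = ε → xs + s • w ∈ {x | ∀ i, (A *ᵥ x) i ≤ b i} := by
    intro s hs i
    rw [mulVec_add, mulVec_smul, Pi.add_apply, Pi.smul_apply, smul_eq_mul]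
    have h1 := hε i
    have h2 := le_abs_self (s * (A *ᵥ w) i)
    rw [abs_mul, hs] at h2
    linarith
  have h1 := hvert.2 (hp ε (abs_of_pos hε0)) (hp (-ε) (by rw [abs_neg, abs_of_pos hε0]))
    ⟨1/2, 1/2, by norm_num, by norm_num, by norm_num, by
      funext j; simp; ring⟩
  have h2 : ε • w = 0 := by simpa using h1
  exact (smul_eq_zero.mp h2).resolve_left hε0.ne'

lemma le_maxMinor {m n k : ℕ} (A : Matrix (Fin m) (Fin n) ℤ) (r : Fin k → Fin m)
    (s : Fin k → Fin n) (hr : Function.Injective r) (hs : Function.Injective s) :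
    (A.submatrix r s).det.natAbs ≤ maxMinor A k :=
  Finset.le_sup (s := Finset.univ.filter fun p : (Fin k → Fin m) × (Fin k → Fin n) =>
      Function.Injective p.1 ∧ Function.Injective p.2)
    (f := fun p => ((A.submatrix p.1 p.2).det).natAbs) (b := (r, s)) (by simp [hr, hs])

/-- Integrality of the image of the vertex, and existence of a unimodular row set. -/
lemma vertex_int {m n : ℕ} (T : Matrix (Fin m) (Fin n) ℤ) (hT : T.IsTotallyUnimodular)
    (b : Fin m → ℤ) (y : Fin n → ℝ)
    (hS : ∀ w : Fin n → ℝ, (∀ i, (T.map (Int.cast : ℤ → ℝ)) i ⬝ᵥ y = b i →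
      (T.map (Int.cast : ℤ → ℝ)) i ⬝ᵥ w = 0) → w = 0) :
    ∃ r : Fin n → Fin m, Function.Injective r ∧ (T.submatrix r id).det.natAbs = 1 ∧
      ∃ ys : Fin n → ℤ, y = fun j => (ys j : ℝ) := by
  obtain ⟨r, hr, hli⟩ := exists_rows (T.map (Int.cast : ℤ → ℝ))
    (fun i => (T.map (Int.cast : ℤ → ℝ)) i ⬝ᵥ y = b i) hS n le_rfl
  have hrinj : Function.Injective r := fun a b hab => hli.injective (by simp only [hab])
  have hu : IsUnit ((T.submatrix r id).map (Int.cast : ℤ → ℝ)) :=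
    Matrix.linearIndependent_rows_iff_isUnit.mp hli
  have hdet : ((T.submatrix r id).map (Int.cast : ℤ → ℝ)).det ≠ 0 :=
    ((Matrix.isUnit_iff_isUnit_det _).mp hu).ne_zero
  have hdetZ : (T.submatrix r id).det ≠ 0 := by
    intro h
    apply hdet
    have := Int.cast_det (R := ℝ) (T.submatrix r id)
    rw [h] at this
    rw [← this]; simp
  have h1 : (T.submatrix r id).det.natAbs = 1 := by
    obtain ⟨s, hs⟩ := (Matrix.isTotallyUnimodular_iff T).mp hT n r id
    rw [← hs] at hdetZ ⊢
    cases s <;> simp at hdetZ ⊢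
  refine ⟨r, hrinj, h1, ?_⟩
  have hunit : IsUnit (T.submatrix r id).det := Int.isUnit_iff_natAbs_eq.mpr h1
  refine ⟨(T.submatrix r id)⁻¹ *ᵥ (fun j => b (r j)), ?_⟩
  rw [← sub_eq_zero]
  by_contra hne
  refine hdet (Matrix.exists_mulVec_eq_zero_iff.mp ⟨_, hne, ?_⟩)
  rw [mulVec_sub, sub_eq_zero]
  funext j
  have h3 := cast_dot (T.submatrix r id) ((T.submatrix r id)⁻¹ *ᵥ (fun j => b (r j))) j
  rw [mulVec_mulVec, Matrix.mul_nonsing_inv _ hunit, one_mulVec] at h3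
  exact (hr j).trans h3.symm

theorem core {m N : ℕ} (Δ : ℕ) (hΔ : 1 ≤ Δ)
    (T : Matrix (Fin m) (Fin (N+1)) ℤ) (hT : T.IsTotallyUnimodular)
    (B : Matrix (Fin (N+1)) (Fin (N+1)) ℤ) (hB : B.det.natAbs = Δ)
    (b : Fin m → ℤ) (c : Fin (N+1) → ℝ)
    (P : Set (Fin (N+1) → ℝ))
    (hP : P = {x | ∀ i, ((T * B).map (Int.cast : ℤ → ℝ)).mulVec x i ≤ (b i : ℝ)})
    (hfeas : ∃ z : Fin (N+1) → ℤ, (fun i => (z i : ℝ)) ∈ P)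
    (xs : Fin (N+1) → ℝ) (hxsP : xs ∈ P)
    (hvert : xs ∈ Set.extremePoints ℝ P)
    (hopt : ∀ x ∈ P, ∑ i, c i * x i ≤ ∑ i, c i * xs i) :
    ∃ z : Fin (N+1) → ℤ, (fun i => (z i : ℝ)) ∈ P ∧
      (∀ w : Fin (N+1) → ℤ, (fun i => (w i : ℝ)) ∈ P →
        ∑ i, c i * (w i : ℝ) ≤ ∑ i, c i * (z i : ℝ)) ∧
      ‖(fun i => xs i - (z i : ℝ))‖ ≤
        ((max (maxMinor (T * B) N) (maxMinor (T * B) (N+1)) : ℕ) : ℝ) - 1 := by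
  have hB0 : B.det ≠ 0 := by intro h; rw [h] at hB; simp at hB; omega
  set TR := T.map (Int.cast : ℤ → ℝ) with hTR
  set BR := B.map (Int.cast : ℤ → ℝ) with hBR
  have hBRdet : BR.det = (B.det : ℝ) := (Int.cast_det (R := ℝ) B).symm
  have hBRunit : IsUnit BR.det := by rw [hBRdet, isUnit_iff_ne_zero]; exact_mod_cast hB0
  have hAmap : (T * B).map (Int.cast : ℤ → ℝ) = TR * BR := by
    ext i j; simp [Matrix.mul_apply, hTR, hBR]
  rw [hAmap] at hP
  have hBRinj : ∀ v : Fin (N+1) → ℝ, BR *ᵥ v = 0 → v = 0 := by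
    intro v hv
    by_contra hne
    exact hBRunit.ne_zero (Matrix.exists_mulVec_eq_zero_iff.mp ⟨v, hne, hv⟩)
  have htight : ∀ w : Fin (N+1) → ℝ, (∀ i, TR i ⬝ᵥ (BR *ᵥ xs) = b i → TR i ⬝ᵥ w = 0) → w = 0 := by
    intro w hw
    have hw1 : BR *ᵥ (BR⁻¹ *ᵥ w) = w := by
      rw [mulVec_mulVec, Matrix.mul_nonsing_inv _ hBRunit, one_mulVec]
    have h0 := tight_kernel (TR * BR) (fun i => (b i : ℝ)) xs (hP ▸ hvert) (BR⁻¹ *ᵥ w) (by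
      intro i hi
      rw [← mulVec_mulVec] at hi ⊢
      rw [hw1]
      exact hw i hi)
    rw [← hw1, h0, mulVec_zero]
  obtain ⟨r, hrinj, hdet1, ys, hys⟩ := vertex_int T hT b (BR *ᵥ xs) htight
  have hS : ∀ w : Fin (N+1) → ℝ, (∀ i, TR i ⬝ᵥ w = 0) → w = 0 :=
    fun w hw => htight w fun i _ => hw i
  have hmaxn : Δ ≤ maxMinor (T * B) (N+1) := by
    have h1 := le_maxMinor (T * B) r id hrinj Function.injective_id
    have hsub : (T * B).submatrix r id = T.submatrix r id * B := by
      ext i j; simp [Matrix.mul_apply]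
    rw [hsub, Matrix.det_mul, Int.natAbs_mul, hdet1, hB, one_mul] at h1
    exact h1
  have hBz : ∀ q : Fin (N+1) → ℤ, BR *ᵥ (fun j => (q j : ℝ)) = fun j => (((B *ᵥ q) j : ℤ) : ℝ) := by
    intro q; funext j; exact cast_dot B q j
  have hTz : ∀ (q : Fin (N+1) → ℤ) i, (TR *ᵥ (fun j => (q j : ℝ))) i = (((T *ᵥ q) i : ℤ) : ℝ) :=
    fun q i => cast_dot T q i
  have hmemP : ∀ x, x ∈ P ↔ ∀ i, (TR *ᵥ (BR *ᵥ x)) i ≤ b i := by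
    intro x; rw [hP, Set.mem_ofPred_eq, ← mulVec_mulVec]
  have hmemZ : ∀ z : Fin (N+1) → ℤ, (fun i => (z i : ℝ)) ∈ P ↔ ∀ i, (T *ᵥ (B *ᵥ z)) i ≤ b i := by
    intro z
    rw [hmemP, hBz]
    refine forall_congr' fun i => ?_
    rw [hTz]; exact Int.cast_le
  have hysf : ∀ i, (T *ᵥ ys) i ≤ b i := by
    intro i
    have := (hmemP xs).mp hxsP i
    rw [hys, hTz] at this
    exact_mod_cast this
  have hoptq : ∀ q : Fin (N+1) → ℤ, (∀ i, (T *ᵥ (ys + B *ᵥ q)) i ≤ b i) →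
      ∑ j, c j * (q j : ℝ) ≤ 0 := by
    intro q hq
    have h1 := hopt (xs + fun j => (q j : ℝ)) ((hmemP _).mpr fun i => by
      rw [mulVec_add, hys, hBz, mulVec_add, Pi.add_apply, hTz, hTz]
      have := hq i
      rw [mulVec_add, Pi.add_apply] at this
      exact_mod_cast this)
    simp only [Pi.add_apply, mul_add, Finset.sum_add_distrib] at h1
    linarith
  set D := maxMinor (T * B) N with hD
  set M := max D (maxMinor (T * B) (N+1)) with hM
  -- every feasible point is dominated by a close one
  have hdom : ∀ z : Fin (N+1) → ℤ, (fun i => (z i : ℝ)) ∈ P → ∃ z' : Fin (N+1) → ℤ,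
      (fun i => (z' i : ℝ)) ∈ P ∧ ∑ j, c j * (z j : ℝ) ≤ ∑ j, c j * (z' j : ℝ) ∧
      ‖(fun i => xs i - (z' i : ℝ))‖ ≤ (M : ℝ) - 1 := by
    intro z hz
    obtain ⟨l, hl, hlc⟩ := decomp_s12 T hT B hS _ (B *ᵥ z - ys) rfl
    obtain ⟨l', z', h1, h2, h3, h4, h5⟩ := reduce T B hB0 b c ys hysf hoptq
      (IsElem B D) _ l z rfl (fun v hv => (hlc v hv).1)
      (fun i => by
        rcases le_total 0 ((T *ᵥ (B *ᵥ z - ys)) i) with h | h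
        · exact Or.inl fun v hv => ((hlc v hv).2 i).1 h
        · exact Or.inr fun v hv => ((hlc v hv).2 i).2 h)
      (by rw [hl]; abel) ((hmemZ z).mp hz)
    refine ⟨z', (hmemZ z').mpr h4, h5, ?_⟩
    obtain ⟨a, ha1, ha2⟩ := elem_sum B D l' h2
    have hl' : l'.sum = B *ᵥ z' - ys := by rw [h3]; abel
    have haR : (fun j => (a j : ℝ)) - (B.det : ℝ) • ((fun j => (z' j : ℝ)) - xs) = 0 := by
      apply hBRinj
      rw [mulVec_sub, mulVec_smul, mulVec_sub, hBz, hBz, hys, ha1, hl']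
      funext j
      simp
    have hΔR : (1 : ℝ) ≤ Δ := by exact_mod_cast hΔ
    have hMΔ : (Δ : ℝ) ≤ M := by exact_mod_cast hmaxn.trans (le_max_right _ _)
    have hMD : (D : ℝ) ≤ M := by exact_mod_cast le_max_left D _
    rw [pi_norm_le_iff_of_nonneg (by linarith)]
    intro k
    have hk : (a k : ℝ) = (B.det : ℝ) * ((z' k : ℝ) - xs k) := by
      have := congrFun haR k
      simp at this
      linarith
    have hak : |(a k : ℝ)| ≤ (l'.length : ℝ) * D := by exact_mod_cast ha2 k
    have hlen : (l'.length : ℝ) ≤ Δ - 1 := by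
      have : l'.length + 1 ≤ Δ := by omega
      have : ((l'.length : ℝ)) + 1 ≤ Δ := by exact_mod_cast this
      linarith
    have habs : |(B.det : ℝ)| = Δ := by
      rw [← hB, Nat.cast_natAbs, Int.cast_abs]
    rw [hk, abs_mul, habs] at hak
    rw [Real.norm_eq_abs, abs_sub_comm]
    have h6 : (l'.length : ℝ) * D ≤ (Δ - 1) * M :=
      mul_le_mul hlen hMD (Nat.cast_nonneg _) (by linarith)
    have h7 : (Δ : ℝ) * |(z' k : ℝ) - xs k| ≤ Δ * (M - 1) := by nlinarith
    exact le_of_mul_le_mul_left h7 (by linarith)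
  -- finitely many close points
  let S : Set (Fin (N+1) → ℤ) := {z | (fun i => (z i : ℝ)) ∈ P ∧
    ‖(fun i => xs i - (z i : ℝ))‖ ≤ (M : ℝ) - 1}
  have hSfin : S.Finite := by
    refine (Set.Finite.pi' (fun i => Set.finite_Icc ⌈xs i - (M - 1)⌉ ⌊xs i + (M - 1)⌋)).subset ?_
    intro z hz i
    have h1 := (norm_le_pi_norm (fun i => xs i - (z i : ℝ)) i).trans hz.2
    rw [Real.norm_eq_abs, abs_le] at h1
    exact ⟨Int.ceil_le.mpr (by linarith [h1.2]), Int.le_floor.mpr (by linarith [h1.1])⟩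
  obtain ⟨z0, hz0⟩ := hfeas
  obtain ⟨z1, hz1, -, hz1'⟩ := hdom z0 hz0
  obtain ⟨z, hz, hzmax⟩ := Set.exists_max_image S (fun z => ∑ j, c j * (z j : ℝ)) hSfin
    ⟨z1, hz1, hz1'⟩
  refine ⟨z, hz.1, fun w hw => ?_, hz.2⟩
  obtain ⟨w', hw1, hw2, hw3⟩ := hdom w hw
  exact hw2.trans (hzmax w' ⟨hw1, hw3⟩)

/-- Theorem 3, Part 1: proximity bound `max{Δ_{n−1}(A), Δ_n(A)} − 1` for
strictly Δ-modular `A = TB` and integral right-hand sides. -/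
theorem stmt12 {m n : ℕ} (Δ : ℕ) (hΔ : 1 ≤ Δ) (hn : 2 ≤ n)
    (T : Matrix (Fin m) (Fin n) ℤ) (hT : T.IsTotallyUnimodular)
    (B : Matrix (Fin n) (Fin n) ℤ) (hB : B.det.natAbs = Δ)
    (A : Matrix (Fin m) (Fin n) ℤ) (hA : A = T * B)
    (b : Fin m → ℤ) (c : Fin n → ℚ)
    (P : Set (Fin n → ℝ))
    (hP : P = {x | ∀ i, (A.map (Int.cast : ℤ → ℝ)).mulVec x i ≤ (b i : ℝ)})
    (hfeas : ∃ z : Fin n → ℤ, (fun i => (z i : ℝ)) ∈ P)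
    (xs : Fin n → ℝ) (hxsP : xs ∈ P)
    (hvert : xs ∈ Set.extremePoints ℝ P)
    (hopt : ∀ x ∈ P, ∑ i, (c i : ℝ) * x i ≤ ∑ i, (c i : ℝ) * xs i) :
    ∃ z : Fin n → ℤ, (fun i => (z i : ℝ)) ∈ P ∧
      (∀ w : Fin n → ℤ, (fun i => (w i : ℝ)) ∈ P →
        ∑ i, (c i : ℝ) * (w i : ℝ) ≤ ∑ i, (c i : ℝ) * (z i : ℝ)) ∧
      ‖(fun i => xs i - (z i : ℝ))‖ ≤
        ((max (maxMinor A (n - 1)) (maxMinor A n) : ℕ) : ℝ) - 1 := by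
  subst hA
  obtain ⟨N, rfl⟩ : ∃ N, n = N + 1 := ⟨n - 1, by omega⟩
  exact core Δ hΔ T hT B hB b (fun i => (c i : ℝ)) P hP hfeas xs hxsP hvert hopt
end
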